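/- Let d ≥ 3 and let Ω be a bounded open convex set in ℝ^d containing the origin in its interior, whose boundary ∂Ω is C^∞ with nowhere vanishing Gaussian curvature. Let ρ be the Minkowski functional of Ω, let 𝔼_R = {k ∈ ℤ^d : R/2 ≤ |k| ≤ R}, and let ρ(𝔼_R) = {ρ(k) : k ∈ 𝔼_R}. Then there exist constants c > 0 and C₀ such that for all R ≥ C₀: card(ρ(𝔼_R)) ≥ c R² if d ≥ 4, and card(ρ(𝔼_R)) ≥ c R²/log R if d = 3. -/

import Mathlib

/-!
Only lattice points of the coordinate subspace `ℝ³ ⊂ ℝ^d` are needed, and among them only those in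
a fixed box scaled by `R` and contained in the shell. They already give `≫ R²` values of `ρ` for
every `d ≥ 3`.

*Convexity of `q = ρ²`.* By the implicit function theorem applied to `f (u • x) = 0`, the function
`u = 1/ρ` is smooth away from `0`. Along curves in `∂Ω` both `q - 1` and `f` vanish, so on tangent
vectors the Hessian of `q` is a positive multiple of that of `f`; with Euler's relations in the
radial direction, `q` has a positive definite Hessian. Hence the gradient `g` of `q` is a
nondegenerate map, and if `q (p + η) = q p`, then `g` at the midpoint is orthogonal to `η` up to a
cubic error.

*Reduction to close pairs.* Split the lattice points according to their direction into `O(R)` cells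
of angular size `R^(-1/2)`. Two points in one cell with the same value of `ρ` are at distance at
most `√R`. If there are `O(R³)` pairs `(k, h)` with `q (k + h) = q k` and `0 < |h| ≤ √R`, then
Cauchy–Schwarz for the map sending `k` to its cell and its value of `ρ` gives
`R⁶ ≪ R · card ρ(𝔼_R) · R³`.

*Counting close pairs.* Fix a dyadic size `H` of `h` and put `r = √(R / H)`. For a pair `(k, h)`
consider the points `(y, w)` with `y` near the midpoint of `k/R` and `(k + h)/R` and `w` in a thin
tube around the segment from `A y h` to `2 A y h`, where `A` is the Hessian of `q`. If two pairs
with the same `h` contain `(y, w)`, the difference `u` of their points `k` has size `O(r)` and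
satisfies `|w · u| = O(1)`. So the number of pairs containing `(y, w)` is at most the number of
`h` whose tube over `y` contains `w`, times the number of integer vectors `u` in a slab orthogonal
to `w`. Integrating over `(y, w)` and applying Cauchy–Schwarz leaves two second moments. The first
is controlled by the number of pairs `h, h'` of size `H` with `|h × h'| ≪ √H`, the second by the
volumes of intersections of two slabs. Both come from elementary lattice point counts and give
`O(R^(5/2) H)` pairs at scale `H`, which sums to `O(R³)`.
-/

open MeasureTheory Set

noncomputable section

namespace LatticeGauge

open scoped Matrix ENNReal Topology

/-! ### Orthogonal pairs of integer vectors -/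

section Box

variable {ι : Type*} [Fintype ι] [DecidableEq ι]

/-- The integer points of the cube of half-side `n` centred at the origin. -/
def box (n : ℕ) : Finset (ι → ℤ) := Fintype.piFinset fun _ => Finset.Icc (-(n : ℤ)) n

lemma mem_box {n : ℕ} {u : ι → ℤ} : u ∈ box n ↔ ∀ i, |u i| ≤ n := by
  simp [box, Fintype.mem_piFinset, abs_le]

end Box

lemma exists_mul_add_mul_eq_gcd (a : ℕ) (b c : ℤ) :
    ∃ x y : ZMod a, x * b + y * c = (Nat.gcd a (Int.gcd b c) : ZMod a) := by
  set v := Int.gcdB a (Int.gcd b c) with hv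
  refine ⟨(v * Int.gcdA b c : ℤ), (v * Int.gcdB b c : ℤ), ?_⟩
  have h := congrArg (Int.cast : ℤ → ZMod a) (Int.gcd_eq_gcd_ab a (Int.gcd b c))
  have h' := congrArg (Int.cast : ℤ → ZMod a) (Int.gcd_eq_gcd_ab b c)
  rw [Int.gcd_natCast_natCast, ← hv] at h
  push_cast at h h' ⊢
  rw [h, h', ZMod.natCast_self]
  ring

/-- The solutions form the kernel of a homomorphism to `ZMod a` whose image contains
`gcd (a, b, c)`, hence has at least `a / gcd (a, b, c)` elements. -/
lemma card_mul_add_mul_eq_zero_le (a : ℕ) [NeZero a] (b c : ℤ) :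
    (Finset.univ.filter fun p : ZMod a × ZMod a => p.1 * b + p.2 * c = 0).card
      ≤ a * Nat.gcd a (Int.gcd b c) := by
  set g : ℕ := Nat.gcd a (Int.gcd b c)
  let ψ : ZMod a × ZMod a →+ ZMod a :=
    (AddMonoidHom.mulRight (b : ZMod a)).coprod (AddMonoidHom.mulRight (c : ZMod a))
  have hker : (Finset.univ.filter fun p : ZMod a × ZMod a => p.1 * b + p.2 * c = 0).card
      = Nat.card ψ.ker := by
    rw [Nat.card_eq_fintype_card, Fintype.card_subtype]
    exact congrArg Finset.card (Finset.filter_congr fun p _ => Iff.rfl)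
  have hprod : Nat.card ψ.ker * Nat.card ψ.range = a * a := by
    rw [← AddSubgroup.index_ker, AddSubgroup.card_mul_index]
    simp
  have hgmem : (g : ZMod a) ∈ ψ.range := by
    obtain ⟨x, y, hxy⟩ := exists_mul_add_mul_eq_gcd a b c
    exact ⟨(x, y), hxy⟩
  have hrange : a / g ≤ Nat.card ψ.range := by
    have horder := addOrderOf_le_card (x := (⟨g, hgmem⟩ : ψ.range))
    rwa [AddSubgroup.addOrderOf_mk, ZMod.addOrderOf_coe g (NeZero.ne a),
      Nat.gcd_eq_right (Nat.gcd_dvd_left _ _)] at horder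
  have hga : g ∣ a := Nat.gcd_dvd_left _ _
  have hpos : 0 < a / g := Nat.div_pos (Nat.le_of_dvd (NeZero.pos a) hga)
    (Nat.gcd_pos_of_pos_left _ (NeZero.pos a))
  rw [hker]
  refine Nat.le_of_mul_le_mul_right ?_ hpos
  calc Nat.card ψ.ker * (a / g) ≤ Nat.card ψ.ker * Nat.card ψ.range := by gcongr
    _ = a * (a / g * g) := by rw [hprod, Nat.div_mul_cancel hga]
    _ = a * g * (a / g) := by ring

/-- The quotients `x / a` of the elements of one residue class are distinct elements of
`{-1, 0, 1}`. -/
lemma card_Icc_filter_intCast_eq_le {a : ℕ} (ha : 0 < a) (α : ZMod a) :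
    ((Finset.Icc (-(a : ℤ)) a).filter fun x : ℤ => (x : ZMod a) = α).card ≤ 3 := by
  have haz : (0 : ℤ) < a := by exact_mod_cast ha
  refine Finset.card_le_card_of_injOn (t := Finset.Icc (-1 : ℤ) 1) (fun x => x / (a : ℤ)) ?_ ?_
  · intro x hx
    simp only [Finset.coe_filter, Finset.mem_Icc, Set.mem_ofPred_eq] at hx
    simp only [Finset.coe_Icc, Set.mem_Icc]
    exact ⟨(Int.le_ediv_iff_mul_le haz).2 (by linarith), Int.ediv_le_of_le_mul haz (by linarith)⟩
  · intro x hx y hy hxy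
    simp only [Finset.coe_filter, Set.mem_ofPred_eq] at hx hy
    have hmod : x % (a : ℤ) = y % a := (ZMod.intCast_eq_intCast_iff x y a).1 (hx.2.trans hy.2.symm)
    rw [← Int.emod_add_mul_ediv x a, ← Int.emod_add_mul_ediv y a, hmod]
    exact congrArg (fun t => y % (a : ℤ) + a * t) hxy

/-- The pairs `(x, y)` with `|x|, |y| ≤ a` and `x b + y c ≡ 0` modulo `a`. -/
def congruenceSolutions (a : ℕ) (b c : ℤ) : Finset (ℤ × ℤ) :=
  (Finset.Icc (-(a : ℤ)) a ×ˢ Finset.Icc (-(a : ℤ)) a).filter fun p => (a : ℤ) ∣ p.1 * b + p.2 * c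

lemma card_congruenceSolutions_le {a : ℕ} (ha : 0 < a) (b c : ℤ) :
    (congruenceSolutions a b c).card ≤ 9 * (a * Nat.gcd a (Int.gcd b c)) := by
  have : NeZero a := ⟨ha.ne'⟩
  refine (Finset.card_le_mul_card_image_of_maps_to
    (f := fun p : ℤ × ℤ => ((p.1 : ZMod a), (p.2 : ZMod a)))
    (t := Finset.univ.filter fun p : ZMod a × ZMod a => p.1 * b + p.2 * c = 0) ?_ 9 ?_).trans
    (Nat.mul_le_mul_left 9 (card_mul_add_mul_eq_zero_le a b c))
  · rintro ⟨x, y⟩ h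
    have hdvd := (ZMod.intCast_zmod_eq_zero_iff_dvd (x * b + y * c) a).2 (Finset.mem_filter.1 h).2
    push_cast at hdvd
    simpa using hdvd
  · rintro ⟨α, β⟩ -
    calc _ ≤ (((Finset.Icc (-(a : ℤ)) a).filter fun x : ℤ => (x : ZMod a) = α) ×ˢ
          ((Finset.Icc (-(a : ℤ)) a).filter fun y : ℤ => (y : ZMod a) = β)).card := by
          refine Finset.card_le_card fun p hp => ?_
          simp only [congruenceSolutions, Finset.mem_filter, Finset.mem_product,
            Prod.mk.injEq] at hp ⊢
          exact ⟨⟨hp.1.1.1, hp.2.1⟩, hp.1.1.2, hp.2.2⟩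
      _ ≤ 3 * 3 := by
          rw [Finset.card_product]
          exact Nat.mul_le_mul (card_Icc_filter_intCast_eq_le ha α)
            (card_Icc_filter_intCast_eq_le ha β)

lemma card_Icc_filter_dvd_le {H g : ℕ} (hg : 0 < g) (hgH : g ≤ H) :
    (((Finset.Icc (-(H : ℤ)) H).filter fun b => (g : ℤ) ∣ b).card : ℝ) ≤ 3 * H / g := by
  have hgz : (0 : ℤ) < g := by exact_mod_cast hg
  have hgr : (0 : ℝ) < g := by exact_mod_cast hg
  have hsub : ((Finset.Icc (-(H : ℤ)) H).filter fun b => (g : ℤ) ∣ b) ⊆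
      (Finset.Icc (-((H / g : ℕ) : ℤ)) (H / g : ℕ)).image fun k => (g : ℤ) * k := by
    intro b hb
    obtain ⟨hb, k, rfl⟩ := Finset.mem_filter.1 hb
    rw [Finset.mem_Icc] at hb
    refine Finset.mem_image_of_mem _ (Finset.mem_Icc.2 ?_)
    rw [← abs_le, Int.natCast_div, Int.le_ediv_iff_mul_le hgz, ← abs_of_pos hgz, ← abs_mul,
      mul_comm]
    exact abs_le.2 hb
  have hcard : ((Finset.Icc (-(H : ℤ)) H).filter fun b => (g : ℤ) ∣ b).card ≤ 2 * (H / g) + 1 := by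
    refine (Finset.card_le_card hsub).trans (Finset.card_image_le.trans ?_)
    rw [Int.card_Icc]
    omega
  have hone : (1 : ℝ) ≤ H / g := by
    rw [le_div_iff₀ hgr, one_mul]
    exact_mod_cast hgH
  calc (((Finset.Icc (-(H : ℤ)) H).filter fun b => (g : ℤ) ∣ b).card : ℝ)
      ≤ 2 * ((H / g : ℕ) : ℝ) + 1 := by exact_mod_cast hcard
    _ ≤ 2 * (H / g : ℝ) + H / g := by gcongr; exact Nat.cast_div_le
    _ = 3 * H / g := by ring

lemma gcd_le_sum_divisors {a : ℕ} (ha : 0 < a) (b c : ℤ) :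
    (Nat.gcd a (Int.gcd b c) : ℝ)
      ≤ ∑ g ∈ a.divisors, if (g : ℤ) ∣ b ∧ (g : ℤ) ∣ c then (g : ℝ) else 0 := by
  have hmem : Nat.gcd a (Int.gcd b c) ∈ a.divisors :=
    Nat.mem_divisors.2 ⟨Nat.gcd_dvd_left _ _, ha.ne'⟩
  have hdvd : (Nat.gcd a (Int.gcd b c) : ℤ) ∣ (Int.gcd b c : ℤ) :=
    Int.natCast_dvd_natCast.2 (Nat.gcd_dvd_right _ _)
  have hle := Finset.single_le_sum
    (f := fun g : ℕ => if (g : ℤ) ∣ b ∧ (g : ℤ) ∣ c then (g : ℝ) else 0)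
    (fun g _ => by split_ifs <;> positivity) hmem
  rwa [if_pos ⟨hdvd.trans (Int.gcd_dvd_left ..), hdvd.trans (Int.gcd_dvd_right ..)⟩] at hle

lemma sum_mul_gcd_le {a H : ℕ} (ha : 0 < a) (haH : a ≤ H) :
    ∑ p ∈ Finset.Icc (-(H : ℤ)) H ×ˢ Finset.Icc (-(H : ℤ)) H,
      (a : ℝ) * (Nat.gcd a (Int.gcd p.1 p.2) : ℝ) ≤ 9 * H ^ 2 * ∑ m ∈ a.divisors, (m : ℝ) := by
  set I := Finset.Icc (-(H : ℤ)) H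
  calc ∑ p ∈ I ×ˢ I, (a : ℝ) * (Nat.gcd a (Int.gcd p.1 p.2) : ℝ)
      ≤ ∑ p ∈ I ×ˢ I, (a : ℝ) *
          ∑ g ∈ a.divisors, if (g : ℤ) ∣ p.1 ∧ (g : ℤ) ∣ p.2 then (g : ℝ) else 0 := by
        gcongr with p
        exact gcd_le_sum_divisors ha _ _
    _ = ∑ g ∈ a.divisors, (a : ℝ) * (((I.filter fun b => (g : ℤ) ∣ b).card : ℝ) ^ 2 * g) := by
        rw [← Finset.mul_sum, Finset.sum_comm, Finset.mul_sum]
        refine Finset.sum_congr rfl fun g _ => ?_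
        rw [← Finset.sum_filter, Finset.sum_const, Finset.filter_product, Finset.card_product,
          nsmul_eq_mul, Nat.cast_mul, sq]
    _ ≤ ∑ g ∈ a.divisors, 9 * (H : ℝ) ^ 2 * ((a / g : ℕ) : ℝ) := by
        refine Finset.sum_le_sum fun g hg => ?_
        have hga := Nat.dvd_of_mem_divisors hg
        have hg0 : 0 < g := Nat.pos_of_dvd_of_pos hga ha
        have hgr : (0 : ℝ) < g := by exact_mod_cast hg0
        calc _ ≤ (a : ℝ) * ((3 * H / g) ^ 2 * g) := by
              gcongr
              exact card_Icc_filter_dvd_le hg0 ((Nat.le_of_dvd ha hga).trans haH)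
          _ = 9 * (H : ℝ) ^ 2 * ((a / g : ℕ) : ℝ) := by
              rw [Nat.cast_div hga hgr.ne']
              field_simp
              ring
    _ = 9 * H ^ 2 * ∑ m ∈ a.divisors, (m : ℝ) := by
        rw [← Finset.mul_sum, Nat.sum_div_divisors a fun m => (m : ℝ)]

lemma sum_divisors_sum_le_sq (E : ℕ) :
    ∑ a ∈ Finset.Ioc 0 E, ∑ m ∈ a.divisors, (m : ℝ) ≤ (E : ℝ) ^ 2 := by
  have hdivisors : ∀ a ∈ Finset.Ioc 0 E,
      a.divisors = (Finset.Ioc 0 E).filter fun m => m ∣ a := by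
    intro a ha
    rw [Finset.mem_Ioc] at ha
    ext m
    rw [Nat.mem_divisors, Finset.mem_filter, Finset.mem_Ioc]
    exact ⟨fun h => ⟨⟨Nat.pos_of_dvd_of_pos h.1 ha.1, (Nat.le_of_dvd ha.1 h.1).trans ha.2⟩, h.1⟩,
      fun h => ⟨h.2, ha.1.ne'⟩⟩
  calc ∑ a ∈ Finset.Ioc 0 E, ∑ m ∈ a.divisors, (m : ℝ)
      = ∑ m ∈ Finset.Ioc 0 E, ((E / m : ℕ) : ℝ) * m := by
        rw [Finset.sum_congr rfl fun a ha => by rw [hdivisors a ha, Finset.sum_filter],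
          Finset.sum_comm]
        refine Finset.sum_congr rfl fun m _ => ?_
        rw [← Finset.sum_filter, Finset.sum_const, Nat.Ioc_filter_dvd_card_eq_div, nsmul_eq_mul]
    _ ≤ ∑ _m ∈ Finset.Ioc 0 E, (E : ℝ) := by
        exact Finset.sum_le_sum fun m _ => by exact_mod_cast Nat.div_mul_le_self E m
    _ = (E : ℝ) ^ 2 := by
        rw [Finset.sum_const, Nat.card_Ioc, nsmul_eq_mul, Nat.sub_zero, sq]

lemma sum_card_congruenceSolutions_le {E H : ℕ} (hEH : E ≤ H) :
    ∑ a ∈ Finset.Ioc 0 E, ∑ q ∈ Finset.Icc (-(H : ℤ)) H ×ˢ Finset.Icc (-(H : ℤ)) H,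
      ((congruenceSolutions a q.1 q.2).card : ℝ) ≤ 81 * E ^ 2 * H ^ 2 := by
  set I := Finset.Icc (-(H : ℤ)) H
  calc ∑ a ∈ Finset.Ioc 0 E, ∑ q ∈ I ×ˢ I, ((congruenceSolutions a q.1 q.2).card : ℝ)
      ≤ ∑ a ∈ Finset.Ioc 0 E, 9 * (9 * (H : ℝ) ^ 2 * ∑ m ∈ a.divisors, (m : ℝ)) := by
        refine Finset.sum_le_sum fun a ha => ?_
        rw [Finset.mem_Ioc] at ha
        refine le_trans ?_ (mul_le_mul_of_nonneg_left
          (sum_mul_gcd_le ha.1 (ha.2.trans hEH)) (by norm_num))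
        rw [Finset.mul_sum]
        gcongr with q
        exact_mod_cast card_congruenceSolutions_le ha.1 q.1 q.2
    _ = 81 * H ^ 2 * ∑ a ∈ Finset.Ioc 0 E, ∑ m ∈ a.divisors, (m : ℝ) := by
        rw [← Finset.mul_sum, ← Finset.mul_sum]
        ring
    _ ≤ 81 * H ^ 2 * E ^ 2 := by
        gcongr
        exact sum_divisors_sum_le_sq E
    _ = 81 * E ^ 2 * H ^ 2 := by ring

lemma fin_three_funext {α : Type*} {f g : Fin 3 → α} (i : Fin 3) (h₀ : f i = g i)
    (h₁ : f (i + 1) = g (i + 1)) (h₂ : f (i + 2) = g (i + 2)) : f = g := by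
  ext j
  fin_cases i <;> fin_cases j <;> assumption

lemma dotProduct_eq_cyclic {α : Type*} [CommSemiring α] (u w : Fin 3 → α) (i : Fin 3) :
    u ⬝ᵥ w = u i * w i + u (i + 1) * w (i + 1) + u (i + 2) * w (i + 2) := by
  rw [dotProduct, Fin.sum_univ_three]
  fin_cases i
  · rfl
  · change _ = u 1 * w 1 + u 2 * w 2 + u 0 * w 0
    ring
  · change _ = u 2 * w 2 + u 0 * w 0 + u 1 * w 1
    ring

/-- Orthogonality to a vector whose largest coordinate is `± a` is a congruence modulo `a` for the
other two coordinates, and it determines the remaining coordinate of the second vector. -/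
lemma card_orthogonal_dominant_le {E H : ℕ} (hEH : E ≤ H) (i : Fin 3) :
    (((box E ×ˢ box H).filter fun p : (Fin 3 → ℤ) × (Fin 3 → ℤ) =>
      (p.1 i ≠ 0 ∧ ∀ j, |p.1 j| ≤ |p.1 i|) ∧ p.1 ⬝ᵥ p.2 = 0).card : ℝ)
      ≤ 162 * E ^ 2 * H ^ 2 := by
  let T : Finset (Bool × (Σ _ : ℕ, Σ _ : ℤ × ℤ, ℤ × ℤ)) := Finset.univ ×ˢ
    (Finset.Ioc 0 E).sigma fun a =>
      (Finset.Icc (-(H : ℤ)) H ×ˢ Finset.Icc (-(H : ℤ)) H).sigma fun q =>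
        congruenceSolutions a q.1 q.2
  have hT : (T.card : ℝ) ≤ 2 * (81 * E ^ 2 * H ^ 2) := by
    simp only [T, Finset.card_product, Finset.card_sigma, Finset.card_univ, Fintype.card_bool]
    push_cast
    gcongr
    exact sum_card_congruenceSolutions_le hEH
  refine le_trans ?_ (hT.trans_eq (by ring))
  refine Nat.cast_le.2 (Finset.card_le_card_of_injOn (fun p => (decide (0 < p.1 i),
    ⟨(p.1 i).natAbs, (p.2 (i + 1), p.2 (i + 2)), p.1 (i + 1), p.1 (i + 2)⟩)) ?_ ?_)
  · rintro ⟨u, w⟩ hp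
    simp only [Finset.coe_filter, Finset.mem_product, mem_box, Set.mem_ofPred_eq] at hp
    obtain ⟨⟨hu, hw⟩, ⟨hi, hmax⟩, horth⟩ := hp
    rw [dotProduct_eq_cyclic u w i] at horth
    simp only [T, congruenceSolutions, Finset.coe_product, Set.mem_prod, Finset.mem_coe,
      Finset.mem_sigma, Finset.mem_Ioc, Finset.mem_Icc, Finset.mem_product, Finset.mem_filter,
      Finset.mem_univ, true_and, Int.natCast_natAbs, abs_dvd]
    exact ⟨⟨Int.natAbs_pos.2 hi, by have := abs_le.1 (hu i); omega⟩,
      ⟨abs_le.1 (hw _), abs_le.1 (hw _)⟩, ⟨abs_le.1 (hmax _), abs_le.1 (hmax _)⟩, -w i, by linarith⟩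
  · rintro ⟨u, w⟩ hp ⟨u', w'⟩ hp' heq
    simp only [Finset.coe_filter, Set.mem_ofPred_eq] at hp hp'
    obtain ⟨-, ⟨hi, -⟩, horth⟩ := hp
    obtain ⟨-, -, horth'⟩ := hp'
    simp only [Prod.mk.injEq, Sigma.mk.injEq, heq_eq_eq, decide_eq_decide] at heq
    obtain ⟨hsign, habs, ⟨hw₁, hw₂⟩, hu₁, hu₂⟩ := heq
    obtain rfl := fin_three_funext i (by omega : u i = u' i) hu₁ hu₂
    rw [dotProduct_eq_cyclic _ _ i] at horth horth'
    rw [hw₁, hw₂] at horth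
    rw [fin_three_funext i (mul_left_cancel₀ hi (by linarith)) hw₁ hw₂]

/-- Orthogonal pairs of integer vectors in boxes of sizes `E` and `H`, the first one nonzero. -/
def orthogonalPairs (E H : ℕ) : Finset ((Fin 3 → ℤ) × (Fin 3 → ℤ)) :=
  (box E ×ˢ box H).filter fun p => p.1 ≠ 0 ∧ p.1 ⬝ᵥ p.2 = 0

lemma card_orthogonalPairs_le {E H : ℕ} (hEH : E ≤ H) :
    ((orthogonalPairs E H).card : ℝ) ≤ 486 * E ^ 2 * H ^ 2 := by
  let D : Fin 3 → Finset ((Fin 3 → ℤ) × (Fin 3 → ℤ)) := fun i =>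
    (box E ×ˢ box H).filter fun p => (p.1 i ≠ 0 ∧ ∀ j, |p.1 j| ≤ |p.1 i|) ∧ p.1 ⬝ᵥ p.2 = 0
  have hcover : orthogonalPairs E H ⊆ Finset.univ.biUnion D := by
    intro p hp
    obtain ⟨hbox, hne, horth⟩ := Finset.mem_filter.1 hp
    obtain ⟨i, hmax⟩ := Finite.exists_max fun j => |p.1 j|
    refine Finset.mem_biUnion.2 ⟨i, Finset.mem_univ i, Finset.mem_filter.2
      ⟨hbox, ⟨fun hi => hne (funext fun j => ?_), hmax⟩, horth⟩⟩
    simpa [hi] using hmax j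
  calc _ ≤ ((∑ i, (D i).card : ℕ) : ℝ) :=
        Nat.cast_le.2 ((Finset.card_le_card hcover).trans Finset.card_biUnion_le)
    _ ≤ ∑ i : Fin 3, 162 * (E : ℝ) ^ 2 * H ^ 2 := by
        push_cast
        exact Finset.sum_le_sum fun i _ => card_orthogonal_dominant_le hEH i
    _ = 486 * E ^ 2 * H ^ 2 := by
        rw [Fin.sum_const, nsmul_eq_mul]
        push_cast
        ring

/-! ### Sums over primitive and parallel integer vectors -/

section IntegerNorm

variable {ι : Type*} [Fintype ι]

lemma mem_box_iff_norm_le [DecidableEq ι] {n : ℕ} {u : ι → ℤ} : u ∈ box n ↔ ‖u‖ ≤ n := by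
  rw [mem_box, pi_norm_le_iff_of_nonneg n.cast_nonneg]
  refine forall_congr' fun i => ?_
  rw [Int.norm_eq_abs]
  exact_mod_cast Iff.rfl

lemma card_box [DecidableEq ι] (n : ℕ) :
    (box n : Finset (ι → ℤ)).card = (2 * n + 1) ^ Fintype.card ι := by
  rw [box, Fintype.card_piFinset, Finset.prod_const, Finset.card_univ, Int.card_Icc]
  congr 1
  omega

lemma exists_norm_eq_norm_apply {α : Type*} [SeminormedAddCommGroup α] [Nonempty ι] (u : ι → α) :
    ∃ i, ‖u‖ = ‖u i‖ := by
  obtain ⟨i, -, hi⟩ := Finset.exists_max_image Finset.univ (fun j => ‖u j‖) Finset.univ_nonempty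
  exact ⟨i, le_antisymm
    ((pi_norm_le_iff_of_nonneg (norm_nonneg _)).2 fun j => hi j (Finset.mem_univ j))
    (norm_le_pi_norm u i)⟩

lemma one_le_norm {u : ι → ℤ} (hu : u ≠ 0) : 1 ≤ ‖u‖ := by
  obtain ⟨i, hi⟩ := Function.ne_iff.1 hu
  refine le_trans ?_ (norm_le_pi_norm u i)
  rw [Int.norm_eq_abs]
  exact_mod_cast Int.one_le_abs hi

lemma mem_box_div_of_mul_norm_le [DecidableEq ι] {g N : ℕ} {w : ι → ℤ} (hg : 0 < g)
    (h : (g : ℝ) * ‖w‖ ≤ N) : w ∈ box (N / g) := by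
  refine mem_box.2 fun i => ?_
  push_cast
  rw [Int.le_ediv_iff_mul_le (Nat.cast_pos.2 hg), mul_comm]
  have hi := mul_le_mul_of_nonneg_left (norm_le_pi_norm w i) (Nat.cast_nonneg (α := ℝ) g)
  rw [Int.norm_eq_abs] at hi
  exact_mod_cast hi.trans h

end IntegerNorm

lemma add_one_le_norm_of_notMem_box {n : ℕ} {u : Fin 3 → ℤ} (hu : u ∉ box n) :
    (n : ℝ) + 1 ≤ ‖u‖ := by
  obtain ⟨i, hi⟩ := exists_norm_eq_norm_apply u
  rw [mem_box_iff_norm_le, not_le, hi, Int.norm_eq_abs] at hu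
  rw [hi, Int.norm_eq_abs]
  have h : (n : ℤ) < |u i| := by exact_mod_cast hu
  exact_mod_cast h

lemma box_subset_box_succ (n : ℕ) : (box n : Finset (Fin 3 → ℤ)) ⊆ box (n + 1) := fun u hu => by
  rw [mem_box] at *
  exact fun i => (hu i).trans (by simp)

lemma card_box_succ_sdiff_box_le (n : ℕ) :
    ((box (n + 1) \ box n : Finset (Fin 3 → ℤ)).card : ℝ) ≤ 26 * ((n : ℝ) + 1) ^ 2 := by
  have hsub := box_subset_box_succ n
  rw [Finset.card_sdiff_of_subset hsub, Nat.cast_sub (Finset.card_le_card hsub), card_box,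
    card_box, Fintype.card_fin]
  push_cast
  nlinarith [(Nat.cast_nonneg n : (0 : ℝ) ≤ n)]

/-- The zero vector contributes `0⁻¹ = 0`. -/
lemma sum_inv_norm_le (n : ℕ) : ∑ u ∈ (box n : Finset (Fin 3 → ℤ)), ‖u‖⁻¹ ≤ 26 * (n : ℝ) ^ 2 := by
  induction n with
  | zero =>
    refine (Finset.sum_nonpos fun u hu => ?_).trans (by positivity)
    have h : ‖u‖ ≤ 0 := by simpa only [Nat.cast_zero] using mem_box_iff_norm_le.1 hu
    exact inv_nonpos.2 h
  | succ n ih =>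
    have hshell : ∑ u ∈ (box (n + 1) \ box n : Finset (Fin 3 → ℤ)), ‖u‖⁻¹ ≤ 26 * ((n : ℝ) + 1) :=
      calc _ ≤ ∑ _u ∈ (box (n + 1) \ box n : Finset (Fin 3 → ℤ)), ((n : ℝ) + 1)⁻¹ :=
            Finset.sum_le_sum fun u hu => inv_anti₀ (by positivity)
              (add_one_le_norm_of_notMem_box (Finset.mem_sdiff.1 hu).2)
        _ ≤ 26 * ((n : ℝ) + 1) ^ 2 * ((n : ℝ) + 1)⁻¹ := by
            rw [Finset.sum_const, nsmul_eq_mul]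
            gcongr
            exact card_box_succ_sdiff_box_le n
        _ = _ := by field_simp
    rw [← Finset.sum_sdiff (box_subset_box_succ n)]
    push_cast
    nlinarith [(Nat.cast_nonneg n : (0 : ℝ) ≤ n)]

/-- A vector of integers is primitive when its entries generate the unit ideal, which is recorded
here by a Bezout certificate. -/
def IsPrimitive {ι : Type*} [Fintype ι] (p : ι → ℤ) : Prop := ∃ c : ι → ℤ, c ⬝ᵥ p = 1

lemma IsPrimitive.ne_zero {ι : Type*} [Fintype ι] {p : ι → ℤ} (hp : IsPrimitive p) : p ≠ 0 := by
  rintro rfl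
  obtain ⟨c, hc⟩ := hp
  simp at hc

lemma exists_isPrimitive_smul {ι : Type*} [Fintype ι] {h : ι → ℤ} (hh : h ≠ 0) :
    ∃ (γ : ℕ) (p : ι → ℤ), 0 < γ ∧ IsPrimitive p ∧ h = (γ : ℤ) • p := by
  obtain ⟨g, hg⟩ := (IsPrincipalIdealRing.principal (Ideal.span (range h))).principal
  have hspan : Ideal.span (range h) = Ideal.span {(g.natAbs : ℤ)} := by
    rw [Int.span_natAbs]
    exact hg
  have hdvd : ∀ i, (g.natAbs : ℤ) ∣ h i := fun i => by
    rw [← Ideal.mem_span_singleton, ← hspan]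
    exact Ideal.subset_span (mem_range_self i)
  choose p hp using hdvd
  have hγ : g.natAbs ≠ 0 := fun h0 => hh (funext fun i => by simp [hp i, h0])
  have hmem : (g.natAbs : ℤ) ∈ Ideal.span (range h) := by
    rw [hspan]
    exact Ideal.mem_span_singleton_self _
  obtain ⟨c, hc⟩ := Ideal.mem_span_range_iff_exists_fun.1 hmem
  refine ⟨g.natAbs, p, Nat.pos_of_ne_zero hγ, ⟨c, ?_⟩, funext hp⟩
  refine mul_left_cancel₀ (Nat.cast_ne_zero.2 hγ : (g.natAbs : ℤ) ≠ 0) ?_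
  rw [mul_one, dotProduct, Finset.mul_sum]
  refine Eq.trans (Finset.sum_congr rfl fun i _ => ?_) hc
  rw [hp i]
  ring

lemma IsPrimitive.exists_eq_smul {p v : Fin 3 → ℤ} (hp : IsPrimitive p) (hv : p ⨯₃ v = 0) :
    ∃ k : ℤ, v = k • p := by
  obtain ⟨c, hc⟩ := hp
  refine ⟨c ⬝ᵥ v, ?_⟩
  have h0 := congrFun hv 0
  have h1 := congrFun hv 1
  have h2 := congrFun hv 2
  simp only [cross_apply, Matrix.cons_val_zero, Matrix.cons_val_one, Matrix.cons_val,
    Pi.zero_apply] at h0 h1 h2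
  rw [Matrix.vec3_dotProduct] at *
  refine fin_three_funext 0 ?_ ?_ ?_
  all_goals simp only [Pi.smul_apply, smul_eq_mul, Fin.isValue, zero_add]
  · linear_combination (-v 0) * hc - c 1 * h2 + c 2 * h1
  · linear_combination (-v 1) * hc + c 0 * h2 - c 2 * h0
  · linear_combination (-v 2) * hc - c 0 * h1 + c 1 * h0

lemma IsPrimitive.card_multiples_le {p : Fin 3 → ℤ} (hp : IsPrimitive p) {s : Finset (Fin 3 → ℤ)}
    {N : ℕ} (hs : ∀ v ∈ s, p ⨯₃ v = 0 ∧ ‖v‖ ≤ N * ‖p‖) : s.card ≤ 2 * N + 1 := by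
  have hsub : s ⊆ (Finset.Icc (-(N : ℤ)) N).image (· • p) := fun v hv => by
    obtain ⟨k, rfl⟩ := hp.exists_eq_smul (hs v hv).1
    refine Finset.mem_image_of_mem _ (Finset.mem_Icc.2 (abs_le.1 ?_))
    have h := (hs _ hv).2
    rw [norm_smul, Int.norm_eq_abs] at h
    exact_mod_cast le_of_mul_le_mul_right h (norm_pos_iff.2 hp.ne_zero)
  refine (Finset.card_le_card hsub).trans (Finset.card_image_le.trans ?_)
  rw [Int.card_Icc]
  omega

lemma IsPrimitive.card_cross_eq_le {p n : Fin 3 → ℤ} (hp : IsPrimitive p)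
    {s : Finset (Fin 3 → ℤ)} {N : ℕ} (hs : ∀ v ∈ s, p ⨯₃ v = n ∧ ‖v‖ ≤ N * ‖p‖) :
    s.card ≤ 4 * N + 1 := by
  obtain rfl | ⟨v₀, hv₀⟩ := s.eq_empty_or_nonempty
  · simp
  have h := hp.card_multiples_le (s := s.image (· - v₀)) (N := 2 * N) fun w hw => by
    obtain ⟨v, hv, rfl⟩ := Finset.mem_image.1 hw
    refine ⟨by rw [map_sub, (hs v hv).1, (hs v₀ hv₀).1, sub_self], ?_⟩
    have h₁ := (hs v hv).2
    have h₂ := (hs v₀ hv₀).2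
    push_cast
    linarith [norm_sub_le v v₀]
  rw [Finset.card_image_of_injective s sub_left_injective] at h
  omega

lemma sum_inv_sq_le_two (n : ℕ) : ∑ m ∈ Finset.Icc 1 n, ((m : ℝ) ^ 2)⁻¹ ≤ 2 := by
  have h : Finset.Icc 1 n = Finset.Ioo 0 (n + 1) := by
    ext m
    simp only [Finset.mem_Icc, Finset.mem_Ioo]
    omega
  rw [h]
  simpa only [Nat.cast_zero, zero_add, div_one] using sum_Ioo_inv_sq_le (α := ℝ) 0 (n + 1)

lemma sum_inv_sqrt_le (n : ℕ) : ∑ m ∈ Finset.range (n + 1), (√(m : ℝ))⁻¹ ≤ 2 * √(n : ℝ) := by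
  induction n with
  | zero => simp
  | succ n ih =>
    rw [Finset.sum_range_succ]
    push_cast
    have hpos : 0 < √((n : ℝ) + 1) := Real.sqrt_pos.2 (by positivity)
    have hn := Real.sq_sqrt (by positivity : (0 : ℝ) ≤ n)
    have hn' := Real.sq_sqrt (by positivity : (0 : ℝ) ≤ (n : ℝ) + 1)
    have : (√((n : ℝ) + 1))⁻¹ ≤ 2 * √((n : ℝ) + 1) - 2 * √(n : ℝ) := by
      rw [inv_le_iff_one_le_mul₀ hpos]
      nlinarith [sq_nonneg (√((n : ℝ) + 1) - √(n : ℝ))]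
    linarith

lemma sum_inv_sqrt_abs_sub_le (ρ : ℕ) {x₀ : ℤ} (hx₀ : x₀ ∈ Finset.Icc (-(ρ : ℤ)) ρ) :
    ∑ x ∈ Finset.Icc (-(ρ : ℤ)) ρ, (√|(x : ℝ) - x₀|)⁻¹ ≤ 4 * √(2 * ρ) := by
  have hnat : ∀ x : ℤ, |(x : ℝ) - x₀| = ((x - x₀).natAbs : ℕ) := fun x => by
    rw [Nat.cast_natAbs]
    push_cast
    rfl
  have hfiber : ∀ n : ℕ,
      ((Finset.Icc (-(ρ : ℤ)) ρ).filter fun x => (x - x₀).natAbs = n).card ≤ 2 := fun n =>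
    (Finset.card_le_card (t := {x₀ + n, x₀ - n}) fun x hx => by
      simp only [Finset.mem_filter, Finset.mem_insert, Finset.mem_singleton] at *
      omega).trans Finset.card_le_two
  have himage : (Finset.Icc (-(ρ : ℤ)) ρ).image (fun x => (x - x₀).natAbs)
      ⊆ Finset.range (2 * ρ + 1) := fun n hn => by
    simp only [Finset.mem_image, Finset.mem_Icc, Finset.mem_range] at *
    omega
  calc _ = ∑ n ∈ (Finset.Icc (-(ρ : ℤ)) ρ).image (fun x => (x - x₀).natAbs),
        ((Finset.Icc (-(ρ : ℤ)) ρ).filter fun x => (x - x₀).natAbs = n).card • (√(n : ℝ))⁻¹ := by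
        simp only [hnat]
        exact Finset.sum_comp (fun n : ℕ => (√(n : ℝ))⁻¹) fun x => (x - x₀).natAbs
    _ ≤ ∑ n ∈ Finset.range (2 * ρ + 1), 2 * (√(n : ℝ))⁻¹ := by
        refine (Finset.sum_le_sum fun n _ => ?_).trans
          (Finset.sum_le_sum_of_subset_of_nonneg himage fun _ _ _ => by positivity)
        rw [nsmul_eq_mul]
        gcongr
        exact_mod_cast hfiber n
    _ ≤ 2 * (2 * √((2 * ρ : ℕ) : ℝ)) := by
        rw [← Finset.mul_sum]
        gcongr
        exact sum_inv_sqrt_le _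
    _ = _ := by
        push_cast
        ring

lemma inv_sqrt_max_one_le {m c x x₀ : ℝ} (hm : m ≠ 0) (hx : x ≠ x₀)
    (hmin : |m * x₀ - c| ≤ |m * x - c|) :
    (√(max 1 |m * x - c|))⁻¹ ≤ √(2 / |m|) * (√|x - x₀|)⁻¹ := by
  have : x - x₀ ≠ 0 := sub_ne_zero.2 hx
  have h : |m| * |x - x₀| ≤ 2 * |m * x - c| :=
    calc |m| * |x - x₀| = |(m * x - c) - (m * x₀ - c)| := by rw [← abs_mul]; ring_nf
      _ ≤ |m * x - c| + |m * x₀ - c| := abs_sub _ _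
      _ ≤ _ := by linarith
  calc _ ≤ (√(|m| / 2 * |x - x₀|))⁻¹ :=
        inv_anti₀ (by positivity)
          (Real.sqrt_le_sqrt (le_trans (by linarith) (le_max_right _ _)))
    _ = _ := by rw [Real.sqrt_mul (by positivity), mul_inv, ← Real.sqrt_inv, inv_div]

/-- The sum is compared with the one centred at the term closest to `0`. -/
lemma sum_inv_sqrt_progression_le (ρ : ℕ) {m : ℝ} (hm : m ≠ 0) (hmρ : |m| ≤ ρ) (c : ℝ) :
    ∑ x ∈ Finset.Icc (-(ρ : ℤ)) ρ, (√(max 1 |m * x - c|))⁻¹ ≤ 9 * √(ρ / |m|) := by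
  obtain ⟨x₀, hx₀, hmin⟩ := Finset.exists_min_image (Finset.Icc (-(ρ : ℤ)) ρ)
    (fun x => |m * x - c|) ⟨0, by simp⟩
  have hm' : 0 < |m| := abs_pos.2 hm
  have hterm : ∀ x ∈ Finset.Icc (-(ρ : ℤ)) ρ, (√(max 1 |m * x - c|))⁻¹
      ≤ (if x = x₀ then 1 else 0) + √(2 / |m|) * (√|(x : ℝ) - x₀|)⁻¹ := fun x hx => by
    split_ifs with h
    · exact le_add_of_le_of_nonneg (inv_le_one_of_one_le₀ (Real.one_le_sqrt.2 (le_max_left _ _)))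
        (by positivity)
    · rw [zero_add]
      exact inv_sqrt_max_one_le hm (Int.cast_injective.ne h) (hmin x hx)
  have hone : 1 ≤ √(ρ / |m|) := Real.one_le_sqrt.2 ((one_le_div hm').2 hmρ)
  calc _ ≤ ∑ x ∈ Finset.Icc (-(ρ : ℤ)) ρ,
        ((if x = x₀ then 1 else 0) + √(2 / |m|) * (√|(x : ℝ) - x₀|)⁻¹) := Finset.sum_le_sum hterm
    _ ≤ 1 + √(2 / |m|) * (4 * √(2 * ρ)) := by
        rw [Finset.sum_add_distrib, Finset.sum_ite_eq', if_pos hx₀, ← Finset.mul_sum]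
        gcongr
        exact sum_inv_sqrt_abs_sub_le ρ hx₀
    _ = 1 + 8 * √(ρ / |m|) := by
        rw [mul_left_comm, ← Real.sqrt_mul (by positivity),
          show 2 / |m| * (2 * ρ) = 2 ^ 2 * (ρ / |m|) by ring, Real.sqrt_mul (by positivity),
          Real.sqrt_sq (by positivity)]
        ring
    _ ≤ _ := by linarith

/-- The map `u ↦ (γ u, p u)` is injective, and `p u` has norm at most `ρ / γ u`. -/
lemma sum_inv_norm_primitive_part_le (ρ : ℕ) {γ : (Fin 3 → ℤ) → ℕ} {p : (Fin 3 → ℤ) → Fin 3 → ℤ}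
    (hγ : ∀ u ≠ 0, 0 < γ u) (hp : ∀ u ≠ 0, u = (γ u : ℤ) • p u) :
    ∑ u ∈ (box ρ).filter (· ≠ 0), ‖p u‖⁻¹ ≤ 52 * (ρ : ℝ) ^ 2 := by
  have hp0 : ∀ u ≠ 0, p u ≠ 0 := fun u hu h => hu (by rw [hp u hu, h, smul_zero])
  have hnorm : ∀ u ≠ 0, ‖u‖ = γ u * ‖p u‖ := fun u hu => by
    conv_lhs => rw [hp u hu, norm_smul, Int.norm_natCast]
  have hinj : Set.InjOn (fun u => (⟨γ u, p u⟩ : (_ : ℕ) × (Fin 3 → ℤ)))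
      ((box ρ).filter (· ≠ 0) : Finset (Fin 3 → ℤ)) := fun u hu v hv h => by
    rw [Finset.mem_coe, Finset.mem_filter] at hu hv
    obtain ⟨h1, h2⟩ := Sigma.mk.inj_iff.1 h
    rw [hp u hu.2, hp v hv.2, h1, eq_of_heq h2]
  have hmaps : ((box ρ).filter (· ≠ 0)).image (fun u => (⟨γ u, p u⟩ : (_ : ℕ) × (Fin 3 → ℤ)))
      ⊆ (Finset.Icc 1 ρ).sigma fun g => box (ρ / g) := fun q hq => by
    obtain ⟨u, hu, rfl⟩ := Finset.mem_image.1 hq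
    rw [Finset.mem_filter, mem_box_iff_norm_le] at hu
    rw [hnorm u hu.2] at hu
    have hγu := hγ u hu.2
    have hγ' : (0 : ℝ) < γ u := Nat.cast_pos.2 hγu
    have hle : (γ u : ℝ) ≤ ρ :=
      (le_mul_of_one_le_right hγ'.le (one_le_norm (hp0 u hu.2))).trans hu.1
    exact Finset.mem_sigma.2 ⟨Finset.mem_Icc.2 ⟨hγu, Nat.cast_le.1 hle⟩,
      mem_box_div_of_mul_norm_le hγu hu.1⟩
  calc _ = ∑ q ∈ ((box ρ).filter (· ≠ 0)).image
          (fun u => (⟨γ u, p u⟩ : (_ : ℕ) × (Fin 3 → ℤ))), ‖q.2‖⁻¹ := by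
        rw [Finset.sum_image hinj]
    _ ≤ ∑ q ∈ (Finset.Icc 1 ρ).sigma fun g => box (ρ / g), ‖q.2‖⁻¹ :=
        Finset.sum_le_sum_of_subset_of_nonneg hmaps fun _ _ _ => by positivity
    _ = ∑ g ∈ Finset.Icc 1 ρ, ∑ w ∈ box (ρ / g), ‖w‖⁻¹ := Finset.sum_sigma _ _ _
    _ ≤ ∑ g ∈ Finset.Icc 1 ρ, 26 * (ρ : ℝ) ^ 2 * ((g : ℝ) ^ 2)⁻¹ :=
        Finset.sum_le_sum fun g _ => (sum_inv_norm_le _).trans <|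
          calc 26 * ((ρ / g : ℕ) : ℝ) ^ 2 ≤ 26 * ((ρ : ℝ) / g) ^ 2 := by
                gcongr
                exact Nat.cast_div_le
            _ = _ := by rw [div_pow, div_eq_mul_inv, mul_assoc]
    _ ≤ 26 * (ρ : ℝ) ^ 2 * 2 := by
        rw [← Finset.mul_sum]
        gcongr
        exact sum_inv_sq_le_two ρ
    _ = _ := by ring

/-- Ordered pairs of parallel nonzero integer vectors in a box. -/
def parallelPairs (ρ : ℕ) : Finset ((Fin 3 → ℤ) × (Fin 3 → ℤ)) :=
  (box ρ ×ˢ box ρ).filter fun q => q.1 ≠ 0 ∧ q.2 ≠ 0 ∧ q.1 ⨯₃ q.2 = 0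

lemma mem_parallelPairs {ρ : ℕ} {q : (Fin 3 → ℤ) × (Fin 3 → ℤ)} :
    q ∈ parallelPairs ρ ↔
      (q.1 ∈ box ρ ∧ q.2 ∈ box ρ) ∧ q.1 ≠ 0 ∧ q.2 ≠ 0 ∧ q.1 ⨯₃ q.2 = 0 := by
  rw [parallelPairs, Finset.mem_filter, Finset.mem_product]

lemma swap_mem_parallelPairs {ρ : ℕ} {q : (Fin 3 → ℤ) × (Fin 3 → ℤ)} :
    q.swap ∈ parallelPairs ρ ↔ q ∈ parallelPairs ρ := by
  have h : q.2 ⨯₃ q.1 = 0 ↔ q.1 ⨯₃ q.2 = 0 := by rw [← cross_anticomm, neg_eq_zero]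
  simp only [mem_parallelPairs, Prod.fst_swap, Prod.snd_swap, h]
  tauto

lemma card_parallel_short_le {γ ρ : ℕ} {p u : Fin 3 → ℤ} (hγ : 0 < γ) (hp : IsPrimitive p)
    (hu : u = (γ : ℤ) • p) :
    (((box ρ).filter fun v => (u, v) ∈ parallelPairs ρ ∧ ‖v‖ ≤ ‖u‖).card : ℝ) ≤ 3 * γ := by
  have h := hp.card_multiples_le (N := γ)
    (s := (box ρ).filter fun v => (u, v) ∈ parallelPairs ρ ∧ ‖v‖ ≤ ‖u‖) fun v hv => by
      obtain ⟨-, hpar, hle⟩ := Finset.mem_filter.1 hv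
      have hcross := (mem_parallelPairs.1 hpar).2.2.2
      rw [hu, LinearMap.map_smul, LinearMap.smul_apply] at hcross
      rw [hu, norm_smul, Int.norm_natCast] at hle
      exact ⟨(smul_eq_zero.1 hcross).resolve_left (Nat.cast_ne_zero.2 hγ.ne'), hle⟩
  exact_mod_cast h.trans (by omega)

lemma sum_parallelPairs_short_le (ρ : ℕ) :
    ∑ q ∈ (parallelPairs ρ).filter (fun q => ‖q.2‖ ≤ ‖q.1‖), ‖q.1‖⁻¹ ≤ 156 * (ρ : ℝ) ^ 2 := by
  choose! γ p hγ hprim hp using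
    fun (u : Fin 3 → ℤ) (hu : u ≠ 0) => exists_isPrimitive_smul hu
  have hfiber : ∀ u ∈ (box ρ).filter (· ≠ 0),
      ∑ _v ∈ (box ρ).filter (fun v => (u, v) ∈ parallelPairs ρ ∧ ‖v‖ ≤ ‖u‖), ‖u‖⁻¹
        ≤ 3 * ‖p u‖⁻¹ := fun u hu => by
    have hu0 := (Finset.mem_filter.1 hu).2
    have hγ0 : (γ u : ℝ) ≠ 0 := Nat.cast_ne_zero.2 (hγ u hu0).ne'
    have hnorm : ‖u‖ = γ u * ‖p u‖ := by conv_lhs => rw [hp u hu0, norm_smul, Int.norm_natCast]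
    calc _ ≤ 3 * (γ u : ℝ) * ‖u‖⁻¹ := by
          rw [Finset.sum_const, nsmul_eq_mul]
          gcongr
          exact card_parallel_short_le (hγ u hu0) (hprim u hu0) (hp u hu0)
      _ = _ := by rw [hnorm, mul_inv]; field_simp
  rw [← Finset.sum_fiberwise_of_maps_to (g := Prod.fst) (t := (box ρ).filter (· ≠ 0)) fun q hq => by
    have h := mem_parallelPairs.1 (Finset.mem_filter.1 hq).1
    exact Finset.mem_filter.2 ⟨h.1.1, h.2.1⟩]
  calc _ ≤ ∑ u ∈ (box ρ).filter (· ≠ 0), 3 * ‖p u‖⁻¹ := by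
        refine Finset.sum_le_sum fun u hu => le_trans (le_of_eq ?_) (hfiber u hu)
        refine Finset.sum_bij' (fun q _ => q.2) (fun v _ => (u, v)) ?_ ?_ ?_ ?_ ?_
        all_goals simp only [Finset.mem_filter]
        · rintro q ⟨⟨hq, hle⟩, rfl⟩
          exact ⟨(mem_parallelPairs.1 hq).1.2, hq, hle⟩
        · rintro v ⟨-, hv, hle⟩
          exact ⟨⟨hv, hle⟩, trivial⟩
        · rintro q ⟨-, rfl⟩
          rfl
        · exact fun _ _ => trivial
        · rintro q ⟨-, rfl⟩
          rfl
    _ ≤ 3 * (52 * (ρ : ℝ) ^ 2) := by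
        rw [← Finset.mul_sum]
        gcongr
        exact sum_inv_norm_primitive_part_le ρ hγ hp
    _ = _ := by ring

lemma sum_parallelPairs_le (ρ : ℕ) :
    ∑ q ∈ parallelPairs ρ, (max ‖q.1‖ ‖q.2‖)⁻¹ ≤ 312 * (ρ : ℝ) ^ 2 := by
  have hterm : ∀ q : (Fin 3 → ℤ) × (Fin 3 → ℤ), (max ‖q.1‖ ‖q.2‖)⁻¹
      ≤ (if ‖q.2‖ ≤ ‖q.1‖ then ‖q.1‖⁻¹ else 0) + if ‖q.1‖ ≤ ‖q.2‖ then ‖q.2‖⁻¹ else 0 := fun q => by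
    rcases le_total ‖q.2‖ ‖q.1‖ with h | h
    · rw [max_eq_left h, if_pos h]
      exact le_add_of_nonneg_right (by split_ifs <;> positivity)
    · rw [max_eq_right h, if_pos h]
      exact le_add_of_nonneg_left (by split_ifs <;> positivity)
  have hswap : ∑ q ∈ parallelPairs ρ, (if ‖q.1‖ ≤ ‖q.2‖ then ‖q.2‖⁻¹ else 0)
      = ∑ q ∈ parallelPairs ρ, if ‖q.2‖ ≤ ‖q.1‖ then ‖q.1‖⁻¹ else 0 :=
    Finset.sum_equiv (Equiv.prodComm _ _) (fun _ => swap_mem_parallelPairs.symm) fun _ _ => rfl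
  calc _ ≤ ∑ q ∈ parallelPairs ρ, _ := Finset.sum_le_sum fun q _ => hterm q
    _ = 2 * ∑ q ∈ (parallelPairs ρ).filter (fun q => ‖q.2‖ ≤ ‖q.1‖), ‖q.1‖⁻¹ := by
        rw [Finset.sum_add_distrib, hswap, ← two_mul, Finset.sum_filter]
    _ ≤ 2 * (156 * (ρ : ℝ) ^ 2) := by
        gcongr
        exact sum_parallelPairs_short_le ρ
    _ = _ := by ring

lemma card_parallelPairs_le (ρ : ℕ) : ((parallelPairs ρ).card : ℝ) ≤ 312 * (ρ : ℝ) ^ 3 := by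
  have hterm : ∀ q ∈ parallelPairs ρ, (1 : ℝ) ≤ ρ * (max ‖q.1‖ ‖q.2‖)⁻¹ := fun q hq => by
    obtain ⟨⟨hu, hv⟩, hu0, -⟩ := mem_parallelPairs.1 hq
    rw [← div_eq_mul_inv, one_le_div (lt_max_of_lt_left (norm_pos_iff.2 hu0))]
    exact max_le (mem_box_iff_norm_le.1 hu) (mem_box_iff_norm_le.1 hv)
  calc ((parallelPairs ρ).card : ℝ) = ∑ _q ∈ parallelPairs ρ, (1 : ℝ) := by simp
    _ ≤ ∑ q ∈ parallelPairs ρ, ρ * (max ‖q.1‖ ‖q.2‖)⁻¹ := Finset.sum_le_sum hterm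
    _ ≤ ρ * (312 * (ρ : ℝ) ^ 2) := by
        rw [← Finset.mul_sum]
        gcongr
        exact sum_parallelPairs_le ρ
    _ = _ := by ring

/-! ### Cross products of integer vectors -/

lemma sum_box_le (i : Fin 3) (n : ℕ) {f : ℤ → ℤ → ℤ → ℝ} (hf : ∀ x y z, 0 ≤ f x y z) :
    ∑ u ∈ box n, f (u i) (u (i + 1)) (u (i + 2)) ≤ ∑ x ∈ Finset.Icc (-(n : ℤ)) n,
      ∑ y ∈ Finset.Icc (-(n : ℤ)) n, ∑ z ∈ Finset.Icc (-(n : ℤ)) n, f x y z := by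
  have hinj : Set.InjOn (fun u : Fin 3 → ℤ => (u i, u (i + 1), u (i + 2)))
      (box n : Finset (Fin 3 → ℤ)) :=
    fun u _ v _ h => by
      simp only [Prod.mk.injEq] at h
      exact fin_three_funext i h.1 h.2.1 h.2.2
  simp only [← Finset.sum_product']
  rw [← Finset.sum_image (f := fun q : ℤ × ℤ × ℤ => f q.1 q.2.1 q.2.2) hinj]
  refine (Finset.sum_le_sum_of_subset_of_nonneg (t := Finset.Icc (-(n : ℤ)) n ×ˢ
    (Finset.Icc (-(n : ℤ)) n ×ˢ Finset.Icc (-(n : ℤ)) n)) ?_ fun _ _ _ => hf _ _ _).trans_eq ?_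
  · intro q hq
    obtain ⟨u, hu, rfl⟩ := Finset.mem_image.1 hq
    rw [mem_box] at hu
    simp only [Finset.mem_product, Finset.mem_Icc, ← abs_le]
    exact ⟨hu _, hu _, hu _⟩
  · rw [Finset.sum_product]

lemma abs_mul_sub_mul_le_norm_cross (u v : Fin 3 → ℤ) (i : Fin 3) :
    |(u i : ℝ) * v (i + 1) - u (i + 1) * v i| ≤ ‖u ⨯₃ v‖ ∧
      |(u i : ℝ) * v (i + 2) - u (i + 2) * v i| ≤ ‖u ⨯₃ v‖ := by
  have h : ∀ j, |((u ⨯₃ v) j : ℝ)| ≤ ‖u ⨯₃ v‖ := fun j => by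
    rw [← Int.norm_eq_abs]
    exact norm_le_pi_norm _ j
  refine ⟨(le_of_eq ?_).trans (h (i + 2)), (le_of_eq ?_).trans (h (i + 1))⟩
  · fin_cases i <;> simp [cross_apply]
  · rw [← abs_neg]
    fin_cases i <;> simp [cross_apply]

lemma inv_norm_cross_le (u v : Fin 3 → ℤ) (i : Fin 3) :
    ‖u ⨯₃ v‖⁻¹ ≤ (√(max 1 |(u i : ℝ) * v (i + 1) - u (i + 1) * v i|))⁻¹
      * (√(max 1 |(u i : ℝ) * v (i + 2) - u (i + 2) * v i|))⁻¹ := by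
  obtain h0 | h0 := eq_or_ne (u ⨯₃ v) 0
  · rw [h0, norm_zero, inv_zero]
    positivity
  have hle : ∀ t : ℝ, |t| ≤ ‖u ⨯₃ v‖ → (√‖u ⨯₃ v‖)⁻¹ ≤ (√(max 1 |t|))⁻¹ := fun t ht =>
    inv_anti₀ (by positivity) (Real.sqrt_le_sqrt (max_le (one_le_norm h0) ht))
  obtain ⟨h₁, h₂⟩ := abs_mul_sub_mul_le_norm_cross u v i
  calc ‖u ⨯₃ v‖⁻¹ = (√‖u ⨯₃ v‖)⁻¹ * (√‖u ⨯₃ v‖)⁻¹ := by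
        rw [← mul_inv, Real.mul_self_sqrt (norm_nonneg _)]
    _ ≤ _ := mul_le_mul (hle _ h₁) (hle _ h₂) (by positivity) (by positivity)

/-- When `u i` is the largest coordinate of `u`, the components of `u ⨯₃ v` involving it are
values of two progressions with step `u i`; this separates the sum over `v`. -/
lemma sum_inv_norm_cross_left_le (ρ : ℕ) {u : Fin 3 → ℤ} (hu : u ∈ box ρ) :
    ∑ v ∈ box ρ, ‖u ⨯₃ v‖⁻¹ ≤ 243 * (ρ : ℝ) ^ 2 * ‖u‖⁻¹ := by
  obtain rfl | hu0 := eq_or_ne u 0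
  · simp
  obtain ⟨i, hi⟩ := exists_norm_eq_norm_apply u
  rw [Int.norm_eq_abs] at hi
  have hui : (u i : ℝ) ≠ 0 := fun h => by simp [h, hu0] at hi
  have huρ : |(u i : ℝ)| ≤ ρ := hi ▸ mem_box_iff_norm_le.1 hu
  let G : ℝ → ℝ := fun t => (√(max 1 |t|))⁻¹
  have hG : ∀ t, 0 ≤ G t := fun t => by positivity
  have hρ : (1 : ℝ) ≤ ρ := (one_le_norm hu0).trans (hi.trans_le huρ)
  calc _ ≤ ∑ v ∈ box ρ, G (u i * v (i + 1) - u (i + 1) * v i)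
          * G (u i * v (i + 2) - u (i + 2) * v i) :=
        Finset.sum_le_sum fun v _ => inv_norm_cross_le u v i
    _ ≤ ∑ x ∈ Finset.Icc (-(ρ : ℤ)) ρ, ∑ y ∈ Finset.Icc (-(ρ : ℤ)) ρ,
          ∑ z ∈ Finset.Icc (-(ρ : ℤ)) ρ,
            G (u i * y - u (i + 1) * x) * G (u i * z - u (i + 2) * x) :=
        sum_box_le i ρ (f := fun x y z => G (u i * y - u (i + 1) * x) * G (u i * z - u (i + 2) * x))
          fun _ _ _ => mul_nonneg (hG _) (hG _)
    _ ≤ ∑ _x ∈ Finset.Icc (-(ρ : ℤ)) ρ, (9 * √(ρ / |(u i : ℝ)|)) * (9 * √(ρ / |(u i : ℝ)|)) := by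
        refine Finset.sum_le_sum fun x _ => ?_
        rw [← Finset.sum_mul_sum]
        exact mul_le_mul (sum_inv_sqrt_progression_le ρ hui huρ _)
          (sum_inv_sqrt_progression_le ρ hui huρ _) (Finset.sum_nonneg fun _ _ => hG _)
          (by positivity)
    _ = (2 * ρ + 1) * (81 * (ρ / |(u i : ℝ)|)) := by
        have hcard : (Finset.Icc (-(ρ : ℤ)) ρ).card = 2 * ρ + 1 := by
          rw [Int.card_Icc]
          omega
        rw [Finset.sum_const, nsmul_eq_mul, hcard, mul_mul_mul_comm,
          Real.mul_self_sqrt (by positivity)]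
        push_cast
        ring
    _ ≤ (3 * ρ) * (81 * (ρ / |(u i : ℝ)|)) := by
        gcongr
        linarith
    _ = _ := by
        rw [hi]
        ring

/-- Parallel pairs contribute `0⁻¹ = 0`. -/
lemma sum_inv_norm_cross_le (ρ : ℕ) :
    ∑ u ∈ box ρ, ∑ v ∈ box ρ, ‖u ⨯₃ v‖⁻¹ ≤ 6318 * (ρ : ℝ) ^ 4 :=
  calc _ ≤ ∑ u ∈ box ρ, 243 * (ρ : ℝ) ^ 2 * ‖u‖⁻¹ :=
        Finset.sum_le_sum fun _ hu => sum_inv_norm_cross_left_le ρ hu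
    _ ≤ 243 * (ρ : ℝ) ^ 2 * (26 * (ρ : ℝ) ^ 2) := by
        rw [← Finset.mul_sum]
        gcongr
        exact sum_inv_norm_le ρ
    _ = _ := by ring

/-- Pairs of integer vectors in the box of size `2 * H`, the first of norm at least `H`, with
nonzero cross product of norm at most `E`. -/
def nearParallelPairs (E H : ℕ) : Finset ((Fin 3 → ℤ) × (Fin 3 → ℤ)) :=
  (box (2 * H) ×ˢ box (2 * H)).filter fun q =>
    (H : ℝ) ≤ ‖q.1‖ ∧ q.1 ⨯₃ q.2 ≠ 0 ∧ ‖q.1 ⨯₃ q.2‖ ≤ E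

lemma mem_nearParallelPairs {E H : ℕ} {q : (Fin 3 → ℤ) × (Fin 3 → ℤ)} :
    q ∈ nearParallelPairs E H ↔ (‖q.1‖ ≤ (2 * H : ℕ) ∧ ‖q.2‖ ≤ (2 * H : ℕ)) ∧
      (H : ℝ) ≤ ‖q.1‖ ∧ q.1 ⨯₃ q.2 ≠ 0 ∧ ‖q.1 ⨯₃ q.2‖ ≤ E := by
  rw [nearParallelPairs, Finset.mem_filter, Finset.mem_product, mem_box_iff_norm_le,
    mem_box_iff_norm_le]

lemma sum_card_orthogonalPairs_div_le {E H : ℕ} (hEH : E ≤ H) :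
    ∑ g ∈ Finset.Icc 1 (2 * H), 9 * (g : ℝ) * (orthogonalPairs (E / g) (2 * H / g)).card
      ≤ 34992 * (E : ℝ) ^ 2 * (H : ℝ) ^ 2 := by
  have hterm : ∀ g ∈ Finset.Icc 1 (2 * H),
      9 * (g : ℝ) * (orthogonalPairs (E / g) (2 * H / g)).card
        ≤ 17496 * (E : ℝ) ^ 2 * (H : ℝ) ^ 2 * ((g : ℝ) ^ 2)⁻¹ := fun g hg => by
    have hg1 : (1 : ℝ) ≤ g := by exact_mod_cast (Finset.mem_Icc.1 hg).1
    have : (0 : ℝ) < g := zero_lt_one.trans_le hg1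
    have hE : ((E / g : ℕ) : ℝ) ≤ E / g := Nat.cast_div_le
    have hH : ((2 * H / g : ℕ) : ℝ) ≤ 2 * H / g := by
      simpa only [Nat.cast_mul, Nat.cast_ofNat] using Nat.cast_div_le (α := ℝ) (m := 2 * H) (n := g)
    calc _ ≤ 9 * (g : ℝ) * (486 * ((E / g : ℕ) : ℝ) ^ 2 * ((2 * H / g : ℕ) : ℝ) ^ 2) := by
          gcongr
          exact card_orthogonalPairs_le (Nat.div_le_div_right (by omega))
      _ ≤ 9 * (g : ℝ) * (486 * ((E : ℝ) / g) ^ 2 * (2 * H / g) ^ 2) := by gcongr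
      _ = 17496 * (E : ℝ) ^ 2 * (H : ℝ) ^ 2 * ((g : ℝ) ^ 3)⁻¹ := by
          field_simp
          ring
      _ ≤ _ := by
          gcongr
          norm_num
  calc _ ≤ ∑ g ∈ Finset.Icc 1 (2 * H), 17496 * (E : ℝ) ^ 2 * (H : ℝ) ^ 2 * ((g : ℝ) ^ 2)⁻¹ :=
        Finset.sum_le_sum hterm
    _ ≤ 17496 * (E : ℝ) ^ 2 * (H : ℝ) ^ 2 * 2 := by
        rw [← Finset.mul_sum]
        gcongr
        exact sum_inv_sq_le_two _
    _ = _ := by ring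

open scoped Classical in
lemma card_nearParallelPairs_fiber_le {E H g : ℕ} (hg : 0 < g) (n w : Fin 3 → ℤ) :
    ((nearParallelPairs E H).filter fun q =>
      IsPrimitive w ∧ q.1 = (g : ℤ) • w ∧ w ⨯₃ q.2 = n).card ≤ 9 * g := by
  set F := (nearParallelPairs E H).filter fun q =>
    IsPrimitive w ∧ q.1 = (g : ℤ) • w ∧ w ⨯₃ q.2 = n with hF
  obtain h | ⟨q₀, hq₀⟩ := F.eq_empty_or_nonempty
  · simp [h]
  rw [hF, Finset.mem_filter] at hq₀
  have h := hq₀.2.1.card_cross_eq_le (s := F.image Prod.snd) (n := n) (N := 2 * g) fun v hv => by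
    obtain ⟨q, hq, rfl⟩ := Finset.mem_image.1 hv
    obtain ⟨hq, -, hu, hn⟩ := Finset.mem_filter.1 hq
    obtain ⟨⟨-, hv⟩, hH, -⟩ := mem_nearParallelPairs.1 hq
    rw [hu, norm_smul, Int.norm_natCast] at hH
    refine ⟨hn, hv.trans ?_⟩
    push_cast
    linarith
  rw [Finset.card_image_of_injOn fun q hq q' hq' h => Prod.ext
    ((Finset.mem_filter.1 hq).2.2.1.trans (Finset.mem_filter.1 hq').2.2.1.symm) h] at h
  omega

open scoped Classical in
/-- A pair `(u, v)` with `u = g • w`, `w` primitive, is encoded by `g`, `w ⨯₃ v` and `w`; the last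
two vectors are orthogonal, and `v` is determined by them up to a multiple of `w`. -/
lemma card_nearParallelPairs_le {E H : ℕ} (hEH : E ≤ H) (hH : 0 < H) :
    ((nearParallelPairs E H).card : ℝ) ≤ 34992 * (E : ℝ) ^ 2 * (H : ℝ) ^ 2 := by
  have hcover : nearParallelPairs E H ⊆ (Finset.Icc 1 (2 * H)).biUnion fun g =>
      (orthogonalPairs (E / g) (2 * H / g)).biUnion fun t =>
        (nearParallelPairs E H).filter fun q =>
          IsPrimitive t.2 ∧ q.1 = (g : ℤ) • t.2 ∧ t.2 ⨯₃ q.2 = t.1 := fun q hq => by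
    obtain ⟨⟨hu, -⟩, hu', hx0, hx⟩ := mem_nearParallelPairs.1 hq
    obtain ⟨g, w, hg, hw, huw⟩ :=
      exists_isPrimitive_smul (norm_pos_iff.1 ((Nat.cast_pos.2 hH).trans_le hu'))
    have hcross : q.1 ⨯₃ q.2 = (g : ℤ) • (w ⨯₃ q.2) := by
      rw [huw, LinearMap.map_smul, LinearMap.smul_apply]
    rw [huw, norm_smul, Int.norm_natCast] at hu
    rw [hcross, norm_smul, Int.norm_natCast] at hx
    have hle : (g : ℝ) ≤ (2 * H : ℕ) :=
      (le_mul_of_one_le_right (Nat.cast_nonneg _) (one_le_norm hw.ne_zero)).trans hu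
    refine Finset.mem_biUnion.2 ⟨g, Finset.mem_Icc.2 ⟨hg, Nat.cast_le.1 hle⟩,
      Finset.mem_biUnion.2 ⟨(w ⨯₃ q.2, w), Finset.mem_filter.2 ⟨Finset.mem_product.2
        ⟨mem_box_div_of_mul_norm_le hg hx, mem_box_div_of_mul_norm_le hg hu⟩, fun h => hx0 ?_, ?_⟩,
        Finset.mem_filter.2 ⟨hq, hw, huw, rfl⟩⟩⟩
    · rw [hcross, (show w ⨯₃ q.2 = 0 from h), smul_zero]
    · rw [dotProduct_comm]
      exact dot_self_cross _ _
  refine le_trans ?_ (sum_card_orthogonalPairs_div_le hEH)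
  have hcard : (nearParallelPairs E H).card
      ≤ ∑ g ∈ Finset.Icc 1 (2 * H), (orthogonalPairs (E / g) (2 * H / g)).card * (9 * g) :=
    (Finset.card_le_card hcover).trans <| Finset.card_biUnion_le.trans <|
      Finset.sum_le_sum fun g hg => Finset.card_biUnion_le_card_mul _ _ _ fun t _ =>
        card_nearParallelPairs_fiber_le (Finset.mem_Icc.1 hg).1 t.1 t.2
  calc _ ≤ ((∑ g ∈ Finset.Icc 1 (2 * H),
        (orthogonalPairs (E / g) (2 * H / g)).card * (9 * g) : ℕ) : ℝ) := Nat.cast_le.2 hcard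
    _ = _ := by
        push_cast
        exact Finset.sum_congr rfl fun g _ => mul_comm _ _

lemma exists_natCast_eq_norm {ι : Type*} [Fintype ι] [Nonempty ι] (u : ι → ℤ) :
    ∃ n : ℕ, ‖u‖ = n := by
  obtain ⟨i, hi⟩ := exists_norm_eq_norm_apply u
  exact ⟨(u i).natAbs, by rw [hi, Int.norm_eq_abs, Nat.cast_natAbs, Int.cast_abs]⟩

lemma card_cross_norm_le_of_floor_le {H : ℕ} (hH : 0 < H) {E : ℝ} (hE : 0 ≤ E)
    (hEH : ⌊E⌋₊ ≤ H) :
    (((box (2 * H) ×ˢ box (2 * H)).filter fun q : (Fin 3 → ℤ) × (Fin 3 → ℤ) =>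
      (H : ℝ) ≤ ‖q.1‖ ∧ (H : ℝ) ≤ ‖q.2‖ ∧ ‖q.1 ⨯₃ q.2‖ ≤ E).card : ℝ)
      ≤ 2496 * (H : ℝ) ^ 3 + 34992 * E ^ 2 * (H : ℝ) ^ 2 := by
  have hsub : ((box (2 * H) ×ˢ box (2 * H)).filter fun q : (Fin 3 → ℤ) × (Fin 3 → ℤ) =>
      (H : ℝ) ≤ ‖q.1‖ ∧ (H : ℝ) ≤ ‖q.2‖ ∧ ‖q.1 ⨯₃ q.2‖ ≤ E)
      ⊆ parallelPairs (2 * H) ∪ nearParallelPairs ⌊E⌋₊ H := fun q hq => by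
    obtain ⟨hbox, hu, hv, hx⟩ := Finset.mem_filter.1 hq
    have hHr : (0 : ℝ) < H := Nat.cast_pos.2 hH
    by_cases h0 : q.1 ⨯₃ q.2 = 0
    · exact Finset.mem_union_left _ (Finset.mem_filter.2 ⟨hbox,
        norm_pos_iff.1 (hHr.trans_le hu), norm_pos_iff.1 (hHr.trans_le hv), h0⟩)
    · refine Finset.mem_union_right _ (Finset.mem_filter.2 ⟨hbox, hu, h0, ?_⟩)
      obtain ⟨n, hn⟩ := exists_natCast_eq_norm (q.1 ⨯₃ q.2)
      rw [hn] at hx ⊢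
      exact Nat.cast_le.2 (Nat.le_floor hx)
  calc _ ≤ ((parallelPairs (2 * H)).card : ℝ) + (nearParallelPairs ⌊E⌋₊ H).card := by
        exact_mod_cast (Finset.card_le_card hsub).trans (Finset.card_union_le _ _)
    _ ≤ 312 * ((2 * H : ℕ) : ℝ) ^ 3 + 34992 * (⌊E⌋₊ : ℝ) ^ 2 * (H : ℝ) ^ 2 :=
        add_le_add (card_parallelPairs_le _) (card_nearParallelPairs_le hEH hH)
    _ ≤ 312 * ((2 * H : ℕ) : ℝ) ^ 3 + 34992 * E ^ 2 * (H : ℝ) ^ 2 := by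
        gcongr
        exact Nat.floor_le hE
    _ = _ := by
        push_cast
        ring

lemma card_cross_norm_le {H : ℕ} (hH : 0 < H) {E K : ℝ} (hE : 0 ≤ E) (hK : 1 ≤ K)
    (hEK : E ^ 2 ≤ K * H) :
    (((box (2 * H) ×ˢ box (2 * H)).filter fun q : (Fin 3 → ℤ) × (Fin 3 → ℤ) =>
      (H : ℝ) ≤ ‖q.1‖ ∧ (H : ℝ) ≤ ‖q.2‖ ∧ ‖q.1 ⨯₃ q.2‖ ≤ E).card : ℝ)
      ≤ 60000 * K ^ 3 * (H : ℝ) ^ 3 := by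
  have hHr : (1 : ℝ) ≤ H := Nat.one_le_cast.2 hH
  have hKK : K ≤ K ^ 3 := le_self_pow₀ hK (by norm_num)
  obtain h | h := le_or_gt ⌊E⌋₊ H
  · calc _ ≤ 2496 * (H : ℝ) ^ 3 + 34992 * E ^ 2 * (H : ℝ) ^ 2 :=
          card_cross_norm_le_of_floor_le hH hE h
      _ ≤ 2496 * (H : ℝ) ^ 3 + 34992 * (K * H) * (H : ℝ) ^ 2 := by gcongr
      _ = (2496 + 34992 * K) * (H : ℝ) ^ 3 := by ring
      _ ≤ _ := by
          gcongr
          linarith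
  · have hHE : (H : ℝ) < E := (Nat.cast_lt.2 h).trans_le (Nat.floor_le hE)
    have hHK : (H : ℝ) ≤ K := by nlinarith
    calc _ ≤ (((2 * (2 * H) + 1) ^ 3 * (2 * (2 * H) + 1) ^ 3 : ℕ) : ℝ) := by
          refine Nat.cast_le.2 ((Finset.card_filter_le _ _).trans_eq ?_)
          rw [Finset.card_product, card_box, Fintype.card_fin]
      _ ≤ (5 * (H : ℝ)) ^ 3 * (5 * (H : ℝ)) ^ 3 := by
          push_cast
          gcongr <;> linarith
      _ = 15625 * (H : ℝ) ^ 3 * (H : ℝ) ^ 3 := by ring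
      _ ≤ _ := by
          gcongr
          norm_num

/-! ### Volumes of slabs and tubes -/

section Volume

variable {ι : Type*} [Fintype ι]

lemma volume_image_mulVec_Icc [DecidableEq ι] (A : Matrix ι ι ℝ) (a b : ι → ℝ) :
    volume ((fun x => A *ᵥ x) '' Icc a b)
      = ENNReal.ofReal |A.det| * ∏ i, ENNReal.ofReal (b i - a i) := by
  rw [← Real.volume_Icc_pi, ← LinearMap.det_toLin', ← Measure.addHaar_image_linearMap]
  simp only [Matrix.toLin'_apply']
  rfl

lemma volume_abs_mulVec_le [DecidableEq ι] {A : Matrix ι ι ℝ} (hA : A.det ≠ 0) (b : ι → ℝ) :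
    volume {w : ι → ℝ | ∀ i, |(A *ᵥ w) i| ≤ b i}
      = ENNReal.ofReal |A.det|⁻¹ * ∏ i, ENNReal.ofReal (2 * b i) := by
  have hpre : {w : ι → ℝ | ∀ i, |(A *ᵥ w) i| ≤ b i} = A.toLin' ⁻¹' Icc (-b) b := by
    ext w
    simp only [mem_ofPred_eq, mem_preimage, Matrix.toLin'_apply, mem_Icc, Pi.le_def, Pi.neg_apply,
      abs_le, forall_and]
  rw [hpre, Measure.addHaar_preimage_linearMap _ (by rwa [LinearMap.det_toLin']),
    Real.volume_Icc_pi, LinearMap.det_toLin', abs_inv]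
  simp only [Pi.neg_apply, sub_neg_eq_add, two_mul]

lemma abs_dotProduct_le (a b : ι → ℝ) : |a ⬝ᵥ b| ≤ Fintype.card ι * (‖a‖ * ‖b‖) := by
  refine (Finset.abs_sum_le_sum_abs _ _).trans ?_
  rw [← nsmul_eq_mul]
  refine Finset.sum_le_card_nsmul _ _ _ fun i _ => ?_
  rw [abs_mul]
  exact mul_le_mul (norm_le_pi_norm a i) (norm_le_pi_norm b i) (abs_nonneg _) (norm_nonneg _)

lemma norm_sq_le_dotProduct_self [Nonempty ι] (a : ι → ℝ) : ‖a‖ ^ 2 ≤ a ⬝ᵥ a := by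
  obtain ⟨i, hi⟩ := exists_norm_eq_norm_apply a
  rw [hi, Real.norm_eq_abs, sq_abs, sq]
  exact Finset.single_le_sum (f := fun j => a j * a j) (fun j _ => mul_self_nonneg _)
    (Finset.mem_univ i)

lemma prod_update_const [DecidableEq ι] {M : Type*} [CommMonoid M] (i : ι) (x y : M) :
    ∏ j, Function.update (fun _ => y) i x j = x * y ^ (Fintype.card ι - 1) := by
  rw [Finset.prod_update_of_mem (Finset.mem_univ i), Finset.prod_const,
    Finset.card_sdiff_of_subset (Finset.subset_univ _), Finset.card_univ, Finset.card_singleton]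

lemma det_one_updateRow [DecidableEq ι] (i : ι) (a : ι → ℝ) :
    ((1 : Matrix ι ι ℝ).updateRow i a).det = a i := by
  rw [← Matrix.cramer_transpose_apply, Matrix.transpose_one, Matrix.cramer_one,
    Module.End.one_apply]

lemma det_one_updateCol [DecidableEq ι] (i : ι) (a : ι → ℝ) :
    ((1 : Matrix ι ι ℝ).updateCol i a).det = a i := by
  rw [← Matrix.cramer_apply, Matrix.cramer_one, Module.End.one_apply]

lemma one_updateCol_mulVec [DecidableEq ι] (i : ι) (a x : ι → ℝ) :
    (1 : Matrix ι ι ℝ).updateCol i a *ᵥ x = Function.update x i 0 + x i • a := by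
  ext j
  have hterm : ∀ k, (1 : Matrix ι ι ℝ).updateCol i a j k * x k
      = (1 : Matrix ι ι ℝ) j k * Function.update x i 0 k + if k = i then x i * a j else 0 :=
      fun k => by
    obtain rfl | hk := eq_or_ne k i
    · simp [mul_comm]
    · simp [hk]
  rw [Matrix.mulVec, dotProduct, Finset.sum_congr rfl fun k _ => hterm k, Finset.sum_add_distrib,
    Finset.sum_ite_eq' Finset.univ i, if_pos (Finset.mem_univ i)]
  exact congrArg (· + x i * a j) (congrFun (Matrix.one_mulVec (Function.update x i 0)) j)

lemma volume_slab_le [Nonempty ι] {h : ι → ℝ} (hh : h ≠ 0) {P t : ℝ} (hP : 0 ≤ P) (ht : 0 ≤ t) :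
    volume {w : ι → ℝ | ‖w‖ ≤ P ∧ |w ⬝ᵥ h| ≤ t}
      ≤ ENNReal.ofReal (2 * t * (2 * P) ^ (Fintype.card ι - 1) / ‖h‖) := by
  classical
  obtain ⟨i, hi⟩ := exists_norm_eq_norm_apply h
  have hdet := det_one_updateRow i h
  have hdet0 : ((1 : Matrix ι ι ℝ).updateRow i h).det ≠ 0 := by
    rwa [hdet, ← norm_ne_zero_iff, ← hi, norm_ne_zero_iff]
  have hsub : {w : ι → ℝ | ‖w‖ ≤ P ∧ |w ⬝ᵥ h| ≤ t} ⊆ {w : ι → ℝ | ∀ j,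
      |((1 : Matrix ι ι ℝ).updateRow i h *ᵥ w) j| ≤ Function.update (fun _ => P) i t j} := by
    rintro w ⟨hw, hwh⟩ j
    obtain rfl | hj := eq_or_ne j i
    · rwa [Matrix.mulVec, Matrix.updateRow_self, Function.update_self, dotProduct_comm]
    · rw [Matrix.mulVec, Matrix.updateRow_ne hj, Function.update_of_ne hj]
      exact (congrArg abs (congrFun (Matrix.one_mulVec w) j)).trans_le
        ((norm_le_pi_norm w j).trans hw)
  have hprod : ∏ j, (2 * Function.update (fun _ : ι => P) i t j)
      = 2 * t * (2 * P) ^ (Fintype.card ι - 1) := by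
    rw [← prod_update_const i]
    refine Finset.prod_congr rfl fun j _ => ?_
    obtain rfl | hj := eq_or_ne j i
    · simp
    · simp [hj]
  refine (measure_mono hsub).trans_eq ?_
  rw [volume_abs_mulVec_le hdet0, hdet, ← Real.norm_eq_abs, ← hi, ← ENNReal.ofReal_prod_of_nonneg,
    hprod, ← ENNReal.ofReal_mul (by positivity), inv_mul_eq_div]
  intro j _
  obtain rfl | hj := eq_or_ne j i
  · simpa using ht
  · simpa [hj] using hP

/-- The closed `η`-neighbourhood of the segment from `a` to `2 • a`. -/
def tube (a : ι → ℝ) (η : ℝ) : Set (ι → ℝ) := {w | ∃ s ∈ Icc (1 : ℝ) 2, ‖w - s • a‖ ≤ η}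

lemma le_volume_tube [Nonempty ι] (a : ι → ℝ) {η : ℝ} (hη : 0 ≤ η) :
    ENNReal.ofReal (‖a‖ * (2 * η) ^ (Fintype.card ι - 1)) ≤ volume (tube a η) := by
  classical
  obtain ⟨i, hi⟩ := exists_norm_eq_norm_apply a
  let lo : ι → ℝ := Function.update (fun _ => -η) i 1
  let hi' : ι → ℝ := Function.update (fun _ => η) i 2
  have hsub : (fun x => (1 : Matrix ι ι ℝ).updateCol i a *ᵥ x) '' Icc lo hi' ⊆ tube a η := by
    rintro - ⟨x, ⟨hlo, hhi⟩, rfl⟩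
    refine ⟨x i, ⟨by simpa [lo] using hlo i, by simpa [hi'] using hhi i⟩, ?_⟩
    simp only [one_updateCol_mulVec, add_sub_cancel_right]
    refine (pi_norm_le_iff_of_nonneg hη).2 fun j => ?_
    obtain rfl | hj := eq_or_ne j i
    · simpa using hη
    · rw [Function.update_of_ne hj]
      exact abs_le.2 ⟨by simpa [lo, hj] using hlo j, by simpa [hi', hj] using hhi j⟩
  have hside : ∀ j, ENNReal.ofReal (hi' j - lo j)
      = Function.update (fun _ => ENNReal.ofReal (2 * η)) i 1 j := fun j => by
    obtain rfl | hj := eq_or_ne j i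
    · norm_num [lo, hi']
    · simp [lo, hi', hj, two_mul]
  refine le_trans (le_of_eq ?_) (measure_mono hsub)
  rw [volume_image_mulVec_Icc, det_one_updateCol, Finset.prod_congr rfl fun j _ => hside j,
    prod_update_const, one_mul, ENNReal.ofReal_mul (norm_nonneg _), hi, Real.norm_eq_abs,
    ENNReal.ofReal_pow (by positivity)]

/-- Projecting along `a` to the hyperplane `w i = 0`, where `|a i|` is maximal, moves points by a
bounded factor only. -/
lemma tube_subset_image [DecidableEq ι] {a : ι → ℝ} {η : ℝ} (ha : a ≠ 0) (hηa : η ≤ ‖a‖) {i : ι}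
    (hi : ‖a‖ = ‖a i‖) :
    tube a η ⊆ (fun x => (1 : Matrix ι ι ℝ).updateCol i a *ᵥ x) ''
      Icc (Function.update (fun _ => -(2 * η)) i (-3)) (Function.update (fun _ => 2 * η) i 3) := by
  have hai : a i ≠ 0 := by rwa [← norm_ne_zero_iff, ← hi, norm_ne_zero_iff]
  rintro w ⟨s, hs, hw⟩
  have hη : 0 ≤ η := (norm_nonneg _).trans hw
  have hnear : ∀ j, |w j - s * a j| ≤ η := fun j => (norm_le_pi_norm (w - s • a) j).trans hw
  have hdiv : ∀ t : ℝ, |t / a i| = |t| / ‖a‖ := fun t => by rw [abs_div, hi, Real.norm_eq_abs]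
  have hcoeff : |w i / a i - s| ≤ 1 := by
    rw [show w i / a i - s = (w i - s * a i) / a i by field_simp, hdiv]
    exact div_le_one_of_le₀ ((hnear i).trans hηa) (norm_nonneg _)
  have hother : ∀ j, |w j - w i / a i * a j| ≤ 2 * η := fun j => by
    have hsplit : w j - w i / a i * a j = (w j - s * a j) - (w i - s * a i) * (a j / a i) := by
      field_simp
      ring
    have hratio : |a j / a i| ≤ 1 := by
      rw [hdiv]
      exact div_le_one_of_le₀ (norm_le_pi_norm a j) (norm_nonneg _)
    calc _ ≤ |w j - s * a j| + |w i - s * a i| * |a j / a i| := by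
          rw [hsplit, ← abs_mul]
          exact abs_sub _ _
      _ ≤ η + η * 1 := by gcongr <;> apply hnear
      _ = 2 * η := by ring
  refine ⟨Function.update (w - (w i / a i) • a) i (w i / a i), ⟨fun j => ?_, fun j => ?_⟩, ?_⟩
  · obtain rfl | hj := eq_or_ne j i
    · simpa using by linarith [(abs_le.1 hcoeff).1, hs.1]
    · simpa [hj] using (abs_le.1 (hother j)).1
  · obtain rfl | hj := eq_or_ne j i
    · simpa using by linarith [(abs_le.1 hcoeff).2, hs.2]
    · simpa [hj] using (abs_le.1 (hother j)).2
  · have h0 : (w - (w i / a i) • a) i = 0 := by simp [hai]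
    simp only [one_updateCol_mulVec, Function.update_idem, Function.update_self]
    rw [← h0, Function.update_eq_self, sub_add_cancel]

lemma volume_tube_le [Nonempty ι] {a : ι → ℝ} {η : ℝ} (ha : a ≠ 0) (hη : 0 ≤ η) (hηa : η ≤ ‖a‖) :
    volume (tube a η) ≤ ENNReal.ofReal (6 * ‖a‖ * (4 * η) ^ (Fintype.card ι - 1)) := by
  classical
  obtain ⟨i, hi⟩ := exists_norm_eq_norm_apply a
  have hside : ∀ j, ENNReal.ofReal (Function.update (fun _ : ι => 2 * η) i 3 j
      - Function.update (fun _ : ι => -(2 * η)) i (-3) j)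
      = Function.update (fun _ => ENNReal.ofReal (4 * η)) i (ENNReal.ofReal 6) j := fun j => by
    obtain rfl | hj := eq_or_ne j i
    · norm_num
    · simp only [Function.update_of_ne hj]
      ring_nf
  refine (measure_mono (tube_subset_image ha hηa hi)).trans_eq ?_
  rw [volume_image_mulVec_Icc, det_one_updateCol, Finset.prod_congr rfl fun j _ => hside j,
    prod_update_const, ← Real.norm_eq_abs, ← hi, ← ENNReal.ofReal_pow (by positivity),
    ← mul_assoc, ← ENNReal.ofReal_mul (norm_nonneg _), ← ENNReal.ofReal_mul (by positivity),
    mul_comm ‖a‖]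

/-- The part of the cube of half-side `P` lying in the slabs of half-width `t` orthogonal to `u`
and to `v`. -/
def twoSlabs (P t : ℝ) (u v : ι → ℝ) : Set (ι → ℝ) :=
  {w | ‖w‖ ≤ P ∧ |w ⬝ᵥ u| ≤ t ∧ |w ⬝ᵥ v| ≤ t}

end Volume

lemma volume_twoSlabs_le {u v : Fin 3 → ℝ} (huv : u ⨯₃ v ≠ 0) {P t : ℝ} (hP : 0 ≤ P)
    (ht : 0 ≤ t) :
    volume (twoSlabs P t u v) ≤ ENNReal.ofReal (24 * t ^ 2 * P / ‖u ⨯₃ v‖) := by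
  set n := u ⨯₃ v with hn
  have : 0 < ‖n‖ := norm_pos_iff.2 huv
  have hnn : ‖n‖ ^ 2 ≤ n ⬝ᵥ n := norm_sq_le_dotProduct_self n
  have hnn0 : 0 < n ⬝ᵥ n := (by positivity : 0 < ‖n‖ ^ 2).trans_le hnn
  have hdet : (Matrix.of ![u, v, n]).det = n ⬝ᵥ n := by
    simp only [Matrix.det_fin_three, Matrix.vec3_dotProduct, hn, cross_apply, Matrix.of_apply,
      Matrix.cons_val]
    ring
  have hsub : twoSlabs P t u v ⊆ {w : Fin 3 → ℝ | ∀ j, |(Matrix.of ![u, v, n] *ᵥ w) j|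
      ≤ (![t, t, 3 * (‖n‖ * P)] : Fin 3 → ℝ) j} := by
    rintro w ⟨hw, hu, hv⟩ j
    rw [Matrix.mulVec, dotProduct_comm]
    fin_cases j
    · exact hu
    · exact hv
    · refine (abs_dotProduct_le w n).trans ?_
      rw [mul_comm ‖w‖]
      change _ ≤ 3 * (‖n‖ * P)
      simp only [Fintype.card_fin, Nat.cast_ofNat]
      gcongr
  refine (measure_mono hsub).trans ?_
  rw [volume_abs_mulVec_le (hdet ▸ hnn0.ne'), hdet, Fin.prod_univ_three]
  simp only [Matrix.cons_val]
  rw [← ENNReal.ofReal_mul (by positivity), ← ENNReal.ofReal_mul (by positivity),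
    ← ENNReal.ofReal_mul (by positivity), abs_of_pos hnn0]
  refine ENNReal.ofReal_le_ofReal ?_
  calc (n ⬝ᵥ n)⁻¹ * (2 * t * (2 * t) * (2 * (3 * (‖n‖ * P))))
      ≤ (‖n‖ ^ 2)⁻¹ * (2 * t * (2 * t) * (2 * (3 * (‖n‖ * P)))) := by gcongr
    _ = 24 * t ^ 2 * P / ‖n‖ := by
        field_simp
        ring

/-! ### Second moments -/

/-- An integer vector seen as a real vector. -/
def realVec {ι : Type*} (u : ι → ℤ) : ι → ℝ := fun i => u i

section RealVec

variable {ι : Type*}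

lemma realVec_add (u v : ι → ℤ) : realVec (u + v) = realVec u + realVec v := by
  ext i
  exact Int.cast_add _ _

lemma realVec_sub (u v : ι → ℤ) : realVec (u - v) = realVec u - realVec v := by
  ext i
  exact Int.cast_sub _ _

lemma norm_realVec [Fintype ι] (u : ι → ℤ) : ‖realVec u‖ = ‖u‖ := by
  simp [realVec, Pi.norm_def, nnnorm, Int.norm_eq_abs]

lemma realVec_ne_zero {u : ι → ℤ} (hu : u ≠ 0) : realVec u ≠ 0 := fun h =>
  hu (funext fun i => Int.cast_eq_zero.1 (congrFun h i))

lemma realVec_cross (u v : Fin 3 → ℤ) : realVec (u ⨯₃ v) = realVec u ⨯₃ realVec v := by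
  ext i
  fin_cases i <;> simp [realVec, cross_apply]

end RealVec

lemma sum_inv_max_norm_of_cross_eq_zero_le (ρ : ℕ) :
    ∑ q ∈ box ρ ×ˢ box ρ, (if q.1 ⨯₃ q.2 = 0 then (max ‖q.1‖ ‖q.2‖)⁻¹ else 0)
      ≤ 364 * (ρ : ℝ) ^ 2 := by
  have hterm : ∀ q : (Fin 3 → ℤ) × (Fin 3 → ℤ),
      (if q.1 ⨯₃ q.2 = 0 then (max ‖q.1‖ ‖q.2‖)⁻¹ else 0)
        ≤ (if q.1 ≠ 0 ∧ q.2 ≠ 0 ∧ q.1 ⨯₃ q.2 = 0 then (max ‖q.1‖ ‖q.2‖)⁻¹ else 0)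
          + ((if q.2 = 0 then ‖q.1‖⁻¹ else 0) + if q.1 = 0 then ‖q.2‖⁻¹ else 0) := fun q => by
    by_cases h₁ : q.1 = 0 <;> by_cases h₂ : q.2 = 0 <;> simp [h₁, h₂]
  have hzero : (0 : Fin 3 → ℤ) ∈ box ρ := mem_box.2 fun i => by simp
  have haxis : ∑ q ∈ box ρ ×ˢ box ρ, (if q.2 = (0 : Fin 3 → ℤ) then ‖(q.1 : Fin 3 → ℤ)‖⁻¹ else 0)
      = ∑ u ∈ (box ρ : Finset (Fin 3 → ℤ)), ‖u‖⁻¹ := by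
    rw [Finset.sum_product]
    exact Finset.sum_congr rfl fun u _ => by rw [Finset.sum_ite_eq', if_pos hzero]
  have haxis' : ∑ q ∈ box ρ ×ˢ box ρ, (if q.1 = (0 : Fin 3 → ℤ) then ‖(q.2 : Fin 3 → ℤ)‖⁻¹ else 0)
      = ∑ u ∈ (box ρ : Finset (Fin 3 → ℤ)), ‖u‖⁻¹ := by
    rw [Finset.sum_product_right]
    exact Finset.sum_congr rfl fun u _ => by rw [Finset.sum_ite_eq', if_pos hzero]
  refine (Finset.sum_le_sum fun q _ => hterm q).trans ?_
  rw [Finset.sum_add_distrib, Finset.sum_add_distrib, haxis, haxis', ← Finset.sum_filter]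
  have hparallel := sum_parallelPairs_le ρ
  rw [parallelPairs] at hparallel
  linarith [sum_inv_norm_le ρ]

/-- The three summands are responsible for vanishing, parallel and transversal pairs. -/
lemma volume_twoSlabs_realVec_le {P t : ℝ} (hP : 0 ≤ P) (ht : 0 ≤ t)
    (q : (Fin 3 → ℤ) × (Fin 3 → ℤ)) :
    volume (twoSlabs P t (realVec q.1) (realVec q.2))
      ≤ ENNReal.ofReal ((if q = 0 then 8 * P ^ 3 else 0)
        + 8 * P ^ 2 * t * (if q.1 ⨯₃ q.2 = 0 then (max ‖q.1‖ ‖q.2‖)⁻¹ else 0)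
        + 24 * t ^ 2 * P * ‖q.1 ⨯₃ q.2‖⁻¹) := by
  obtain ⟨u, v⟩ := q
  have hslab : ∀ z : Fin 3 → ℤ, ‖z‖ = max ‖u‖ ‖v‖ → (u, v) ≠ 0 →
      (∀ w ∈ twoSlabs P t (realVec u) (realVec v), |w ⬝ᵥ realVec z| ≤ t) →
      volume (twoSlabs P t (realVec u) (realVec v))
        ≤ ENNReal.ofReal (8 * P ^ 2 * t * (max ‖u‖ ‖v‖)⁻¹) := fun z hz hne hsub => by
    have hz0 : z ≠ 0 := by
      rwa [← norm_ne_zero_iff, hz, ← Prod.norm_mk, norm_ne_zero_iff]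
    have hsub' : twoSlabs P t (realVec u) (realVec v)
        ⊆ {w | ‖w‖ ≤ P ∧ |w ⬝ᵥ realVec z| ≤ t} := fun w hw => ⟨hw.1, hsub w hw⟩
    refine (measure_mono hsub').trans
      ((volume_slab_le (realVec_ne_zero hz0) hP ht).trans_eq ?_)
    rw [norm_realVec, hz, Fintype.card_fin]
    ring_nf
  simp only
  by_cases hcross : u ⨯₃ v = 0
  · rw [if_pos hcross, hcross, norm_zero, inv_zero, mul_zero, add_zero]
    by_cases hq : (u, v) = 0
    · have hcube : twoSlabs P t (realVec u) (realVec v) ⊆ Metric.closedBall 0 P :=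
        fun w hw => mem_closedBall_zero_iff.2 hw.1
      refine (measure_mono hcube).trans ?_
      obtain ⟨rfl, rfl⟩ := Prod.mk_eq_zero.1 hq
      rw [Real.volume_pi_closedBall _ hP, if_pos hq, Fintype.card_fin, norm_zero, max_self,
        inv_zero]
      exact ENNReal.ofReal_le_ofReal (by ring_nf; rfl)
    · rw [if_neg hq, zero_add]
      rcases le_total ‖u‖ ‖v‖ with h | h
      · exact hslab v (max_eq_right h).symm hq fun w hw => hw.2.2
      · exact hslab u (max_eq_left h).symm hq fun w hw => hw.2.1
  · have hcross' : realVec u ⨯₃ realVec v ≠ 0 := realVec_cross u v ▸ realVec_ne_zero hcross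
    refine (volume_twoSlabs_le hcross' hP ht).trans (ENNReal.ofReal_le_ofReal ?_)
    rw [← realVec_cross, norm_realVec, if_neg hcross, mul_zero, add_zero, div_eq_mul_inv]
    exact le_add_of_nonneg_left (by split_ifs <;> positivity)

lemma sum_volume_twoSlabs_le (ρ : ℕ) {P t K : ℝ} (hP : 0 ≤ P) (ht : 0 ≤ t)
    (hPK : P ≤ K * ρ ^ 2) :
    ∑ u ∈ box ρ, ∑ v ∈ box ρ, volume (twoSlabs P t (realVec u : Fin 3 → ℝ) (realVec v))
      ≤ ENNReal.ofReal ((8 * K ^ 2 + 2912 * t * K + 151632 * t ^ 2) * P * (ρ : ℝ) ^ 4) := by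
  rw [← Finset.sum_product' (f := fun u v => volume (twoSlabs P t (realVec u) (realVec v)))]
  refine (Finset.sum_le_sum fun q _ => volume_twoSlabs_realVec_le hP ht q).trans ?_
  rw [← ENNReal.ofReal_sum_of_nonneg fun q _ => by
    have : 0 ≤ if q.1 ⨯₃ q.2 = 0 then (max ‖q.1‖ ‖q.2‖)⁻¹ else 0 := by split_ifs <;> positivity
    have : 0 ≤ if q = 0 then 8 * P ^ 3 else 0 := by split_ifs <;> positivity
    positivity]
  refine ENNReal.ofReal_le_ofReal ?_
  have hzero : (0 : (Fin 3 → ℤ) × (Fin 3 → ℤ)) ∈ box ρ ×ˢ box ρ := by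
    simp [mem_box]
  have hcross : ∑ q ∈ box ρ ×ˢ box ρ, ‖q.1 ⨯₃ q.2‖⁻¹ ≤ 6318 * (ρ : ℝ) ^ 4 := by
    rw [Finset.sum_product]
    exact sum_inv_norm_cross_le ρ
  have hPK2 : P ^ 2 ≤ (K * ρ ^ 2) ^ 2 := by gcongr
  calc _ = 8 * P ^ 3 + 8 * P ^ 2 * t * ∑ q ∈ box ρ ×ˢ box ρ,
            (if q.1 ⨯₃ q.2 = 0 then (max ‖q.1‖ ‖q.2‖)⁻¹ else 0)
          + 24 * t ^ 2 * P * ∑ q ∈ box ρ ×ˢ box ρ, ‖q.1 ⨯₃ q.2‖⁻¹ := by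
        rw [Finset.sum_add_distrib, Finset.sum_add_distrib, Finset.sum_ite_eq', if_pos hzero,
          Finset.mul_sum, Finset.mul_sum]
    _ ≤ 8 * P ^ 3 + 8 * P ^ 2 * t * (364 * ρ ^ 2) + 24 * t ^ 2 * P * (6318 * ρ ^ 4) := by
        gcongr
        exact sum_inv_max_norm_of_cross_eq_zero_le ρ
    _ = 8 * P * P ^ 2 + 2912 * P * t * ρ ^ 2 * P + 151632 * t ^ 2 * P * ρ ^ 4 := by ring
    _ ≤ 8 * P * (K * ρ ^ 2) ^ 2 + 2912 * P * t * ρ ^ 2 * (K * ρ ^ 2)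
          + 151632 * t ^ 2 * P * ρ ^ 4 := by gcongr
    _ = _ := by ring

section Incidence

open Classical in
lemma sum_indicator_one_eq_card {α ι : Type*} (s : Finset ι) (T : ι → Set α) (x : α) :
    ∑ i ∈ s, (T i).indicator (1 : α → ℝ≥0∞) x = ({i ∈ s | x ∈ T i}.card : ℝ≥0∞) := by
  simp only [indicator_apply, Pi.one_apply, Finset.sum_boole]

lemma sum_measure_inter_eq_lintegral_sq {α ι : Type*} [MeasurableSpace α] (μ : Measure α)
    {s : Finset ι} {T : ι → Set α} (hT : ∀ i ∈ s, MeasurableSet (T i)) :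
    ∑ i ∈ s, ∑ j ∈ s, μ (T i ∩ T j)
      = ∫⁻ x, (∑ i ∈ s, (T i).indicator (1 : α → ℝ≥0∞) x) ^ 2 ∂μ := by
  have hmeas : ∀ i ∈ s, ∀ j ∈ s, Measurable fun x => (T i ∩ T j).indicator (1 : α → ℝ≥0∞) x :=
    fun i hi j hj => measurable_one.indicator ((hT i hi).inter (hT j hj))
  have hsq : ∀ x, (∑ i ∈ s, (T i).indicator (1 : α → ℝ≥0∞) x) ^ 2
      = ∑ i ∈ s, ∑ j ∈ s, (T i ∩ T j).indicator (1 : α → ℝ≥0∞) x := fun x => by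
    simp only [sq, Finset.sum_mul_sum, inter_indicator_one, Pi.mul_apply]
  simp only [hsq]
  rw [lintegral_finsetSum _ fun i hi => Finset.measurable_fun_sum _ (hmeas i hi)]
  refine Finset.sum_congr rfl fun i hi => ?_
  rw [lintegral_finsetSum _ (hmeas i hi)]
  exact Finset.sum_congr rfl fun j hj =>
    (lintegral_indicator_one ((hT i hi).inter (hT j hj))).symm

lemma mul_le_mul_sq_add_inv_mul_sq {a : ℝ≥0∞} (ha : a ≠ 0) (ha' : a ≠ ⊤) (s t : ℝ≥0∞) :
    s * t ≤ a * s ^ 2 + a⁻¹ * t ^ 2 := by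
  rcases le_total t (a * s) with h | h
  · calc s * t ≤ s * (a * s) := by gcongr
      _ = a * s ^ 2 := by ring
      _ ≤ _ := le_self_add
  · calc s * t ≤ a⁻¹ * t * t := by
          gcongr
          exact (ENNReal.mul_le_iff_le_inv ha ha').1 h
      _ = a⁻¹ * t ^ 2 := by ring
      _ ≤ _ := le_add_self

open Classical in
lemma sum_measure_le_of_card_le_mul {α ι κ ζ : Type*} [MeasurableSpace α] (μ : Measure α)
    {Z : Finset ζ} {I : Finset ι} {J : Finset κ} {W : ζ → Set α} {T : ι → Set α} {U : κ → Set α}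
    (hW : ∀ z ∈ Z, MeasurableSet (W z)) (hT : ∀ i ∈ I, MeasurableSet (T i))
    (hU : ∀ j ∈ J, MeasurableSet (U j))
    (hcard : ∀ x, {z ∈ Z | x ∈ W z}.card ≤ {i ∈ I | x ∈ T i}.card * {j ∈ J | x ∈ U j}.card)
    {a : ℝ≥0∞} (ha : a ≠ 0) (ha' : a ≠ ⊤) :
    ∑ z ∈ Z, μ (W z) ≤ a * ∑ i ∈ I, ∑ i' ∈ I, μ (T i ∩ T i')
      + a⁻¹ * ∑ j ∈ J, ∑ j' ∈ J, μ (U j ∩ U j') := by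
  have hmeas : Measurable fun x => ∑ i ∈ I, (T i).indicator (1 : α → ℝ≥0∞) x :=
    Finset.measurable_fun_sum _ fun i hi => measurable_one.indicator (hT i hi)
  calc ∑ z ∈ Z, μ (W z) = ∫⁻ x, ∑ z ∈ Z, (W z).indicator (1 : α → ℝ≥0∞) x ∂μ := by
        rw [lintegral_finsetSum _ fun z hz => measurable_one.indicator (hW z hz)]
        exact Finset.sum_congr rfl fun z hz => (lintegral_indicator_one (hW z hz)).symm
    _ ≤ ∫⁻ x, (a * (∑ i ∈ I, (T i).indicator (1 : α → ℝ≥0∞) x) ^ 2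
          + a⁻¹ * (∑ j ∈ J, (U j).indicator (1 : α → ℝ≥0∞) x) ^ 2) ∂μ := by
        refine lintegral_mono fun x => le_trans ?_ (mul_le_mul_sq_add_inv_mul_sq ha ha' _ _)
        simp only [sum_indicator_one_eq_card]
        exact_mod_cast hcard x
    _ = _ := by
        rw [lintegral_add_left ((hmeas.pow_const 2).const_mul a), lintegral_const_mul' _ _ ha',
          lintegral_const_mul' _ _ (ENNReal.inv_ne_top.2 ha),
          sum_measure_inter_eq_lintegral_sq μ hT, sum_measure_inter_eq_lintegral_sq μ hU]

end Incidence

/-! ### Midpoint estimates and bundles of tubes -/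

/-- The region of `ℝ³` in which the differential estimates hold. -/
def outerBox : Set (Fin 3 → ℝ) := Icc ![-1, -1, 1 / 4] ![1, 1, 1]

/-- The region containing the rescaled lattice points that are counted. -/
def innerBox : Set (Fin 3 → ℝ) := Icc ![-(2 / 5), -(2 / 5), 1 / 2] ![2 / 5, 2 / 5, 3 / 5]

lemma mem_outerBox {y : Fin 3 → ℝ} : y ∈ outerBox ↔
    (-1 ≤ y 0 ∧ y 0 ≤ 1) ∧ (-1 ≤ y 1 ∧ y 1 ≤ 1) ∧ (1 / 4 ≤ y 2 ∧ y 2 ≤ 1) := by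
  simp only [outerBox, mem_Icc, Pi.le_def, Fin.forall_fin_succ, IsEmpty.forall_iff, and_true]
  exact ⟨fun ⟨⟨h₀, h₁, h₂⟩, h₀', h₁', h₂'⟩ => ⟨⟨h₀, h₀'⟩, ⟨h₁, h₁'⟩, h₂, h₂'⟩,
    fun ⟨⟨h₀, h₀'⟩, ⟨h₁, h₁'⟩, h₂, h₂'⟩ => ⟨⟨h₀, h₁, h₂⟩, h₀', h₁', h₂'⟩⟩

lemma mem_innerBox {y : Fin 3 → ℝ} : y ∈ innerBox ↔ (-(2 / 5) ≤ y 0 ∧ y 0 ≤ 2 / 5) ∧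
    (-(2 / 5) ≤ y 1 ∧ y 1 ≤ 2 / 5) ∧ (1 / 2 ≤ y 2 ∧ y 2 ≤ 3 / 5) := by
  simp only [innerBox, mem_Icc, Pi.le_def, Fin.forall_fin_succ, IsEmpty.forall_iff, and_true]
  exact ⟨fun ⟨⟨h₀, h₁, h₂⟩, h₀', h₁', h₂'⟩ => ⟨⟨h₀, h₀'⟩, ⟨h₁, h₁'⟩, h₂, h₂'⟩,
    fun ⟨⟨h₀, h₀'⟩, ⟨h₁, h₁'⟩, h₂, h₂'⟩ => ⟨⟨h₀, h₁, h₂⟩, h₀', h₁', h₂'⟩⟩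

lemma isCompact_outerBox : IsCompact outerBox := isCompact_Icc

lemma norm_le_one_of_mem_outerBox {y : Fin 3 → ℝ} (hy : y ∈ outerBox) : ‖y‖ ≤ 1 := by
  obtain ⟨h₀, h₁, h₂, h₂'⟩ := mem_outerBox.1 hy
  have h₂'' : -1 ≤ y 2 := by linarith
  refine (pi_norm_le_iff_of_nonneg zero_le_one).2 fun i => ?_
  fin_cases i
  exacts [abs_le.2 h₀, abs_le.2 h₁, abs_le.2 ⟨h₂'', h₂'⟩]

lemma mem_outerBox_of_norm_sub_le {p y : Fin 3 → ℝ} (hp : p ∈ innerBox) (h : ‖y - p‖ ≤ 1 / 4) :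
    y ∈ outerBox := by
  have habs : ∀ i, |y i - p i| ≤ 1 / 4 := fun i => (norm_le_pi_norm (y - p) i).trans h
  have h₀ := abs_le.1 (habs 0)
  have h₁ := abs_le.1 (habs 1)
  have h₂ := abs_le.1 (habs 2)
  rw [mem_innerBox] at hp
  rw [mem_outerBox]
  refine ⟨⟨?_, ?_⟩, ⟨?_, ?_⟩, ?_, ?_⟩ <;> linarith

/-- The properties of a function `q`, homogeneous of degree two with nondegenerate Hessian, that
enter the count: `g` is its gradient and `A` the derivative of `g`. The last two fields say that if
`q (p + η) = q p` then the gradient near the midpoint is almost orthogonal to `η`, and that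
two such points `p`, `p'` for the same `η`, with both midpoints near `y`, differ by a vector almost
orthogonal to `A y η`. -/
structure MidpointEstimates (q : (Fin 3 → ℝ) → ℝ) (g : (Fin 3 → ℝ) → (Fin 3 → ℝ))
    (A : (Fin 3 → ℝ) → (Fin 3 → ℝ) →L[ℝ] (Fin 3 → ℝ)) (lam M : ℝ) : Prop where
  lam_pos : 0 < lam
  lam_le_one : lam ≤ 1
  one_le : 1 ≤ M
  continuousOn_hess : ContinuousOn A outerBox
  continuousOn_grad : ContinuousOn g outerBox
  norm_grad_le : ∀ y ∈ outerBox, ‖g y‖ ≤ M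
  norm_hess_le : ∀ y ∈ outerBox, ∀ h, ‖A y h‖ ≤ M * ‖h‖
  le_norm_hess : ∀ y ∈ outerBox, ∀ h, lam * ‖h‖ ≤ ‖A y h‖
  /-- Euler's relation for the gradient, which is homogeneous of degree one. -/
  hess_dotProduct_self : ∀ y ∈ outerBox, ∀ h, A y h ⬝ᵥ y = g y ⬝ᵥ h
  volume_le_volume_image_grad : ∀ s ⊆ outerBox, MeasurableSet s →
    ENNReal.ofReal lam * volume s ≤ volume (g '' s)
  abs_grad_dotProduct_le : ∀ p ∈ innerBox, ∀ y η : Fin 3 → ℝ, ∀ δ : ℝ, δ ≤ 1 / 16 → ‖η‖ ≤ 1 / 16 →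
    ‖η‖ ^ 2 ≤ δ → ‖y - (p + (1 / 2 : ℝ) • η)‖ ≤ δ → q (p + η) = q p → |g y ⬝ᵥ η| ≤ M * δ * ‖η‖
  abs_hess_dotProduct_sub_le : ∀ p ∈ innerBox, ∀ p' ∈ innerBox, ∀ y η : Fin 3 → ℝ, ∀ δ : ℝ,
    δ ≤ 1 / 16 → ‖η‖ ≤ 1 / 16 → ‖η‖ ^ 2 ≤ δ → ‖y - (p + (1 / 2 : ℝ) • η)‖ ≤ δ →
    ‖y - (p' + (1 / 2 : ℝ) • η)‖ ≤ δ → q (p + η) = q p → q (p' + η) = q p' →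
    |A y η ⬝ᵥ (p' - p)| ≤ M * δ ^ 2 * ‖η‖

section TubeBundle

variable {X ι : Type*} [Fintype ι]

/-- The tubes of width `η` around the vectors `a y`, fibred over `y ∈ L`. -/
def tubeBundle (a : X → ι → ℝ) (L : Set X) (η : ℝ) : Set (X × (ι → ℝ)) :=
  {p | p.1 ∈ L ∧ p.2 ∈ tube (a p.1) η}

lemma isCompact_tubeBundle [TopologicalSpace X] {a : X → ι → ℝ} {L : Set X} (hL : IsCompact L)
    (ha : ContinuousOn a L) (η : ℝ) : IsCompact (tubeBundle a L η) := by
  have himage : tubeBundle a L η = (fun p : X × ℝ × (ι → ℝ) => (p.1, p.2.1 • a p.1 + p.2.2))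
      '' (L ×ˢ (Icc (1 : ℝ) 2 ×ˢ Metric.closedBall (0 : ι → ℝ) η)) := by
    ext ⟨y, w⟩
    simp only [tubeBundle, tube, mem_ofPred_eq, mem_image, mem_prod, Prod.exists,
      mem_closedBall_zero_iff, Prod.mk.injEq]
    constructor
    · rintro ⟨hy, s, hs, hw⟩
      exact ⟨y, s, w - s • a y, ⟨hy, hs, hw⟩, rfl, by abel⟩
    · rintro ⟨y', s, e, ⟨hy, hs, he⟩, rfl, rfl⟩
      exact ⟨hy, s, hs, by rwa [add_sub_cancel_left]⟩
  rw [himage]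
  refine (hL.prod (isCompact_Icc.prod (isCompact_closedBall 0 η))).image_of_continuousOn ?_
  have hfst := ha.comp continuousOn_fst fun (p : X × ℝ × (ι → ℝ))
    (hp : p ∈ L ×ˢ (Icc (1 : ℝ) 2 ×ˢ Metric.closedBall (0 : ι → ℝ) η)) => hp.1
  exact continuousOn_fst.prodMk ((continuousOn_snd.fst.smul hfst).add continuousOn_snd.snd)

variable [Nonempty ι] [MeasurableSpace X] {μ : Measure X} {a : X → ι → ℝ} {L : Set X} {η : ℝ}

lemma le_measure_tubeBundle (hL : MeasurableSet L)
    (hT : MeasurableSet (tubeBundle a L η)) (hη : 0 ≤ η) {lo : ℝ} (hlo : ∀ y ∈ L, lo ≤ ‖a y‖) :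
    ENNReal.ofReal (lo * (2 * η) ^ (Fintype.card ι - 1)) * μ L
      ≤ μ.prod volume (tubeBundle a L η) := by
  rw [Measure.prod_apply hT, ← lintegral_indicator_const hL]
  refine lintegral_mono fun y => indicator_apply_le' (fun hy => ?_) fun _ => zero_le
  have hfiber : Prod.mk y ⁻¹' tubeBundle a L η = tube (a y) η := ext fun w => and_iff_right hy
  rw [hfiber]
  exact (ENNReal.ofReal_le_ofReal (by gcongr; exact hlo y hy)).trans (le_volume_tube _ hη)

lemma measure_tubeBundle_le (hL : MeasurableSet L) (hT : MeasurableSet (tubeBundle a L η))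
    (hη : 0 < η) {hi : ℝ} (hηa : ∀ y ∈ L, η ≤ ‖a y‖) (hhi : ∀ y ∈ L, ‖a y‖ ≤ hi) :
    μ.prod volume (tubeBundle a L η)
      ≤ ENNReal.ofReal (6 * hi * (4 * η) ^ (Fintype.card ι - 1)) * μ L := by
  rw [Measure.prod_apply hT, ← lintegral_indicator_const hL]
  refine lintegral_mono fun y => ?_
  by_cases hy : y ∈ L
  · have hfiber : Prod.mk y ⁻¹' tubeBundle a L η = tube (a y) η := ext fun w => and_iff_right hy
    have hne : a y ≠ 0 := norm_pos_iff.1 (hη.trans_le (hηa y hy))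
    rw [indicator_of_mem hy, hfiber]
    exact (volume_tube_le hne hη.le (hηa y hy)).trans
      (ENNReal.ofReal_le_ofReal (by gcongr; exact hhi y hy))
  · have hfiber : Prod.mk y ⁻¹' tubeBundle a L η = ∅ :=
      eq_empty_of_forall_notMem fun w hw => hy hw.1
    rw [hfiber, measure_empty]
    exact zero_le

end TubeBundle

/-- The points of `outerBox` at which the gradient `g` is orthogonal to `h` up to an error `t`. -/
def nearTangent (g : (Fin 3 → ℝ) → (Fin 3 → ℝ)) (h : Fin 3 → ℝ) (t : ℝ) : Set (Fin 3 → ℝ) :=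
  {y | y ∈ outerBox ∧ |g y ⬝ᵥ h| ≤ t}

lemma continuous_abs_dotProduct {ι : Type*} [Fintype ι] (u : ι → ℝ) :
    Continuous fun w : ι → ℝ => |w ⬝ᵥ u| :=
  (continuous_id.dotProduct continuous_const).abs

section NearTangent

variable {q : (Fin 3 → ℝ) → ℝ} {g : (Fin 3 → ℝ) → (Fin 3 → ℝ)}
  {A : (Fin 3 → ℝ) → (Fin 3 → ℝ) →L[ℝ] (Fin 3 → ℝ)} {lam M : ℝ}

lemma isCompact_nearTangent (hg : ContinuousOn g outerBox) (h : Fin 3 → ℝ) (t : ℝ) :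
    IsCompact (nearTangent g h t) :=
  isCompact_outerBox.of_isClosed_subset
    (((continuous_abs_dotProduct h).comp_continuousOn hg).preimage_isClosed_of_isClosed
      isCompact_outerBox.isClosed isClosed_Iic) fun _ hy => hy.1

lemma MidpointEstimates.volume_nearTangent_le (D : MidpointEstimates q g A lam M) {h : Fin 3 → ℝ}
    (hh : h ≠ 0) {t : ℝ} (ht : 0 ≤ t) :
    volume (nearTangent g h t) ≤ ENNReal.ofReal (8 * M ^ 2 * t / (lam * ‖h‖)) := by
  have himage : g '' nearTangent g h t ⊆ {w | ‖w‖ ≤ M ∧ |w ⬝ᵥ h| ≤ t} := by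
    rintro - ⟨y, ⟨hy, hyt⟩, rfl⟩
    exact ⟨D.norm_grad_le y hy, hyt⟩
  have hvol : ENNReal.ofReal lam * volume (nearTangent g h t)
      ≤ ENNReal.ofReal (2 * t * (2 * M) ^ 2 / ‖h‖) :=
    (D.volume_le_volume_image_grad _ (fun _ hy => hy.1)
      (isCompact_nearTangent D.continuousOn_grad h t).measurableSet).trans
    ((measure_mono himage).trans (volume_slab_le hh (zero_le_one.trans D.one_le) ht))
  rw [mul_comm, ← ENNReal.le_div_iff_mul_le (Or.inl (ENNReal.ofReal_pos.2 D.lam_pos).ne')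
    (Or.inl ENNReal.ofReal_ne_top), ← ENNReal.ofReal_div_of_pos D.lam_pos] at hvol
  refine hvol.trans_eq (congrArg ENNReal.ofReal ?_)
  rw [div_div, mul_comm ‖h‖]
  ring

end NearTangent

/-- The pairs `(y, w)` with `lo ≤ ‖w‖ ≤ hi` and `w` orthogonal to `y ∈ outerBox` up to an
error `t`. -/
def almostOrth (lo hi t : ℝ) : Set ((Fin 3 → ℝ) × (Fin 3 → ℝ)) :=
  {p | p.1 ∈ outerBox ∧ lo ≤ ‖p.2‖ ∧ ‖p.2‖ ≤ hi ∧ |p.2 ⬝ᵥ p.1| ≤ t}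

lemma measurableSet_almostOrth (lo hi t : ℝ) : MeasurableSet (almostOrth lo hi t) := by
  have hnorm : Continuous fun p : (Fin 3 → ℝ) × (Fin 3 → ℝ) => ‖p.2‖ := continuous_snd.norm
  have hdot : Continuous fun p : (Fin 3 → ℝ) × (Fin 3 → ℝ) => |p.2 ⬝ᵥ p.1| :=
    (continuous_snd.dotProduct continuous_fst).abs
  exact ((isCompact_outerBox.isClosed.preimage continuous_fst).inter
    ((isClosed_le continuous_const hnorm).inter ((isClosed_le hnorm continuous_const).inter
      (isClosed_le hdot continuous_const)))).measurableSet

lemma measurableSet_abs_snd_dotProduct_le (u : Fin 3 → ℝ) (C : ℝ) :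
    MeasurableSet {p : (Fin 3 → ℝ) × (Fin 3 → ℝ) | |p.2 ⬝ᵥ u| ≤ C} :=
  (isClosed_le ((continuous_abs_dotProduct u).comp continuous_snd) continuous_const).measurableSet

lemma measurableSet_twoSlabs (P t : ℝ) (u v : Fin 3 → ℝ) : MeasurableSet (twoSlabs P t u v) :=
  ((isClosed_le continuous_norm continuous_const).inter
    ((isClosed_le (continuous_abs_dotProduct u) continuous_const).inter
      (isClosed_le (continuous_abs_dotProduct v) continuous_const))).measurableSet

lemma volume_almostOrth_inter_slabs_le {lo hi t C : ℝ} (hlo : 0 < lo) (ht : 0 ≤ t)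
    (u v : Fin 3 → ℝ) :
    volume (({p | |p.2 ⬝ᵥ u| ≤ C} ∩ {p | |p.2 ⬝ᵥ v| ≤ C}) ∩ almostOrth lo hi t)
      ≤ ENNReal.ofReal (8 * t / lo) * volume (twoSlabs hi C u v) := by
  rw [Measure.volume_eq_prod, Measure.prod_apply_symm
      (((measurableSet_abs_snd_dotProduct_le u C).inter
        (measurableSet_abs_snd_dotProduct_le v C)).inter (measurableSet_almostOrth lo hi t)),
    ← lintegral_indicator_const (measurableSet_twoSlabs hi C u v)]
  refine lintegral_mono fun w => ?_
  by_cases hw : w ∈ twoSlabs hi C u v ∧ lo ≤ ‖w‖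
  · rw [indicator_of_mem hw.1]
    have hslab : (fun y => (y, w)) ⁻¹'
        (({p | |p.2 ⬝ᵥ u| ≤ C} ∩ {p | |p.2 ⬝ᵥ v| ≤ C}) ∩ almostOrth lo hi t)
        ⊆ {y | ‖y‖ ≤ 1 ∧ |y ⬝ᵥ w| ≤ t} := by
      rintro y ⟨-, hy, -, -, hyw⟩
      exact ⟨norm_le_one_of_mem_outerBox hy, by rwa [dotProduct_comm]⟩
    refine (measure_mono hslab).trans ((volume_slab_le (norm_pos_iff.1 (hlo.trans_le hw.2))
      zero_le_one ht).trans (ENNReal.ofReal_le_ofReal ?_))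
    calc 2 * t * (2 * 1) ^ (Fintype.card (Fin 3) - 1) / ‖w‖ = 8 * t / ‖w‖ := by
          rw [Fintype.card_fin]
          ring
      _ ≤ 8 * t / lo := by
          gcongr
          exact hw.2
  · have hempty : (fun y => (y, w)) ⁻¹'
        (({p | |p.2 ⬝ᵥ u| ≤ C} ∩ {p | |p.2 ⬝ᵥ v| ≤ C}) ∩ almostOrth lo hi t) = ∅ :=
      eq_empty_of_forall_notMem fun y hy => hw ⟨⟨hy.2.2.2.1, hy.1.1, hy.1.2⟩, hy.2.2.1⟩
    rw [hempty, measure_empty]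
    exact zero_le

lemma norm_cross_le (a b : Fin 3 → ℝ) : ‖a ⨯₃ b‖ ≤ 2 * ‖a‖ * ‖b‖ := by
  have hmul : ∀ i j, |a i * b j| ≤ ‖a‖ * ‖b‖ := fun i j => by
    rw [abs_mul]
    exact mul_le_mul (norm_le_pi_norm a i) (norm_le_pi_norm b j) (abs_nonneg _) (norm_nonneg _)
  have hsub : ∀ i j k l, |a i * b j - a k * b l| ≤ 2 * ‖a‖ * ‖b‖ := fun i j k l =>
    (abs_sub _ _).trans (by linarith [hmul i j, hmul k l])
  refine (pi_norm_le_iff_of_nonneg (by positivity)).2 fun i => ?_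
  rw [cross_apply]
  fin_cases i
  exacts [hsub _ _ _ _, hsub _ _ _ _, hsub _ _ _ _]

/-! ### Level pairs on one dyadic scale -/

section Tube

variable {ι : Type*} [Fintype ι] {a w : ι → ℝ} {η : ℝ}

lemma norm_sub_le_norm_of_mem_tube (hw : w ∈ tube a η) : ‖a‖ - η ≤ ‖w‖ := by
  obtain ⟨s, hs, hws⟩ := hw
  have hsa : ‖a‖ ≤ ‖s • a‖ := by
    rw [norm_smul, Real.norm_of_nonneg (zero_le_one.trans hs.1)]
    exact le_mul_of_one_le_left (norm_nonneg a) hs.1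
  linarith [norm_sub_norm_le (s • a) w, norm_sub_rev w (s • a)]

lemma norm_le_of_mem_tube (hw : w ∈ tube a η) : ‖w‖ ≤ 2 * ‖a‖ + η := by
  obtain ⟨s, hs, hws⟩ := hw
  have hsa : ‖s • a‖ ≤ 2 * ‖a‖ := by
    rw [norm_smul, Real.norm_of_nonneg (zero_le_one.trans hs.1)]
    exact mul_le_mul_of_nonneg_right hs.2 (norm_nonneg a)
  linarith [norm_sub_norm_le w (s • a)]

lemma abs_dotProduct_le_of_mem_tube (hw : w ∈ tube a η) (u : ι → ℝ) :
    |w ⬝ᵥ u| ≤ 2 * |a ⬝ᵥ u| + Fintype.card ι * (η * ‖u‖) := by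
  obtain ⟨s, hs, hws⟩ := hw
  have hsplit : w ⬝ᵥ u = s * (a ⬝ᵥ u) + (w - s • a) ⬝ᵥ u := by
    rw [sub_dotProduct, smul_dotProduct, smul_eq_mul, add_sub_cancel]
  calc |w ⬝ᵥ u| ≤ |s * (a ⬝ᵥ u)| + |(w - s • a) ⬝ᵥ u| := hsplit ▸ abs_add_le _ _
    _ ≤ s * |a ⬝ᵥ u| + Fintype.card ι * (‖w - s • a‖ * ‖u‖) := by
        rw [abs_mul, abs_of_nonneg (zero_le_one.trans hs.1)]
        gcongr
        exact abs_dotProduct_le _ _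
    _ ≤ 2 * |a ⬝ᵥ u| + Fintype.card ι * (η * ‖u‖) := by
        gcongr
        exact hs.2

end Tube

/-- The relations between the scales in the count of pairs `(k, h)` with `‖k‖` about `R` and
`‖h‖` about `H = x ^ 2`: the dual scale is `r`, and `R = r ^ 2 * H`. -/
structure Scales (lam r x R : ℝ) (H : ℕ) : Prop where
  sq_eq : x ^ 2 = H
  radius_eq : R = r ^ 2 * x ^ 2
  sixteen_le : 16 ≤ r
  two_le_mul : 2 ≤ lam * r
  one_le : 1 ≤ x
  le_dual : x ≤ r

/-- The integer vectors of norm between `H` and `2 * H`. -/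
def dyadicBox (H : ℕ) : Finset (Fin 3 → ℤ) := {h ∈ box (2 * H) | (H : ℝ) ≤ ‖h‖}

lemma mem_dyadicBox {H : ℕ} {h : Fin 3 → ℤ} : h ∈ dyadicBox H ↔ (H : ℝ) ≤ ‖h‖ ∧ ‖h‖ ≤ 2 * H := by
  rw [dyadicBox, Finset.mem_filter, mem_box_iff_norm_le, and_comm]
  push_cast
  rfl

/-- The pair `z = (k, h)` has `‖h‖` about `H`, and the functions `q` takes the same value at the
rescaled points `k / R` and `(k + h) / R`. -/
structure LevelPair (q : (Fin 3 → ℝ) → ℝ) (R : ℝ) (H : ℕ) (z : (Fin 3 → ℤ) × (Fin 3 → ℤ)) :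
    Prop where
  mem_dyadicBox : z.2 ∈ dyadicBox H
  mem_innerBox : R⁻¹ • realVec z.1 ∈ innerBox
  apply_eq : q (R⁻¹ • realVec (z.1 + z.2)) = q (R⁻¹ • realVec z.1)

/-- The midpoint of the rescaled points `k / R` and `(k + h) / R` of a pair `z = (k, h)`. -/
def rescaledMidpoint (R : ℝ) (z : (Fin 3 → ℤ) × (Fin 3 → ℤ)) : Fin 3 → ℝ :=
  R⁻¹ • realVec z.1 + (1 / 2 : ℝ) • R⁻¹ • realVec z.2

lemma norm_inv_smul_realVec {ι : Type*} [Fintype ι] {R : ℝ} (hR : 0 ≤ R) (h : ι → ℤ) :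
    ‖R⁻¹ • realVec h‖ = ‖h‖ / R := by
  rw [norm_smul, norm_realVec, norm_inv, Real.norm_of_nonneg hR, inv_mul_eq_div]

namespace Scales

variable {lam r x R : ℝ} {H : ℕ} (S : Scales lam r x R H)

include S

lemma dual_pos : 0 < r := by linarith [S.sixteen_le]

lemma pos : 0 < x := by linarith [S.one_le]

lemma radius_pos : 0 < R := by
  have := S.dual_pos
  have := S.pos
  rw [S.radius_eq]
  positivity

lemma one_le_natCast : (1 : ℝ) ≤ H := S.sq_eq ▸ one_le_pow₀ S.one_le

lemma inv_dual_mul_sq_le : (r * x ^ 2)⁻¹ ≤ 1 / 16 := by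
  rw [← one_div]
  refine one_div_le_one_div_of_le (by norm_num) ?_
  calc (16 : ℝ) ≤ r * 1 := by linarith [S.sixteen_le]
    _ ≤ r * x ^ 2 := mul_le_mul_of_nonneg_left (one_le_pow₀ S.one_le) S.dual_pos.le

lemma inv_dual_le_mul (hlam : 0 < lam) : r⁻¹ ≤ lam * H := by
  have hr := S.dual_pos
  rw [inv_le_iff_one_le_mul₀ hr]
  calc (1 : ℝ) ≤ (lam * r) * 1 := by linarith [S.two_le_mul]
    _ ≤ (lam * r) * H := by
        gcongr
        exact S.one_le_natCast
    _ = lam * H * r := by ring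

variable {h : Fin 3 → ℤ} (hh : h ∈ dyadicBox H)

include hh

lemma realVec_ne_zero : realVec h ≠ 0 := by
  rw [← norm_pos_iff, norm_realVec]
  linarith [(mem_dyadicBox.1 hh).1, S.one_le_natCast]

lemma norm_inv_smul_realVec_le : ‖R⁻¹ • realVec h‖ ≤ 2 / r ^ 2 := by
  have hr := S.dual_pos
  have hx := S.pos
  rw [norm_inv_smul_realVec S.radius_pos.le, div_le_iff₀ S.radius_pos, S.radius_eq]
  refine (mem_dyadicBox.1 hh).2.trans_eq ?_
  rw [← S.sq_eq]
  field_simp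

lemma norm_inv_smul_realVec_le_sixteenth : ‖R⁻¹ • realVec h‖ ≤ 1 / 16 := by
  have hr := S.dual_pos
  refine (S.norm_inv_smul_realVec_le hh).trans ?_
  rw [div_le_div_iff₀ (by positivity) (by norm_num)]
  nlinarith [S.sixteen_le]

lemma sq_norm_inv_smul_realVec_le : ‖R⁻¹ • realVec h‖ ^ 2 ≤ (r * x ^ 2)⁻¹ := by
  have hr := S.dual_pos
  have hx := S.pos
  calc ‖R⁻¹ • realVec h‖ ^ 2 ≤ (2 / r ^ 2) ^ 2 := by
        gcongr
        exact S.norm_inv_smul_realVec_le hh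
    _ = 4 / r * (r * r ^ 2)⁻¹ := by
        field_simp
        norm_num
    _ ≤ 1 * (r * r ^ 2)⁻¹ := by
        gcongr
        exact (div_le_one hr).2 (by linarith [S.sixteen_le])
    _ ≤ (r * x ^ 2)⁻¹ := by
        rw [one_mul]
        gcongr
        exact S.le_dual

end Scales

section OneScale

variable {q : (Fin 3 → ℝ) → ℝ} {g : (Fin 3 → ℝ) → (Fin 3 → ℝ)}
  {A : (Fin 3 → ℝ) → (Fin 3 → ℝ) →L[ℝ] (Fin 3 → ℝ)} {lam M r x R : ℝ} {H : ℕ}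

lemma norm_sub_le_of_norm_sub_rescaledMidpoint_le (S : Scales lam r x R H) {k k' h : Fin 3 → ℤ}
    {y : Fin 3 → ℝ}
    (hy : ‖y - rescaledMidpoint R (k, h)‖ ≤ (r * x ^ 2)⁻¹)
    (hy' : ‖y - rescaledMidpoint R (k', h)‖ ≤ (r * x ^ 2)⁻¹) :
    ‖k' - k‖ ≤ 2 * r := by
  have hr := S.dual_pos
  have hx := S.pos
  have hdiff : R⁻¹ • realVec (k' - k)
      = (y - rescaledMidpoint R (k, h)) - (y - rescaledMidpoint R (k', h)) := by
    rw [realVec_sub, smul_sub, rescaledMidpoint, rescaledMidpoint]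
    abel
  have hnorm : ‖R⁻¹ • realVec (k' - k)‖ ≤ 2 * (r * x ^ 2)⁻¹ := by
    rw [hdiff, two_mul]
    exact (norm_sub_le _ _).trans (add_le_add hy hy')
  rw [norm_inv_smul_realVec S.radius_pos.le, div_le_iff₀ S.radius_pos, S.radius_eq] at hnorm
  refine hnorm.trans_eq ?_
  field_simp

namespace LevelPair

section Single

variable {z : (Fin 3 → ℤ) × (Fin 3 → ℤ)} (hz : LevelPair q R H z)

include hz

lemma apply_add_eq :
    q (R⁻¹ • realVec z.1 + R⁻¹ • realVec z.2) = q (R⁻¹ • realVec z.1) := by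
  rw [← smul_add, ← realVec_add, hz.apply_eq]

lemma mem_outerBox (S : Scales lam r x R H) {y : Fin 3 → ℝ}
    (hy : ‖y - rescaledMidpoint R z‖ ≤ (r * x ^ 2)⁻¹) : y ∈ outerBox := by
  refine mem_outerBox_of_norm_sub_le hz.mem_innerBox ?_
  calc ‖y - R⁻¹ • realVec z.1‖
      = ‖(y - rescaledMidpoint R z) + (1 / 2 : ℝ) • R⁻¹ • realVec z.2‖ := by
        rw [rescaledMidpoint, ← sub_sub, sub_add_cancel]
    _ ≤ (r * x ^ 2)⁻¹ + 1 / 2 * ‖R⁻¹ • realVec z.2‖ := by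
        refine (norm_add_le _ _).trans ?_
        rw [norm_smul (1 / 2 : ℝ), Real.norm_of_nonneg one_half_pos.le]
        gcongr
    _ ≤ 1 / 4 := by
        linarith [S.inv_dual_mul_sq_le, S.norm_inv_smul_realVec_le_sixteenth hz.mem_dyadicBox]

lemma mem_nearTangent (D : MidpointEstimates q g A lam M) (S : Scales lam r x R H)
    {y : Fin 3 → ℝ} (hy : ‖y - rescaledMidpoint R z‖ ≤ (r * x ^ 2)⁻¹) :
    y ∈ nearTangent g (realVec z.2) (2 * M / r) := by
  have hr := S.dual_pos
  have hx := S.pos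
  have hM := D.one_le
  have hgrad := D.abs_grad_dotProduct_le _ hz.mem_innerBox y _ _ S.inv_dual_mul_sq_le
    (S.norm_inv_smul_realVec_le_sixteenth hz.mem_dyadicBox)
    (S.sq_norm_inv_smul_realVec_le hz.mem_dyadicBox) hy hz.apply_add_eq
  rw [dotProduct_smul, smul_eq_mul, abs_mul, abs_of_pos (inv_pos.2 S.radius_pos),
    inv_mul_le_iff₀ S.radius_pos] at hgrad
  refine ⟨hz.mem_outerBox S hy, hgrad.trans ?_⟩
  calc R * (M * (r * x ^ 2)⁻¹ * ‖R⁻¹ • realVec z.2‖)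
      ≤ R * (M * (r * x ^ 2)⁻¹ * (2 / r ^ 2)) := by
        have := S.radius_pos
        gcongr
        exact S.norm_inv_smul_realVec_le hz.mem_dyadicBox
    _ = 2 * M / r := by
        rw [S.radius_eq]
        field_simp

end Single

lemma abs_hess_dotProduct_fst_sub_le (D : MidpointEstimates q g A lam M) (S : Scales lam r x R H)
    {k k' h : Fin 3 → ℤ} (hz : LevelPair q R H (k, h)) (hz' : LevelPair q R H (k', h))
    {y : Fin 3 → ℝ} (hy : ‖y - rescaledMidpoint R (k, h)‖ ≤ (r * x ^ 2)⁻¹)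
    (hy' : ‖y - rescaledMidpoint R (k', h)‖ ≤ (r * x ^ 2)⁻¹) :
    |A y (realVec h) ⬝ᵥ realVec (k' - k)| ≤ 2 * M := by
  have hr := S.dual_pos
  have hx := S.pos
  have hR := S.radius_pos
  have hM := D.one_le
  have hhess := D.abs_hess_dotProduct_sub_le _ hz.mem_innerBox _ hz'.mem_innerBox y _ _
    S.inv_dual_mul_sq_le (S.norm_inv_smul_realVec_le_sixteenth hz.mem_dyadicBox)
    (S.sq_norm_inv_smul_realVec_le hz.mem_dyadicBox) hy hy' hz.apply_add_eq hz'.apply_add_eq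
  rw [← smul_sub, ← realVec_sub, map_smul, smul_dotProduct, dotProduct_smul, smul_eq_mul,
    smul_eq_mul, abs_mul, abs_mul, abs_of_pos (inv_pos.2 hR), inv_mul_le_iff₀ hR,
    inv_mul_le_iff₀ hR] at hhess
  calc |A y (realVec h) ⬝ᵥ realVec (k' - k)|
      ≤ R * (R * (M * (r * x ^ 2)⁻¹ ^ 2 * ‖R⁻¹ • realVec h‖)) := hhess
    _ ≤ R * (R * (M * (r * x ^ 2)⁻¹ ^ 2 * (2 / r ^ 2))) := by
        gcongr
        exact S.norm_inv_smul_realVec_le hz.mem_dyadicBox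
    _ = 2 * M := by
        rw [S.radius_eq]
        field_simp

lemma abs_dotProduct_fst_sub_le (D : MidpointEstimates q g A lam M) (S : Scales lam r x R H)
    {k k' h : Fin 3 → ℤ} (hz : LevelPair q R H (k, h)) (hz' : LevelPair q R H (k', h))
    {y w : Fin 3 → ℝ} (hy : ‖y - rescaledMidpoint R (k, h)‖ ≤ (r * x ^ 2)⁻¹)
    (hy' : ‖y - rescaledMidpoint R (k', h)‖ ≤ (r * x ^ 2)⁻¹)
    (hw : w ∈ tube (A y (realVec h)) r⁻¹) : |w ⬝ᵥ realVec (k' - k)| ≤ 4 * M + 6 := by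
  have hr := S.dual_pos
  have hhess := abs_hess_dotProduct_fst_sub_le D S hz hz' hy hy'
  calc |w ⬝ᵥ realVec (k' - k)|
      ≤ 2 * |A y (realVec h) ⬝ᵥ realVec (k' - k)|
        + Fintype.card (Fin 3) * (r⁻¹ * ‖realVec (k' - k)‖) := abs_dotProduct_le_of_mem_tube hw _
    _ ≤ 2 * (2 * M) + (3 : ℕ) * (r⁻¹ * (2 * r)) := by
        rw [Fintype.card_fin, norm_realVec]
        gcongr
        exact norm_sub_le_of_norm_sub_rescaledMidpoint_le S hy hy'
    _ = 4 * M + 6 := by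
        field_simp
        push_cast
        ring

end LevelPair

/-- The tube bundle of the vectors `A y h`, with `y` in the region where the gradient is almost
orthogonal to `h`. -/
def tangentTube (g : (Fin 3 → ℝ) → (Fin 3 → ℝ)) (A : (Fin 3 → ℝ) → (Fin 3 → ℝ) →L[ℝ] (Fin 3 → ℝ))
    (M r : ℝ) (h : Fin 3 → ℤ) : Set ((Fin 3 → ℝ) × (Fin 3 → ℝ)) :=
  tubeBundle (fun y => A y (realVec h)) (nearTangent g (realVec h) (2 * M / r)) r⁻¹

namespace MidpointEstimates

variable (D : MidpointEstimates q g A lam M)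

include D

lemma continuousOn_hess_apply (h : Fin 3 → ℝ) : ContinuousOn (fun y => A y h) outerBox :=
  D.continuousOn_hess.clm_apply continuousOn_const

lemma measurableSet_tangentTube (r : ℝ) (h : Fin 3 → ℤ) : MeasurableSet (tangentTube g A M r h) :=
  (isCompact_tubeBundle (isCompact_nearTangent D.continuousOn_grad _ _)
    ((D.continuousOn_hess_apply _).mono fun _ hy => hy.1) _).measurableSet

variable (S : Scales lam r x R H) {h : Fin 3 → ℤ} (hh : h ∈ dyadicBox H) {y : Fin 3 → ℝ}
  (hy : y ∈ outerBox)

include hh hy in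
lemma mul_natCast_le_norm_hess : lam * H ≤ ‖A y (realVec h)‖ := by
  have hlam := D.lam_pos
  refine le_trans ?_ (D.le_norm_hess y hy _)
  rw [norm_realVec]
  gcongr
  exact (mem_dyadicBox.1 hh).1

include hh hy in
lemma norm_hess_le_mul_natCast : ‖A y (realVec h)‖ ≤ M * (2 * H) := by
  have hM := D.one_le
  refine (D.norm_hess_le y hy _).trans ?_
  rw [norm_realVec]
  gcongr
  exact (mem_dyadicBox.1 hh).2

section TangentTube

include S hh

lemma tangentTube_subset_almostOrth :
    tangentTube g A M r h ⊆ almostOrth (lam * H / 2) (5 * M * H) (7 * M / r) := by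
  rintro ⟨y, w⟩ ⟨⟨hy, hg⟩, hw⟩
  simp only at hy hg hw
  have hr := S.dual_pos
  have hM := D.one_le
  have hH := S.one_le_natCast
  have hr1 : r⁻¹ ≤ 1 := inv_le_one_of_one_le₀ (by linarith [S.sixteen_le])
  refine ⟨hy, ?_, ?_, ?_⟩
  · have hrinv : r⁻¹ ≤ lam * H / 2 := by
      rw [inv_le_iff_one_le_mul₀ hr]
      nlinarith [S.two_le_mul]
    linarith [norm_sub_le_norm_of_mem_tube hw, D.mul_natCast_le_norm_hess hh hy]
  · have hMH : 1 ≤ M * H := one_le_mul_of_one_le_of_one_le hM hH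
    linarith [norm_le_of_mem_tube hw, D.norm_hess_le_mul_natCast hh hy]
  · calc |w ⬝ᵥ y| ≤ 2 * |A y (realVec h) ⬝ᵥ y| + Fintype.card (Fin 3) * (r⁻¹ * ‖y‖) :=
          abs_dotProduct_le_of_mem_tube hw y
      _ ≤ 2 * (2 * M / r) + (3 : ℕ) * (r⁻¹ * M) := by
          rw [D.hess_dotProduct_self y hy, Fintype.card_fin]
          gcongr
          exact (norm_le_one_of_mem_outerBox hy).trans hM
      _ = 7 * M / r := by
          push_cast
          ring

lemma volume_tangentTube_le :
    volume (tangentTube g A M r h) ≤ ENNReal.ofReal (3072 * M ^ 4 / (lam * r ^ 3)) := by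
  have hr := S.dual_pos
  have hM := D.one_le
  have hlam := D.lam_pos
  have hH := S.one_le_natCast
  have hHh := (mem_dyadicBox.1 hh).1
  refine (measure_tubeBundle_le (isCompact_nearTangent D.continuousOn_grad _ _).measurableSet
    (D.measurableSet_tangentTube r h) (inv_pos.2 hr)
    (fun y hy => (S.inv_dual_le_mul hlam).trans (D.mul_natCast_le_norm_hess hh hy.1))
    fun y hy => D.norm_hess_le_mul_natCast hh hy.1).trans ?_
  refine (mul_le_mul_right (D.volume_nearTangent_le (S.realVec_ne_zero hh) (by positivity))
    _).trans ?_
  rw [← ENNReal.ofReal_mul (by positivity), norm_realVec, Fintype.card_fin]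
  refine ENNReal.ofReal_le_ofReal ?_
  calc 6 * (M * (2 * H)) * (4 * r⁻¹) ^ 2 * (8 * M ^ 2 * (2 * M / r) / (lam * ‖h‖))
      ≤ 6 * (M * (2 * H)) * (4 * r⁻¹) ^ 2 * (8 * M ^ 2 * (2 * M / r) / (lam * H)) := by
        gcongr
    _ = 3072 * M ^ 4 / (lam * r ^ 3) := by
        field_simp
        norm_num

end TangentTube

include S in
/-- Intersecting tubes have almost parallel core vectors `A y h` and `A y h'`, and `A y` is
uniformly invertible. -/
lemma norm_cross_le_of_tangentTube_inter_nonempty {h h' : Fin 3 → ℤ} (hh' : h' ∈ dyadicBox H)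
    (hne : (tangentTube g A M r h ∩ tangentTube g A M r h').Nonempty) :
    ‖h ⨯₃ h'‖ ≤ 8 * H / (lam * r) := by
  obtain ⟨⟨y, w⟩, ⟨⟨hy, -⟩, s, hs, hws⟩, -, s', -, hws'⟩ := hne
  simp only at hy hws hws'
  have hr := S.dual_pos
  have hlam := D.lam_pos
  have himage : ‖A y (s • realVec h - s' • realVec h')‖ ≤ 2 * r⁻¹ := by
    have hsub : A y (s • realVec h - s' • realVec h')
        = (w - s' • A y (realVec h')) - (w - s • A y (realVec h)) := by
      rw [map_sub, map_smul, map_smul]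
      abel
    rw [hsub, two_mul]
    exact (norm_sub_le _ _).trans (add_le_add hws' hws)
  have hdiff : ‖s • realVec h - s' • realVec h'‖ ≤ 2 / (lam * r) := by
    rw [le_div_iff₀ (by positivity)]
    calc ‖s • realVec h - s' • realVec h'‖ * (lam * r)
        = lam * ‖s • realVec h - s' • realVec h'‖ * r := by ring
      _ ≤ 2 * r⁻¹ * r :=
          mul_le_mul_of_nonneg_right ((D.le_norm_hess y hy _).trans himage) hr.le
      _ = 2 := by field_simp
  have hcross : (s • realVec h - s' • realVec h') ⨯₃ realVec h' = s • realVec (h ⨯₃ h') := by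
    rw [map_sub, map_smul, map_smul, LinearMap.sub_apply, LinearMap.smul_apply,
      LinearMap.smul_apply, cross_self, smul_zero, sub_zero, realVec_cross]
  calc ‖h ⨯₃ h'‖ ≤ s * ‖h ⨯₃ h'‖ := le_mul_of_one_le_left (norm_nonneg _) hs.1
    _ = ‖(s • realVec h - s' • realVec h') ⨯₃ realVec h'‖ := by
        rw [hcross, norm_smul, Real.norm_of_nonneg (zero_le_one.trans hs.1), norm_realVec]
    _ ≤ 2 * ‖s • realVec h - s' • realVec h'‖ * ‖realVec h'‖ := norm_cross_le _ _
    _ ≤ 2 * (2 / (lam * r)) * (2 * H) := by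
        rw [norm_realVec]
        gcongr
        exact (mem_dyadicBox.1 hh').2
    _ = 8 * H / (lam * r) := by ring

end MidpointEstimates

end OneScale

/-! ### Counting level pairs on one dyadic scale -/

section CountOneScale

variable {q : (Fin 3 → ℝ) → ℝ} {g : (Fin 3 → ℝ) → (Fin 3 → ℝ)}
  {A : (Fin 3 → ℝ) → (Fin 3 → ℝ) →L[ℝ] (Fin 3 → ℝ)} {lam M r x R : ℝ} {H : ℕ}

/-- The ball of radius `1 / (r * H)` around the rescaled midpoint of `z = (k, h)`, times the tubes
around the vectors `A y h`. -/
def pairTube (A : (Fin 3 → ℝ) → (Fin 3 → ℝ) →L[ℝ] (Fin 3 → ℝ)) (r x R : ℝ)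
    (z : (Fin 3 → ℤ) × (Fin 3 → ℤ)) : Set ((Fin 3 → ℝ) × (Fin 3 → ℝ)) :=
  tubeBundle (fun y => A y (realVec z.2))
    (Metric.closedBall (rescaledMidpoint R z) (r * x ^ 2)⁻¹) r⁻¹

namespace MidpointEstimates

variable (D : MidpointEstimates q g A lam M) (S : Scales lam r x R H)

include D

section OneScale

include S

section PairTube

variable {z : (Fin 3 → ℤ) × (Fin 3 → ℤ)} (hz : LevelPair q R H z)

include hz

lemma measurableSet_pairTube : MeasurableSet (pairTube A r x R z) :=
  (isCompact_tubeBundle (isCompact_closedBall _ _) ((D.continuousOn_hess_apply _).mono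
    fun _ hy => hz.mem_outerBox S (mem_closedBall_iff_norm.1 hy)) _).measurableSet

lemma pairTube_subset_tangentTube : pairTube A r x R z ⊆ tangentTube g A M r z.2 :=
  fun _ hp => ⟨hz.mem_nearTangent D S (mem_closedBall_iff_norm.1 hp.1), hp.2⟩

lemma le_volume_pairTube :
    ENNReal.ofReal (32 * lam / (r ^ 5 * x ^ 4)) ≤ volume (pairTube A r x R z) := by
  have hr := S.dual_pos
  have hx := S.pos
  have hlam := D.lam_pos
  refine le_trans (le_of_eq ?_) (le_measure_tubeBundle measurableSet_closedBall
    (D.measurableSet_pairTube S hz) (inv_nonneg.2 hr.le) fun y hy =>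
      D.mul_natCast_le_norm_hess hz.mem_dyadicBox
        (hz.mem_outerBox S (mem_closedBall_iff_norm.1 hy)))
  rw [Real.volume_pi_closedBall _ (by positivity), ← ENNReal.ofReal_mul (by positivity),
    Fintype.card_fin, ← S.sq_eq]
  congr 1
  simp only [Nat.reduceSub]
  field_simp
  norm_num

end PairTube

lemma sum_volume_tangentTube_inter_le :
    ∑ h ∈ dyadicBox H, ∑ h' ∈ dyadicBox H, volume (tangentTube g A M r h ∩ tangentTube g A M r h')
      ≤ ENNReal.ofReal (60000 * (64 / lam ^ 2) ^ 3 * (H : ℝ) ^ 3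
        * (3072 * M ^ 4 / (lam * r ^ 3))) := by
  classical
  have hr := S.dual_pos
  have hlam := D.lam_pos
  have hM := D.one_le
  have hlam1 := D.lam_le_one
  have hK : 1 ≤ 64 / lam ^ 2 := by
    rw [le_div_iff₀ (by positivity)]
    nlinarith
  have hEK : (8 * H / (lam * r)) ^ 2 ≤ 64 / lam ^ 2 * H := by
    have hHr : (H : ℝ) ≤ r ^ 2 := S.sq_eq ▸ pow_le_pow_left₀ S.pos.le S.le_dual 2
    calc (8 * H / (lam * r)) ^ 2 = 64 / lam ^ 2 * H * (H / r ^ 2) := by ring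
      _ ≤ 64 / lam ^ 2 * H * 1 := by
          gcongr
          exact (div_le_one (by positivity)).2 hHr
      _ = 64 / lam ^ 2 * H := mul_one _
  have hcard := card_cross_norm_le (Nat.cast_pos.1 (zero_lt_one.trans_le S.one_le_natCast))
    (by positivity) hK hEK
  set B := ENNReal.ofReal (3072 * M ^ 4 / (lam * r ^ 3)) with hB
  rw [← Finset.sum_product']
  calc ∑ p ∈ dyadicBox H ×ˢ dyadicBox H, volume (tangentTube g A M r p.1 ∩ tangentTube g A M r p.2)
      ≤ ∑ p ∈ dyadicBox H ×ˢ dyadicBox H, if ‖p.1 ⨯₃ p.2‖ ≤ 8 * H / (lam * r) then B else 0 := by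
        refine Finset.sum_le_sum fun p hp => ?_
        obtain ⟨hp₁, hp₂⟩ := Finset.mem_product.1 hp
        rcases eq_empty_or_nonempty (tangentTube g A M r p.1 ∩ tangentTube g A M r p.2)
          with he | hne
        · rw [he, measure_empty]
          exact zero_le
        · rw [if_pos (D.norm_cross_le_of_tangentTube_inter_nonempty S hp₂ hne)]
          exact (measure_mono inter_subset_left).trans (D.volume_tangentTube_le S hp₁)
    _ = (((box (2 * H) ×ˢ box (2 * H)).filter fun q : (Fin 3 → ℤ) × (Fin 3 → ℤ) =>
          (H : ℝ) ≤ ‖q.1‖ ∧ (H : ℝ) ≤ ‖q.2‖ ∧ ‖q.1 ⨯₃ q.2‖ ≤ 8 * H / (lam * r)).card : ℝ≥0∞)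
          * B := by
        rw [← Finset.sum_filter, Finset.sum_const, nsmul_eq_mul, dyadicBox, ← Finset.filter_product,
          Finset.filter_filter]
        simp only [and_assoc]
    _ ≤ _ := by
        rw [← ENNReal.ofReal_natCast, hB, ← ENNReal.ofReal_mul (by positivity)]
        exact ENNReal.ofReal_le_ofReal (by gcongr)

lemma sum_volume_slabs_inter_almostOrth_le :
    ∑ u ∈ box ⌊2 * r⌋₊, ∑ v ∈ box ⌊2 * r⌋₊,
      volume (({p : (Fin 3 → ℝ) × (Fin 3 → ℝ) | |p.2 ⬝ᵥ realVec u| ≤ 4 * M + 6}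
        ∩ {p | |p.2 ⬝ᵥ realVec v| ≤ 4 * M + 6})
        ∩ almostOrth (lam * H / 2) (5 * M * H) (7 * M / r))
      ≤ ENNReal.ofReal (8 * (7 * M / r) / (lam * H / 2)
        * ((8 * (5 * M) ^ 2 + 2912 * (4 * M + 6) * (5 * M) + 151632 * (4 * M + 6) ^ 2)
          * (5 * M * H) * (2 * r) ^ 4)) := by
  have hr := S.dual_pos
  have hx := S.pos
  have hM := D.one_le
  have hlam := D.lam_pos
  have hH := S.one_le_natCast
  have hfloor : (⌊2 * r⌋₊ : ℝ) ≤ 2 * r := Nat.floor_le (by positivity)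
  have hlefloor : x ≤ ⌊2 * r⌋₊ := by
    linarith [Nat.lt_floor_add_one (2 * r), S.sixteen_le, S.le_dual]
  have hradius : 5 * M * (H : ℝ) ≤ 5 * M * (⌊2 * r⌋₊ : ℝ) ^ 2 := by
    rw [← S.sq_eq]
    gcongr
  refine (Finset.sum_le_sum fun u _ => Finset.sum_le_sum fun v _ =>
    volume_almostOrth_inter_slabs_le (by positivity) (by positivity) _ _).trans ?_
  simp only [← Finset.mul_sum]
  refine (mul_le_mul_right (sum_volume_twoSlabs_le ⌊2 * r⌋₊ (by positivity) (by positivity)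
    hradius) _).trans ?_
  rw [← ENNReal.ofReal_mul (by positivity)]
  exact ENNReal.ofReal_le_ofReal (by gcongr)

open Classical in
/-- Two pairs with the same `h` covering `(y, w)` differ by a vector in the slab orthogonal
to `w`. -/
lemma card_pairTube_le {Z : Finset ((Fin 3 → ℤ) × (Fin 3 → ℤ))} (hZ : ∀ z ∈ Z, LevelPair q R H z)
    (p : (Fin 3 → ℝ) × (Fin 3 → ℝ)) :
    {z ∈ Z | p ∈ pairTube A r x R z}.card
      ≤ {h ∈ dyadicBox H | p ∈ tangentTube g A M r h}.card
        * {u ∈ (box ⌊2 * r⌋₊ : Finset (Fin 3 → ℤ)) | p ∈ {p : (Fin 3 → ℝ) × (Fin 3 → ℝ) |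
            |p.2 ⬝ᵥ realVec u| ≤ 4 * M + 6}}.card := by
  rw [mul_comm]
  refine Finset.card_le_mul_card_image_of_maps_to
    (f := (Prod.snd : (Fin 3 → ℤ) × (Fin 3 → ℤ) → Fin 3 → ℤ)) (fun z hz => ?_) _ fun h _ => ?_
  · obtain ⟨hzZ, hpz⟩ := Finset.mem_filter.1 hz
    exact Finset.mem_filter.2
      ⟨(hZ z hzZ).mem_dyadicBox, D.pairTube_subset_tangentTube S (hZ z hzZ) hpz⟩
  · rcases Finset.eq_empty_or_nonempty {z ∈ {z ∈ Z | p ∈ pairTube A r x R z} | z.2 = h} with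
      he | ⟨⟨k, _⟩, hk⟩
    · rw [he, Finset.card_empty]
      exact Nat.zero_le _
    simp only [Finset.mem_filter] at hk
    obtain ⟨⟨hkZ, hkp⟩, rfl⟩ := hk
    refine Finset.card_le_card_of_injOn (fun z => z.1 - k) ?_ ?_
    · rintro ⟨k', h'⟩ hk'
      simp only [Finset.coe_filter, Finset.mem_filter, mem_ofPred_eq] at hk'
      obtain ⟨⟨hkZ', hkp'⟩, rfl⟩ := hk'
      have hnear := mem_closedBall_iff_norm.1 hkp.1
      have hnear' := mem_closedBall_iff_norm.1 hkp'.1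
      refine Finset.mem_coe.2 (Finset.mem_filter.2 ⟨?_, LevelPair.abs_dotProduct_fst_sub_le D S
        (hZ _ hkZ) (hZ _ hkZ') hnear hnear' hkp.2⟩)
      obtain ⟨n, hn⟩ := exists_natCast_eq_norm (k' - k)
      have hle := norm_sub_le_of_norm_sub_rescaledMidpoint_le S hnear hnear'
      rw [hn] at hle
      rw [mem_box_iff_norm_le, hn]
      exact_mod_cast Nat.le_floor hle
    · rintro ⟨k₁, h₁⟩ hk₁ ⟨k₂, h₂⟩ hk₂ heq
      simp only [Finset.coe_filter, Finset.mem_filter, mem_ofPred_eq] at hk₁ hk₂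
      exact Prod.ext (sub_left_injective heq) (hk₁.2.trans hk₂.2.symm)

lemma card_mul_le_of_levelPair {Z : Finset ((Fin 3 → ℤ) × (Fin 3 → ℤ))}
    (hZ : ∀ z ∈ Z, LevelPair q R H z) :
    Z.card * (32 * lam / (r ^ 5 * x ^ 4))
      ≤ (r / x) ^ 3 * (60000 * (64 / lam ^ 2) ^ 3 * (H : ℝ) ^ 3 * (3072 * M ^ 4 / (lam * r ^ 3)))
        + ((r / x) ^ 3)⁻¹ * (8 * (7 * M / r) / (lam * H / 2)
          * ((8 * (5 * M) ^ 2 + 2912 * (4 * M + 6) * (5 * M) + 151632 * (4 * M + 6) ^ 2)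
            * (5 * M * H) * (2 * r) ^ 4)) := by
  have hr := S.dual_pos
  have hx := S.pos
  have hM := D.one_le
  have hlam := D.lam_pos
  have hrx : 0 < (r / x) ^ 3 := by positivity
  set G := almostOrth (lam * H / 2) (5 * M * H) (7 * M / r)
  have hcs := sum_measure_le_of_card_le_mul (volume.restrict G)
    (fun z hz => D.measurableSet_pairTube S (hZ z hz)) (fun h _ => D.measurableSet_tangentTube r h)
    (fun u _ => measurableSet_abs_snd_dotProduct_le (realVec u) (4 * M + 6))
    (D.card_pairTube_le S hZ) (ENNReal.ofReal_pos.2 hrx).ne' ENNReal.ofReal_ne_top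
  have hW : Z.card * ENNReal.ofReal (32 * lam / (r ^ 5 * x ^ 4))
      ≤ ∑ z ∈ Z, volume.restrict G (pairTube A r x R z) := by
    rw [← nsmul_eq_mul, ← Finset.sum_const]
    refine Finset.sum_le_sum fun z hz => ?_
    rw [Measure.restrict_eq_self _ ((D.pairTube_subset_tangentTube S (hZ z hz)).trans
      (D.tangentTube_subset_almostOrth S (hZ z hz).mem_dyadicBox))]
    exact D.le_volume_pairTube S (hZ z hz)
  have hT := (Finset.sum_le_sum fun h _ => Finset.sum_le_sum fun h' _ =>
    Measure.restrict_apply_le G _).trans (D.sum_volume_tangentTube_inter_le S)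
  have hU := D.sum_volume_slabs_inter_almostOrth_le S
  simp only [← Measure.restrict_apply ((measurableSet_abs_snd_dotProduct_le _ _).inter
    (measurableSet_abs_snd_dotProduct_le _ _))] at hU
  have htotal := hW.trans (hcs.trans (add_le_add (mul_le_mul_right hT _) (mul_le_mul_right hU _)))
  rwa [← ENNReal.ofReal_inv_of_pos hrx, ← ENNReal.ofReal_mul (by positivity),
    ← ENNReal.ofReal_mul (by positivity), ← ENNReal.ofReal_add (by positivity) (by positivity),
    ← ENNReal.ofReal_natCast, ← ENNReal.ofReal_mul (by positivity),
    ENNReal.ofReal_le_ofReal_iff (by positivity)] at htotal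

end OneScale

lemma exists_card_levelPair_le : ∃ C : ℝ, 0 ≤ C ∧ ∀ (r x R : ℝ) (H : ℕ), Scales lam r x R H →
    ∀ Z : Finset ((Fin 3 → ℤ) × (Fin 3 → ℤ)), (∀ z ∈ Z, LevelPair q R H z) →
      Z.card ≤ C * (r ^ 5 * x ^ 7) := by
  have hlam := D.lam_pos
  have hM := D.one_le
  refine ⟨(60000 * (64 / lam ^ 2) ^ 3 * (3072 * M ^ 4 / lam) + 8 * (7 * M) / (lam / 2)
    * ((8 * (5 * M) ^ 2 + 2912 * (4 * M + 6) * (5 * M) + 151632 * (4 * M + 6) ^ 2) * (5 * M)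
      * 2 ^ 4)) / (32 * lam), by positivity, fun r x R H S Z hZ => ?_⟩
  have hr := S.dual_pos
  have hx := S.pos
  have hcard := D.card_mul_le_of_levelPair S hZ
  rw [← le_div_iff₀ (by positivity), ← S.sq_eq] at hcard
  refine hcard.trans_eq ?_
  field_simp

end MidpointEstimates

end CountOneScale

/-! ### Counting values -/

section Dyadic

variable {α : Type*} {Z : Finset α} {f : α → ℝ} {B X : ℝ}

lemma card_lt_two_pow_le (hB : 0 ≤ B) (hf : ∀ z ∈ Z, 1 ≤ f z)
    (hdyadic : ∀ n : ℕ, (2 : ℝ) ^ n ≤ X →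
      ({z ∈ Z | 2 ^ n ≤ f z ∧ f z ≤ 2 * 2 ^ n}.card : ℝ) ≤ B * 2 ^ n)
    (n : ℕ) (hn : (2 : ℝ) ^ n ≤ 2 * X) : ({z ∈ Z | f z < 2 ^ n}.card : ℝ) ≤ B * 2 ^ n := by
  classical
  induction n with
  | zero =>
    rw [Finset.filter_false_of_mem fun z hz => by simpa only [pow_zero, not_lt] using hf z hz]
    simpa using hB
  | succ n ih =>
    rw [pow_succ] at hn ⊢
    have hsub : {z ∈ Z | f z < 2 ^ n * 2}
        ⊆ {z ∈ Z | f z < 2 ^ n} ∪ {z ∈ Z | 2 ^ n ≤ f z ∧ f z ≤ 2 * 2 ^ n} := by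
      intro z hz
      rw [← Finset.filter_or]
      obtain ⟨hzZ, hlt⟩ := Finset.mem_filter.1 hz
      exact Finset.mem_filter.2 ⟨hzZ, (lt_or_ge (f z) (2 ^ n)).imp_right fun h => ⟨h, by linarith⟩⟩
    have hcard : ({z ∈ Z | f z < 2 ^ n * 2}.card : ℝ)
        ≤ {z ∈ Z | f z < 2 ^ n}.card + {z ∈ Z | 2 ^ n ≤ f z ∧ f z ≤ 2 * 2 ^ n}.card :=
      mod_cast (Finset.card_le_card hsub).trans (Finset.card_union_le _ _)
    have hpow : (0 : ℝ) < 2 ^ n := by positivity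
    linarith [ih (by linarith), hdyadic n (by linarith)]

lemma card_le_of_card_dyadic_le (hB : 0 ≤ B) (hX : 1 ≤ X) (hf : ∀ z ∈ Z, 1 ≤ f z ∧ f z ≤ X)
    (hdyadic : ∀ n : ℕ, (2 : ℝ) ^ n ≤ X →
      ({z ∈ Z | 2 ^ n ≤ f z ∧ f z ≤ 2 * 2 ^ n}.card : ℝ) ≤ B * 2 ^ n) :
    (Z.card : ℝ) ≤ 2 * B * X := by
  obtain ⟨n, hn, hn'⟩ := exists_nat_pow_near hX (one_lt_two (α := ℝ))
  have hcard := card_lt_two_pow_le hB (fun z hz => (hf z hz).1) hdyadic (n + 1)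
    (by rw [pow_succ]; linarith)
  rw [Finset.filter_true_of_mem fun z hz => (hf z hz).2.trans_lt hn', pow_succ] at hcard
  calc (Z.card : ℝ) ≤ B * (2 ^ n * 2) := hcard
    _ ≤ B * (X * 2) := by gcongr
    _ = 2 * B * X := by ring

end Dyadic

lemma Scales.of_le {lam X : ℝ} {H : ℕ} (hlam : 0 < lam) (hX : 256 ≤ X) (hlamX : 4 / lam ^ 2 ≤ X)
    (hH : 1 ≤ H) (hHX : H ≤ X) : Scales lam (X / √H) √H (X ^ 2) H := by
  have hsq : √(H : ℝ) ^ 2 = H := Real.sq_sqrt H.cast_nonneg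
  have hone : 1 ≤ √(H : ℝ) := Real.one_le_sqrt.2 (mod_cast hH)
  have hpos : 0 < √(H : ℝ) := zero_lt_one.trans_le hone
  have hdual : 0 < X / √H := by positivity
  have hXdual : X ≤ (X / √H) ^ 2 := by
    rw [div_pow, le_div_iff₀ (by positivity), hsq]
    nlinarith
  refine ⟨hsq, by field_simp, ?_, ?_, hone, ?_⟩
  · exact (pow_le_pow_iff_left₀ (by norm_num) hdual.le two_ne_zero).1 (by linarith)
  · refine (pow_le_pow_iff_left₀ zero_le_two (by positivity) two_ne_zero).1 ?_
    rw [div_le_iff₀ (by positivity)] at hlamX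
    nlinarith [mul_le_mul_of_nonneg_right hXdual (sq_nonneg lam)]
  · rw [le_div_iff₀ hpos]
    nlinarith

section LevelPairs

variable {q : (Fin 3 → ℝ) → ℝ} {g : (Fin 3 → ℝ) → (Fin 3 → ℝ)}
  {A : (Fin 3 → ℝ) → (Fin 3 → ℝ) →L[ℝ] (Fin 3 → ℝ)} {lam M : ℝ}

lemma MidpointEstimates.exists_card_close_levelPairs_le (D : MidpointEstimates q g A lam M) :
    ∃ C X₀ : ℝ, 0 ≤ C ∧ ∀ X : ℝ, X₀ ≤ X → ∀ Z : Finset ((Fin 3 → ℤ) × (Fin 3 → ℤ)),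
      (∀ z ∈ Z, z.2 ≠ 0 ∧ ‖z.2‖ ≤ X ∧ (X ^ 2)⁻¹ • realVec z.1 ∈ innerBox ∧
        q ((X ^ 2)⁻¹ • realVec (z.1 + z.2)) = q ((X ^ 2)⁻¹ • realVec z.1)) →
      (Z.card : ℝ) ≤ C * X ^ 6 := by
  obtain ⟨C, hC, hscale⟩ := D.exists_card_levelPair_le
  refine ⟨2 * C, max 256 (4 / lam ^ 2), by positivity, fun X hX Z hZ => ?_⟩
  obtain ⟨hX₁, hX₂⟩ := max_le_iff.1 hX
  have hdyadic : ∀ n : ℕ, (2 : ℝ) ^ n ≤ X →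
      ({z ∈ Z | 2 ^ n ≤ ‖z.2‖ ∧ ‖z.2‖ ≤ 2 * 2 ^ n}.card : ℝ) ≤ C * X ^ 5 * 2 ^ n := by
    intro n hn
    have S : Scales lam (X / √(2 ^ n : ℕ)) √(2 ^ n : ℕ) (X ^ 2) (2 ^ n) :=
      Scales.of_le D.lam_pos hX₁ hX₂ Nat.one_le_two_pow (mod_cast hn)
    have := S.pos
    refine (hscale _ _ _ _ S _ fun z hz => ?_).trans_eq ?_
    · obtain ⟨hzZ, hlo, hhi⟩ := Finset.mem_filter.1 hz
      obtain ⟨-, -, hmem, heq⟩ := hZ z hzZ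
      exact ⟨mem_dyadicBox.2 ⟨mod_cast hlo, mod_cast hhi⟩, hmem, heq⟩
    · have hsq : (2 : ℝ) ^ n = √(2 ^ n : ℕ) ^ 2 := by rw [S.sq_eq, Nat.cast_pow, Nat.cast_two]
      rw [hsq]
      field_simp
  calc (Z.card : ℝ) ≤ 2 * (C * X ^ 5) * X :=
        card_le_of_card_dyadic_le (by positivity) (by linarith)
          (fun z hz => ⟨one_le_norm (hZ z hz).1, (hZ z hz).2.1⟩) hdyadic
    _ = 2 * C * X ^ 6 := by ring

end LevelPairs

/-- The integer points of the dilate `R • innerBox`. -/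
def latticeBox (R : ℝ) : Finset (Fin 3 → ℤ) :=
  Fintype.piFinset fun i => Finset.Icc ⌈R * (![-(2 / 5), -(2 / 5), 1 / 2] : Fin 3 → ℝ) i⌉
    ⌊R * (![2 / 5, 2 / 5, 3 / 5] : Fin 3 → ℝ) i⌋

lemma mem_latticeBox {R : ℝ} (hR : 0 < R) {k : Fin 3 → ℤ} :
    k ∈ latticeBox R ↔ R⁻¹ • realVec k ∈ innerBox := by
  simp only [latticeBox, Fintype.mem_piFinset, Finset.mem_Icc, Int.ceil_le, Int.le_floor, innerBox,
    mem_Icc, Pi.le_def, Pi.smul_apply, smul_eq_mul, realVec, ← forall_and]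
  refine forall_congr' fun i => ?_
  rw [le_inv_mul_iff₀ hR, inv_mul_le_iff₀ hR]

lemma sub_sub_one_le_card_Icc (a b : ℝ) : b - a - 1 ≤ (Finset.Icc ⌈a⌉ ⌊b⌋).card := by
  have hcard : ⌊b⌋ + 1 - ⌈a⌉ ≤ ((Finset.Icc ⌈a⌉ ⌊b⌋).card : ℤ) :=
    (Int.self_le_toNat _).trans_eq (by rw [Int.card_Icc])
  have hcard' : (⌊b⌋ + 1 - ⌈a⌉ : ℝ) ≤ (Finset.Icc ⌈a⌉ ⌊b⌋).card := mod_cast hcard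
  linarith [Int.lt_floor_add_one b, Int.ceil_lt_add_one a]

lemma card_Icc_le_sub_add_one {a b : ℝ} (hab : a ≤ b + 1) :
    (Finset.Icc ⌈a⌉ ⌊b⌋).card ≤ b - a + 1 := by
  have hcard : ((Finset.Icc ⌈a⌉ ⌊b⌋).card : ℝ) = max (⌊b⌋ + 1 - ⌈a⌉ : ℝ) 0 := by
    rw [Int.card_Icc, ← Int.cast_natCast, Int.toNat_eq_max]
    push_cast
    rfl
  rw [hcard]
  exact max_le (by linarith [Int.floor_le b, Int.le_ceil a]) (by linarith)

lemma cube_le_card_latticeBox {R : ℝ} (hR : 20 ≤ R) : R ^ 3 / 8000 ≤ (latticeBox R).card := by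
  have hside : ∀ a b : ℝ, 1 / 10 ≤ b - a → R / 20 ≤ (Finset.Icc ⌈R * a⌉ ⌊R * b⌋).card := by
    intro a b hab
    nlinarith [sub_sub_one_le_card_Icc (R * a) (R * b)]
  rw [latticeBox, Fintype.card_piFinset, Nat.cast_prod, Fin.prod_univ_three]
  calc R ^ 3 / 8000 = R / 20 * (R / 20) * (R / 20) := by ring
    _ ≤ _ := by
        simp only [Matrix.cons_val]
        gcongr <;> exact hside _ _ (by norm_num)

lemma card_latticeBox_le_cube {R : ℝ} (hR : 20 ≤ R) : (latticeBox R).card ≤ R ^ 3 := by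
  have hside : ∀ a b : ℝ, 0 ≤ b - a → b - a ≤ 4 / 5 → (Finset.Icc ⌈R * a⌉ ⌊R * b⌋).card ≤ R := by
    intro a b hab hab'
    have hle : R * a ≤ R * b + 1 := by nlinarith
    nlinarith [card_Icc_le_sub_add_one hle]
  rw [latticeBox, Fintype.card_piFinset, Nat.cast_prod, Fin.prod_univ_three]
  calc _ ≤ R * R * R := by
        simp only [Matrix.cons_val]
        gcongr <;> exact hside _ _ (by norm_num) (by norm_num)
    _ = R ^ 3 := by ring

lemma card_sq_le_card_image_mul {α β : Type*} [DecidableEq β] (s : Finset α) (φ : α → β) :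
    s.card ^ 2 ≤ (s.image φ).card * {p ∈ s ×ˢ s | φ p.1 = φ p.2}.card := by
  have hpairs : {p ∈ s ×ˢ s | φ p.1 = φ p.2}.card
      = ∑ b ∈ s.image φ, {a ∈ s | φ a = b}.card ^ 2 := by
    rw [Finset.card_eq_sum_card_fiberwise (f := fun p => φ p.1) (t := s.image φ)]
    · refine Finset.sum_congr rfl fun b _ => ?_
      rw [sq, ← Finset.card_product, ← Finset.filter_product, Finset.filter_filter]
      refine congrArg _ (Finset.filter_congr fun p _ => ?_)
      exact ⟨fun ⟨h, hb⟩ => ⟨hb, h ▸ hb⟩, fun ⟨h, h'⟩ => ⟨h.trans h'.symm, h⟩⟩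
    · exact fun p hp => Finset.mem_image_of_mem φ
        (Finset.mem_product.1 (Finset.mem_filter.1 hp).1).1
  rw [hpairs]
  nth_rewrite 1 [Finset.card_eq_sum_card_image φ s]
  exact sq_sum_le_card_mul_sum_sq

lemma card_sq_le_card_image_mul_add {α β : Type*} [DecidableEq β] (s : Finset α) (φ : α → β) :
    s.card ^ 2 ≤ (s.image φ).card * (s.card + {p ∈ s.offDiag | φ p.1 = φ p.2}.card) := by
  classical
  refine (card_sq_le_card_image_mul s φ).trans (Nat.mul_le_mul_left _ ?_)
  rw [← s.diag_union_offDiag, Finset.filter_union, ← s.diag_card]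
  exact (Finset.card_union_le _ _).trans
    (Nat.add_le_add_right (Finset.card_le_card (Finset.filter_subset _ _)) _)

section DirectionCell

open NormedSpace (normalize normalize_zero_eq_zero norm_normalize normalize_smul_of_pos
  norm_smul_normalize)

/-- The index of the cell containing the direction of `k`, in the partition of space into cubes of
side `1 / B`. -/
def directionCell {ι : Type*} [Fintype ι] (B : ℝ) (k : ι → ℤ) : ι → ℤ :=
  fun i => ⌊B * normalize (realVec k) i⌋

lemma norm_normalize_sub_le_of_directionCell_eq {ι : Type*} [Fintype ι] {B : ℝ} (hB : 0 < B)
    {k l : ι → ℤ} (h : directionCell B k = directionCell B l) :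
    ‖normalize (realVec k) - normalize (realVec l)‖ ≤ 1 / B := by
  refine (pi_norm_le_iff_of_nonneg (by positivity)).2 fun i => ?_
  have hlt := Int.abs_sub_lt_one_of_floor_eq_floor (congrFun h i)
  rw [← mul_sub, abs_mul, abs_of_pos hB] at hlt
  rw [le_div_iff₀' hB]
  exact hlt.le

lemma norm_eq_apply_two_of_mem_innerBox {y : Fin 3 → ℝ} (hy : y ∈ innerBox) : ‖y‖ = y 2 := by
  obtain ⟨h₀, h₁, h₂, -⟩ := mem_innerBox.1 hy
  refine le_antisymm ((pi_norm_le_iff_of_nonneg (by linarith)).2 fun i => ?_)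
    ((le_abs_self _).trans (norm_le_pi_norm y 2))
  rw [Real.norm_eq_abs, abs_le]
  fin_cases i <;> simp only [Fin.zero_eta, Fin.mk_one, Fin.reduceFinMk] <;> constructor <;> linarith

lemma normalize_realVec_apply_two {R : ℝ} (hR : 0 < R) {k : Fin 3 → ℤ} (hk : k ∈ latticeBox R) :
    normalize (realVec k) 2 = 1 := by
  have hy := (mem_latticeBox hR).1 hk
  rw [← normalize_smul_of_pos (inv_pos.2 hR), NormedSpace.normalize, Pi.smul_apply, smul_eq_mul,
    ← norm_eq_apply_two_of_mem_innerBox hy]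
  refine inv_mul_cancel₀ ?_
  rw [norm_eq_apply_two_of_mem_innerBox hy]
  linarith [(mem_innerBox.1 hy).2.2.1]

lemma realVec_ne_zero_of_mem_latticeBox {R : ℝ} (hR : 0 < R) {k : Fin 3 → ℤ}
    (hk : k ∈ latticeBox R) : realVec k ≠ 0 := fun h => by
  have htwo := normalize_realVec_apply_two hR hk
  rw [h, normalize_zero_eq_zero] at htwo
  exact zero_ne_one htwo

lemma norm_le_of_mem_latticeBox {R : ℝ} (hR : 0 < R) {k : Fin 3 → ℤ} (hk : k ∈ latticeBox R) :
    ‖k‖ ≤ R := by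
  have hy := (mem_latticeBox hR).1 hk
  rw [← div_le_one hR, ← norm_inv_smul_realVec hR.le, norm_eq_apply_two_of_mem_innerBox hy]
  linarith [(mem_innerBox.1 hy).2.2.2]

lemma card_image_directionCell_le {R B : ℝ} (hR : 0 < R) (hB : 1 ≤ B) :
    (((latticeBox R).image (directionCell B)).card : ℝ) ≤ 25 * B ^ 2 := by
  set I := Finset.Icc (-⌈B⌉) ⌈B⌉
  have hsub : (latticeBox R).image (directionCell B) ⊆ Fintype.piFinset ![I, I, {⌊B⌋}] := by
    intro c hc
    obtain ⟨k, hk, rfl⟩ := Finset.mem_image.1 hc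
    have hmem : ∀ i, directionCell B k i ∈ I := by
      intro i
      have hle := abs_le.1 ((norm_le_pi_norm (normalize (realVec k)) i).trans_eq
        (norm_normalize (realVec_ne_zero_of_mem_latticeBox hR hk)))
      have hceil := Int.le_ceil B
      refine Finset.mem_Icc.2
        ⟨Int.le_floor.2 ?_, (Int.floor_le_floor ?_).trans (Int.floor_le_ceil B)⟩
      · push_cast
        nlinarith
      · exact mul_le_of_le_one_right (by linarith) hle.2
    refine Fintype.mem_piFinset.2 fun i => ?_
    fin_cases i
    · exact hmem 0
    · exact hmem 1
    · refine Finset.mem_singleton.2 (congrArg Int.floor ?_)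
      exact (congrArg (B * ·) (normalize_realVec_apply_two hR hk)).trans (mul_one B)
  have hI : (I.card : ℝ) ≤ 5 * B := by
    have hcard : (I.card : ℤ) = 2 * ⌈B⌉ + 1 := by
      have := Int.ceil_nonneg (zero_le_one.trans hB)
      rw [Int.card_Icc, Int.toNat_of_nonneg (by linarith)]
      ring
    have hcard' : (I.card : ℝ) = 2 * ⌈B⌉ + 1 := mod_cast hcard
    linarith [Int.ceil_lt_add_one B]
  calc (((latticeBox R).image (directionCell B)).card : ℝ)
      ≤ (Fintype.piFinset ![I, I, {⌊B⌋}]).card := mod_cast Finset.card_le_card hsub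
    _ = I.card * I.card := by
        rw [Fintype.card_piFinset, Fin.prod_univ_three]
        simp
    _ ≤ (5 * B) * (5 * B) := by gcongr
    _ = 25 * B ^ 2 := by ring

lemma norm_sub_le_mul_norm_normalize_sub {E : Type*} [NormedAddCommGroup E] [NormedSpace ℝ E]
    {N : E → ℝ} {K : NNReal} {c : ℝ} (hN : ∀ t : ℝ, 0 ≤ t → ∀ x, N (t • x) = t * N x)
    (hLip : LipschitzWith K N) (hc : 0 < c) (hlow : ∀ x, c * ‖x‖ ≤ N x) {v w : E} (hv : v ≠ 0)
    (h : N v = N w) : ‖v - w‖ ≤ ‖w‖ * (1 + K / c) * ‖normalize v - normalize w‖ := by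
  set a := normalize v
  set b := normalize w
  have hva : ‖v‖ • a = v := norm_smul_normalize v
  have hwb : ‖w‖ • b = w := norm_smul_normalize w
  have ha : ‖a‖ = 1 := norm_normalize hv
  have hNa : c ≤ N a := by simpa only [ha, mul_one] using hlow a
  have hNab : ‖v‖ * N a = ‖w‖ * N b := by
    rw [← hN _ (norm_nonneg v), ← hN _ (norm_nonneg w), hva, hwb, h]
  have hnorm : |‖v‖ - ‖w‖| * c ≤ ‖w‖ * (K * ‖a - b‖) :=
    calc |‖v‖ - ‖w‖| * c ≤ |‖v‖ - ‖w‖| * N a := by gcongr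
      _ = |(‖v‖ - ‖w‖) * N a| := by rw [abs_mul, abs_of_pos (hc.trans_le hNa)]
      _ = |‖w‖ * (N b - N a)| := by rw [sub_mul, hNab, mul_sub]
      _ = ‖w‖ * |N a - N b| := by rw [abs_mul, abs_norm, abs_sub_comm]
      _ ≤ ‖w‖ * (K * ‖a - b‖) := by
          gcongr
          exact hLip.norm_sub_le a b
  have hsplit : v - w = (‖v‖ - ‖w‖) • a + ‖w‖ • (a - b) := by
    rw [sub_smul, smul_sub, hva, hwb]
    abel
  calc ‖v - w‖ ≤ |‖v‖ - ‖w‖| + ‖w‖ * ‖a - b‖ := by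
        rw [hsplit]
        refine (norm_add_le _ _).trans_eq ?_
        rw [norm_smul, norm_smul, ha, mul_one, norm_norm, Real.norm_eq_abs]
    _ ≤ ‖w‖ * (K * ‖a - b‖) / c + ‖w‖ * ‖a - b‖ := by
        gcongr
        exact (le_div_iff₀ hc).2 hnorm
    _ = ‖w‖ * (1 + K / c) * ‖a - b‖ := by ring

/-- A lattice vector's direction cell, together with its value of `N`. Two vectors which agree in
both are close to each other. -/
def cellValue {ι : Type*} [Fintype ι] (N : (ι → ℝ) → ℝ) (B : ℝ) (k : ι → ℤ) : (ι → ℤ) × ℝ :=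
  (directionCell B k, N (realVec k))

lemma card_image_cellValue_le (N : (Fin 3 → ℝ) → ℝ) {R B : ℝ} (hR : 0 < R) (hB : 1 ≤ B) :
    (((latticeBox R).image (cellValue N B)).card : ℝ)
      ≤ 25 * B ^ 2 * ((latticeBox R).image fun k => N (realVec k)).card := by
  have hsub : (latticeBox R).image (cellValue N B) ⊆
      (latticeBox R).image (directionCell B) ×ˢ (latticeBox R).image fun k => N (realVec k) := by
    intro p hp
    obtain ⟨k, hk, rfl⟩ := Finset.mem_image.1 hp
    exact Finset.mk_mem_product (Finset.mem_image_of_mem _ hk)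
      (Finset.mem_image_of_mem (fun k => N (realVec k)) hk)
  have hcard : (((latticeBox R).image (cellValue N B)).card : ℝ)
      ≤ ((latticeBox R).image (directionCell B)).card
        * ((latticeBox R).image fun k => N (realVec k)).card :=
    mod_cast (Finset.card_le_card hsub).trans_eq (Finset.card_product _ _)
  exact hcard.trans (mul_le_mul_of_nonneg_right (card_image_directionCell_le hR hB) (by positivity))

end DirectionCell

section CountValues

variable {N : (Fin 3 → ℝ) → ℝ} {K : NNReal} {c : ℝ}

lemma card_offDiag_le (hN : ∀ t : ℝ, 0 ≤ t → ∀ x, N (t • x) = t * N x) (hLip : LipschitzWith K N)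
    (hc : 0 < c) (hlow : ∀ x, c * ‖x‖ ≤ N x) {C X : ℝ} (hX : 0 < X)
    (hcount : ∀ Z : Finset ((Fin 3 → ℤ) × (Fin 3 → ℤ)),
      (∀ z ∈ Z, z.2 ≠ 0 ∧ ‖z.2‖ ≤ X ∧ (X ^ 2)⁻¹ • realVec z.1 ∈ innerBox ∧
        N ((X ^ 2)⁻¹ • realVec (z.1 + z.2)) ^ 2 = N ((X ^ 2)⁻¹ • realVec z.1) ^ 2) →
      (Z.card : ℝ) ≤ C) :
    ({p ∈ (latticeBox (X ^ 2)).offDiag |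
      cellValue N ((1 + K / c) * X) p.1 = cellValue N ((1 + K / c) * X) p.2}.card : ℝ) ≤ C := by
  have hR : 0 < X ^ 2 := by positivity
  have hinj : Function.Injective fun p : (Fin 3 → ℤ) × (Fin 3 → ℤ) => (p.2, p.1 - p.2) := by
    rintro ⟨k, l⟩ ⟨k', l'⟩ h
    obtain ⟨rfl, h⟩ := Prod.ext_iff.1 h
    exact Prod.ext (sub_left_injective h) rfl
  rw [← Finset.card_image_of_injective _ hinj]
  refine hcount _ fun z hz => ?_
  obtain ⟨⟨k, l⟩, hp, rfl⟩ := Finset.mem_image.1 hz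
  obtain ⟨hkl, heq⟩ := Finset.mem_filter.1 hp
  obtain ⟨hk, hl, hne⟩ := Finset.mem_offDiag.1 hkl
  obtain ⟨hcell, hval⟩ : directionCell ((1 + K / c) * X) k = directionCell ((1 + K / c) * X) l ∧
      N (realVec k) = N (realVec l) := Prod.ext_iff.1 heq
  refine ⟨sub_ne_zero.2 hne, ?_, (mem_latticeBox hR).1 hl, ?_⟩
  · calc ‖k - l‖ = ‖realVec k - realVec l‖ := by rw [← realVec_sub, norm_realVec]
      _ ≤ ‖realVec l‖ * (1 + K / c) * (1 / ((1 + K / c) * X)) := by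
          refine (norm_sub_le_mul_norm_normalize_sub hN hLip hc hlow
            (realVec_ne_zero_of_mem_latticeBox hR hk) hval).trans ?_
          gcongr
          exact norm_normalize_sub_le_of_directionCell_eq (by positivity) hcell
      _ ≤ X ^ 2 * (1 + K / c) * (1 / ((1 + K / c) * X)) := by
          gcongr
          exact (norm_realVec l).trans_le (norm_le_of_mem_latticeBox hR hl)
      _ = X := by field_simp
  · rw [add_sub_cancel, hN _ (by positivity), hN _ (by positivity), hval]

/-- By Cauchy-Schwarz, few pairs with the same direction cell and the same value of `N` force many
pairs of a cell and a value. As the cells are few, the values are many. -/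
theorem exists_le_card_image_latticeBox (hN : ∀ t : ℝ, 0 ≤ t → ∀ x, N (t • x) = t * N x)
    (hLip : LipschitzWith K N) (hc : 0 < c) (hlow : ∀ x, c * ‖x‖ ≤ N x)
    {g : (Fin 3 → ℝ) → (Fin 3 → ℝ)} {A : (Fin 3 → ℝ) → (Fin 3 → ℝ) →L[ℝ] (Fin 3 → ℝ)} {lam M : ℝ}
    (D : MidpointEstimates (fun x => N x ^ 2) g A lam M) :
    ∃ c' R₀ : ℝ, 0 < c' ∧ ∀ R : ℝ, R₀ ≤ R →
      c' * R ^ 2 ≤ ((latticeBox R).image fun k => N (realVec k)).card := by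
  obtain ⟨C, X₀, hC, hcount⟩ := D.exists_card_close_levelPairs_le
  set B : ℝ := 1 + K / c
  have hB : 1 ≤ B := le_add_of_nonneg_right (by positivity)
  refine ⟨1 / (8000 ^ 2 * (25 * B ^ 2) * (1 + C)), max 20 (max X₀ 0 ^ 2), by positivity,
    fun R hR => ?_⟩
  obtain ⟨hR20, hRX⟩ := max_le_iff.1 hR
  obtain ⟨X, hX, rfl⟩ : ∃ X : ℝ, 1 ≤ X ∧ X ^ 2 = R :=
    ⟨√R, Real.one_le_sqrt.2 (by linarith), Real.sq_sqrt (by linarith)⟩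
  have hXX : X₀ ≤ X :=
    (le_max_left _ _).trans
      ((pow_le_pow_iff_left₀ (le_max_right _ _) (by linarith) two_ne_zero).1 hRX)
  have hX20 : 0 < X ^ 2 := by linarith
  have hcard : ((latticeBox (X ^ 2)).card : ℝ) ^ 2 ≤
      ((latticeBox (X ^ 2)).image (cellValue N (B * X))).card * ((latticeBox (X ^ 2)).card +
        {p ∈ (latticeBox (X ^ 2)).offDiag |
        cellValue N (B * X) p.1 = cellValue N (B * X) p.2}.card) :=
    mod_cast card_sq_le_card_image_mul_add (latticeBox (X ^ 2)) (cellValue N (B * X))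
  have himage := card_image_cellValue_le N hX20 (one_le_mul_of_one_le_of_one_le hB hX)
  have hcollisions := card_offDiag_le hN hLip hc hlow (by linarith) (hcount X hXX)
  set V := ((latticeBox (X ^ 2)).image fun k => N (realVec k)).card
  have hmain : ((X ^ 2) ^ 3 / 8000) ^ 2 ≤ 25 * (B * X) ^ 2 * V * ((X ^ 2) ^ 3 + C * X ^ 6) :=
    (pow_le_pow_left₀ (by positivity) (cube_le_card_latticeBox hR20) 2).trans <| hcard.trans <|
      mul_le_mul himage (add_le_add (card_latticeBox_le_cube hR20) hcollisions) (by positivity)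
        (by positivity)
  rw [div_mul_eq_mul_div, one_mul, div_le_iff₀ (by positivity)]
  have hX8 : 0 < X ^ 8 / 8000 ^ 2 := by positivity
  refine le_of_mul_le_mul_left ?_ hX8
  calc X ^ 8 / 8000 ^ 2 * (X ^ 2) ^ 2 = ((X ^ 2) ^ 3 / 8000) ^ 2 := by ring
    _ ≤ 25 * (B * X) ^ 2 * V * ((X ^ 2) ^ 3 + C * X ^ 6) := hmain
    _ = X ^ 8 / 8000 ^ 2 * (V * (8000 ^ 2 * (25 * B ^ 2) * (1 + C))) := by ring

end CountValues

/-! ### Midpoint expansions -/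

section SymmetricDifference

lemma add_sub_mem_closedBall {V : Type*} [SeminormedAddCommGroup V] {m v w : V}
    (hw : w ∈ Metric.closedBall (0 : V) ‖v‖) :
    m + w ∈ Metric.closedBall m ‖v‖ ∧ m - w ∈ Metric.closedBall m ‖v‖ := by
  simpa [dist_eq_norm] using hw

variable {V W : Type*} [NormedAddCommGroup V] [NormedSpace ℝ V] [NormedAddCommGroup W]
  [NormedSpace ℝ W] {F : V → W} {F' : V → V →L[ℝ] W} {m v : V} {L : ℝ}

lemma hasFDerivAt_comp_sub_left {w : V} {f' : V →L[ℝ] W} (hF : HasFDerivAt F f' (m - w)) :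
    HasFDerivAt (fun w => F (m - w)) (-f') w :=
  (hF.comp w ((hasFDerivAt_id w).const_sub m)).congr_fderiv <| by
    rw [ContinuousLinearMap.comp_neg, ContinuousLinearMap.comp_id]

lemma norm_apply_add_add_apply_sub_sub_le (hL₀ : 0 ≤ L)
    (hF : ∀ x ∈ Metric.closedBall m ‖v‖, HasFDerivAt F (F' x) x)
    (hL : ∀ x ∈ Metric.closedBall m ‖v‖, ∀ y ∈ Metric.closedBall m ‖v‖,
      ‖F' x - F' y‖ ≤ L * ‖x - y‖) :
    ‖F (m + v) + F (m - v) - (2 : ℝ) • F m‖ ≤ 2 * L * ‖v‖ ^ 2 := by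
  have hbound : ∀ w ∈ Metric.closedBall (0 : V) ‖v‖,
      ‖F' (m + w) + -F' (m - w)‖ ≤ 2 * L * ‖v‖ := by
    intro w hw
    obtain ⟨hadd, hsub⟩ := add_sub_mem_closedBall (m := m) hw
    rw [← sub_eq_add_neg]
    calc ‖F' (m + w) - F' (m - w)‖ ≤ L * ‖m + w - (m - w)‖ := hL _ hadd _ hsub
      _ = 2 * L * ‖w‖ := by
          rw [add_sub_sub_cancel, ← two_smul ℝ w, norm_smul, Real.norm_ofNat]
          ring
      _ ≤ 2 * L * ‖v‖ := by
          gcongr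
          exact mem_closedBall_zero_iff.1 hw
  have hmean := (convex_closedBall (0 : V) ‖v‖).norm_image_sub_le_of_norm_hasFDerivWithin_le
    (fun w hw => (((hasFDerivAt_comp_add_left m).2 (hF _ (add_sub_mem_closedBall hw).1)).fun_add
      (hasFDerivAt_comp_sub_left (hF _ (add_sub_mem_closedBall hw).2))).hasFDerivWithinAt) hbound
    (Metric.mem_closedBall_self (norm_nonneg v)) (mem_closedBall_zero_iff.2 le_rfl)
  rw [add_zero, sub_zero, sub_zero, ← two_smul ℝ (F m)] at hmean
  exact hmean.trans_eq (by ring)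

lemma norm_apply_add_sub_apply_sub_sub_le {F'' : V → V →L[ℝ] V →L[ℝ] W} (hL₀ : 0 ≤ L)
    (hF : ∀ x ∈ Metric.closedBall m ‖v‖, HasFDerivAt F (F' x) x)
    (hF' : ∀ x ∈ Metric.closedBall m ‖v‖, HasFDerivAt F' (F'' x) x)
    (hL : ∀ x ∈ Metric.closedBall m ‖v‖, ∀ y ∈ Metric.closedBall m ‖v‖,
      ‖F'' x - F'' y‖ ≤ L * ‖x - y‖) :
    ‖F (m + v) - F (m - v) - (2 : ℝ) • F' m v‖ ≤ 2 * L * ‖v‖ ^ 3 := by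
  have hbound : ∀ w ∈ Metric.closedBall (0 : V) ‖v‖,
      ‖F' (m + w) - -F' (m - w) - (2 : ℝ) • F' m‖ ≤ 2 * L * ‖v‖ ^ 2 := by
    intro w hw
    have hw' : ‖w‖ ≤ ‖v‖ := mem_closedBall_zero_iff.1 hw
    have hball := Metric.closedBall_subset_closedBall (x := m) hw'
    rw [sub_neg_eq_add]
    refine (norm_apply_add_add_apply_sub_sub_le hL₀ (fun x hx => hF' x (hball hx))
      fun x hx y hy => hL x (hball hx) y (hball hy)).trans ?_
    gcongr
  have hmean := (convex_closedBall (0 : V) ‖v‖).norm_image_sub_le_of_norm_hasFDerivWithin_le'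
    (fun w hw => (((hasFDerivAt_comp_add_left m).2 (hF _ (add_sub_mem_closedBall hw).1)).fun_sub
      (hasFDerivAt_comp_sub_left (hF _ (add_sub_mem_closedBall hw).2))).hasFDerivWithinAt) hbound
    (Metric.mem_closedBall_self (norm_nonneg v)) (mem_closedBall_zero_iff.2 le_rfl)
  rw [add_zero, sub_zero, sub_self, sub_zero, sub_zero] at hmean
  exact hmean.trans_eq (by ring)

end SymmetricDifference

section LevelPairEstimates

variable {V : Type*} [NormedAddCommGroup V] [NormedSpace ℝ V] {q : V → ℝ} {q' : V → V →L[ℝ] ℝ}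
  {q'' : V → V →L[ℝ] V →L[ℝ] ℝ} {S : Set V} {η p y : V} {L₂ : ℝ}

lemma abs_fderiv_apply_le_of_apply_add_eq {L₁ : ℝ} (hL₂₀ : 0 ≤ L₂)
    (hq : ∀ x ∈ S, HasFDerivAt q (q' x) x) (hq' : ∀ x ∈ S, HasFDerivAt q' (q'' x) x)
    (hL₁ : ∀ x ∈ S, ∀ z ∈ S, ‖q' x - q' z‖ ≤ L₁ * ‖x - z‖)
    (hL₂ : ∀ x ∈ S, ∀ z ∈ S, ‖q'' x - q'' z‖ ≤ L₂ * ‖x - z‖)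
    (hS : Metric.closedBall (p + (1 / 2 : ℝ) • η) (‖η‖ / 2) ⊆ S) (hy : y ∈ S)
    (hlevel : q (p + η) = q p) :
    |q' y η| ≤ (L₁ * ‖y - (p + (1 / 2 : ℝ) • η)‖ + L₂ * ‖η‖ ^ 2) * ‖η‖ := by
  set v := (1 / 2 : ℝ) • η with hv
  have hnorm : ‖v‖ = ‖η‖ / 2 := by
    rw [hv, norm_smul, Real.norm_of_nonneg (by norm_num)]
    ring
  have hdouble : (2 : ℝ) • v = η := by rw [hv, smul_smul]; norm_num
  have hmid : p + v ∈ S := hS (Metric.mem_closedBall_self (by positivity))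
  rw [← hnorm] at hS
  have hsymm := norm_apply_add_sub_apply_sub_sub_le hL₂₀ (fun x hx => hq x (hS hx))
    (fun x hx => hq' x (hS hx)) fun x hx z hz => hL₂ x (hS hx) z (hS hz)
  rw [add_assoc, ← two_smul ℝ v, hdouble, add_sub_cancel_right, hlevel, sub_self, zero_sub,
    norm_neg, ← map_smul, hdouble, hnorm] at hsymm
  calc |q' y η| = ‖(q' y - q' (p + v)) η + q' (p + v) η‖ := by
        rw [sub_apply, sub_add_cancel, Real.norm_eq_abs]
    _ ≤ ‖(q' y - q' (p + v)) η‖ + ‖q' (p + v) η‖ := norm_add_le _ _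
    _ ≤ L₁ * ‖y - (p + v)‖ * ‖η‖ + 2 * L₂ * (‖η‖ / 2) ^ 3 := by
        gcongr
        exact ((q' y - q' (p + v)).le_opNorm η).trans
          (mul_le_mul_of_nonneg_right (hL₁ y hy _ hmid) (norm_nonneg η))
    _ ≤ (L₁ * ‖y - (p + v)‖ + L₂ * ‖η‖ ^ 2) * ‖η‖ := by
        have hcube : 0 ≤ L₂ * ‖η‖ ^ 3 := by positivity
        linarith

/-- The increment `q (x + v) - q (x - v)`, as a function of `x`, is nearly affine. -/
lemma abs_increment_sub_le {v x x' : V} {δ : ℝ} (hδ : 0 ≤ δ) (hL₂₀ : 0 ≤ L₂)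
    (hq : ∀ x ∈ S, HasFDerivAt q (q' x) x) (hq' : ∀ x ∈ S, HasFDerivAt q' (q'' x) x)
    (hL₂ : ∀ x ∈ S, ∀ z ∈ S, ‖q'' x - q'' z‖ ≤ L₂ * ‖x - z‖)
    (hS : Metric.closedBall y (δ + ‖v‖) ⊆ S)
    (hx : x ∈ Metric.closedBall y δ) (hx' : x' ∈ Metric.closedBall y δ) :
    |q (x' + v) - q (x' - v) - (q (x + v) - q (x - v)) - (q' (y + v) - q' (y - v)) (x' - x)|
      ≤ 2 * L₂ * ‖v‖ * δ * ‖x' - x‖ := by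
  have hconv := convex_closedBall y δ
  have hadd : ∀ x ∈ Metric.closedBall y δ, x + v ∈ S := fun x hx => hS <| by
    rw [mem_closedBall_iff_norm, add_sub_right_comm]
    exact (norm_add_le _ _).trans (add_le_add_left (mem_closedBall_iff_norm.1 hx) _)
  have hsub : ∀ x ∈ Metric.closedBall y δ, x - v ∈ S := fun x hx => hS <| by
    rw [mem_closedBall_iff_norm, sub_right_comm]
    exact (norm_sub_le _ _).trans (add_le_add_left (mem_closedBall_iff_norm.1 hx) _)
  have hderiv : ∀ z ∈ Metric.closedBall y δ,
      ‖q' (z + v) - q' (z - v) - (q' (y + v) - q' (y - v))‖ ≤ 2 * L₂ * ‖v‖ * δ := by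
    intro z hz
    refine (hconv.norm_image_sub_le_of_norm_hasFDerivWithin_le (C := 2 * L₂ * ‖v‖)
      (fun x hx => (((hasFDerivAt_comp_add_right v).2 (hq' _ (hadd x hx))).fun_sub
        ((hasFDerivAt_comp_sub v).2 (hq' _ (hsub x hx)))).hasFDerivWithinAt) (fun x hx => ?_)
      (Metric.mem_closedBall_self hδ) hz).trans ?_
    · refine (hL₂ _ (hadd x hx) _ (hsub x hx)).trans_eq ?_
      rw [add_sub_sub_cancel, ← two_smul ℝ v, norm_smul, Real.norm_ofNat]
      ring
    · gcongr
      exact mem_closedBall_iff_norm.1 hz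
  exact hconv.norm_image_sub_le_of_norm_hasFDerivWithin_le'
    (fun x hx => (((hasFDerivAt_comp_add_right v).2 (hq _ (hadd x hx))).fun_sub
      ((hasFDerivAt_comp_sub v).2 (hq _ (hsub x hx)))).hasFDerivWithinAt) hderiv hx hx'

set_option maxSynthPendingDepth 6 in
lemma abs_hess_apply_sub_le_of_apply_add_eq {q''' : V → V →L[ℝ] V →L[ℝ] V →L[ℝ] ℝ} {p' : V}
    {L₃ δ : ℝ} (hL₂₀ : 0 ≤ L₂) (hL₃₀ : 0 ≤ L₃)
    (hq : ∀ x ∈ S, HasFDerivAt q (q' x) x) (hq' : ∀ x ∈ S, HasFDerivAt q' (q'' x) x)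
    (hq'' : ∀ x ∈ S, HasFDerivAt q'' (q''' x) x)
    (hL₂ : ∀ x ∈ S, ∀ z ∈ S, ‖q'' x - q'' z‖ ≤ L₂ * ‖x - z‖)
    (hL₃ : ∀ x ∈ S, ∀ z ∈ S, ‖q''' x - q''' z‖ ≤ L₃ * ‖x - z‖)
    (hS : Metric.closedBall y (δ + ‖η‖ / 2) ⊆ S)
    (hp : ‖y - (p + (1 / 2 : ℝ) • η)‖ ≤ δ) (hp' : ‖y - (p' + (1 / 2 : ℝ) • η)‖ ≤ δ)
    (hlevel : q (p + η) = q p) (hlevel' : q (p' + η) = q p') :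
    |q'' y η (p' - p)| ≤ (L₂ * δ + L₃ * ‖η‖ ^ 2) * ‖η‖ * ‖p' - p‖ := by
  have hδ : 0 ≤ δ := (norm_nonneg _).trans hp
  set v := (1 / 2 : ℝ) • η with hv
  have hnorm : ‖v‖ = ‖η‖ / 2 := by
    rw [hv, norm_smul, Real.norm_of_nonneg (by norm_num)]
    ring
  have hdouble : (2 : ℝ) • v = η := by rw [hv, smul_smul]; norm_num
  rw [← hnorm] at hS
  have hincr := abs_increment_sub_le (v := v) hδ hL₂₀ hq hq' hL₂ hS
    (mem_closedBall_iff_norm'.2 hp) (mem_closedBall_iff_norm'.2 hp')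
  rw [add_assoc, add_assoc, ← two_smul ℝ v, hdouble, add_sub_cancel_right, add_sub_cancel_right,
    hlevel, hlevel', sub_self, sub_self, sub_self, zero_sub, abs_neg, add_sub_add_right_eq_sub,
    hnorm] at hincr
  have hball : Metric.closedBall y ‖v‖ ⊆ S :=
    (Metric.closedBall_subset_closedBall (le_add_of_nonneg_left hδ)).trans hS
  have hsymm := norm_apply_add_sub_apply_sub_sub_le hL₃₀ (fun x hx => hq' x (hball hx))
    (fun x hx => hq'' x (hball hx)) fun x hx z hz => hL₃ x (hball hx) z (hball hz)
  rw [← map_smul, hdouble, hnorm, norm_sub_rev] at hsymm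
  calc |q'' y η (p' - p)|
      = |(q'' y η - (q' (y + v) - q' (y - v))) (p' - p) + (q' (y + v) - q' (y - v)) (p' - p)| := by
        rw [sub_apply, sub_add_cancel]
    _ ≤ 2 * L₃ * (‖η‖ / 2) ^ 3 * ‖p' - p‖ + 2 * L₂ * (‖η‖ / 2) * δ * ‖p' - p‖ :=
        (abs_add_le _ _).trans (add_le_add (ContinuousLinearMap.le_of_opNorm_le _ hsymm _) hincr)
    _ ≤ (L₂ * δ + L₃ * ‖η‖ ^ 2) * ‖η‖ * ‖p' - p‖ := by
        have hcube : 0 ≤ L₃ * ‖η‖ ^ 3 * ‖p' - p‖ := by positivity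
        linarith

end LevelPairEstimates

/-! ### Midpoint estimates for a homogeneous function -/

section Homogeneous

variable {V : Type*} [NormedAddCommGroup V] [NormedSpace ℝ V] {q : V → ℝ}

lemma fderiv_smul_of_homogeneous (hhom : ∀ t : ℝ, 0 < t → ∀ x, q (t • x) = t ^ 2 * q x) {t : ℝ}
    (ht : 0 < t) (y : V) : fderiv ℝ q (t • y) = t • fderiv ℝ q y := by
  have hscale : t • fderiv ℝ q (t • y) = t • t • fderiv ℝ q y := by
    rw [← fderiv_comp_smul, funext (hhom t ht), smul_smul, ← sq]
    exact congrFun (fderiv_const_smul_field (t ^ 2)) y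
  exact smul_right_injective _ ht.ne' hscale

lemma fderiv_fderiv_apply_self_of_homogeneous
    (hhom : ∀ t : ℝ, 0 < t → ∀ x, q (t • x) = t ^ 2 * q x) {y : V}
    (hq : DifferentiableAt ℝ (fderiv ℝ q) y) :
    fderiv ℝ (fderiv ℝ q) y y = fderiv ℝ q y := by
  have hray : HasDerivAt (fun t : ℝ => fderiv ℝ q (t • y)) (fderiv ℝ (fderiv ℝ q) y y) 1 := by
    have hline : HasDerivAt (fun t : ℝ => t • y) y 1 := by
      simpa only [one_smul, id] using (hasDerivAt_id (1 : ℝ)).smul_const y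
    refine HasFDerivAt.comp_hasDerivAt 1 ?_ hline
    rw [one_smul]
    exact hq.hasFDerivAt
  have hlinear : HasDerivAt (fun t : ℝ => t • fderiv ℝ q y) (fderiv ℝ q y) 1 := by
    simpa only [one_smul, id] using (hasDerivAt_id (1 : ℝ)).smul_const (fderiv ℝ q y)
  refine hray.unique (hlinear.congr_of_eventuallyEq ?_)
  filter_upwards [lt_mem_nhds zero_lt_one] with t ht using fderiv_smul_of_homogeneous hhom ht y

lemma fderiv_apply_self_of_homogeneous
    (hhom : ∀ t : ℝ, 0 < t → ∀ x, q (t • x) = t ^ 2 * q x) {y : V}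
    (hq : DifferentiableAt ℝ q y) : fderiv ℝ q y y = 2 * q y := by
  have hray : HasDerivAt (fun t : ℝ => q (t • y)) (fderiv ℝ q y y) 1 := by
    have hline : HasDerivAt (fun t : ℝ => t • y) y 1 := by
      simpa only [one_smul, id] using (hasDerivAt_id (1 : ℝ)).smul_const y
    refine HasFDerivAt.comp_hasDerivAt 1 ?_ hline
    rw [one_smul]
    exact hq.hasFDerivAt
  have hsquare : HasDerivAt (fun t : ℝ => t ^ 2 * q y) (2 * q y) 1 := by
    simpa using (hasDerivAt_pow 2 (1 : ℝ)).mul_const (q y)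
  refine hray.unique (hsquare.congr_of_eventuallyEq ?_)
  filter_upwards [lt_mem_nhds zero_lt_one] with t ht using hhom t ht y

lemma fderiv_fderiv_smul_of_homogeneous
    (hhom : ∀ t : ℝ, 0 < t → ∀ x, q (t • x) = t ^ 2 * q x) {t : ℝ} (ht : 0 < t) (y : V) :
    fderiv ℝ (fderiv ℝ q) (t • y) = fderiv ℝ (fderiv ℝ q) y := by
  have hscale : t • fderiv ℝ (fderiv ℝ q) (t • y) = t • fderiv ℝ (fderiv ℝ q) y := by
    rw [← fderiv_comp_smul, funext (fderiv_smul_of_homogeneous hhom ht)]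
    exact congrFun (fderiv_const_smul_field (f := fderiv ℝ q) t) y
  exact smul_right_injective _ ht.ne' hscale

end Homogeneous

section PositiveDefinite

variable {V : Type*} [NormedAddCommGroup V] [NormedSpace ℝ V]

lemma injOn_of_hasFDerivAt_pos {S : Set V} (hS : Convex ℝ S) {q' : V → V →L[ℝ] ℝ}
    {q'' : V → V →L[ℝ] V →L[ℝ] ℝ} (hq' : ∀ x ∈ S, HasFDerivAt q' (q'' x) x)
    (hpos : ∀ x ∈ S, ∀ v, v ≠ 0 → 0 < q'' x v v) : InjOn q' S := by
  intro x hx y hy hxy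
  by_contra hne
  have hseg : ∀ t ∈ Icc (0 : ℝ) 1, AffineMap.lineMap x y t ∈ S := fun t ht =>
    hS.lineMap_mem hx hy ht
  have hderiv : ∀ t ∈ Icc (0 : ℝ) 1,
      HasDerivAt (fun t : ℝ => q' (AffineMap.lineMap x y t) (y - x))
        (q'' (AffineMap.lineMap x y t) (y - x) (y - x)) t := fun t ht =>
    ((ContinuousLinearMap.apply ℝ ℝ (y - x)).hasFDerivAt.comp_hasDerivAt t
      ((hq' _ (hseg t ht)).comp_hasDerivAt t AffineMap.hasDerivAt_lineMap))
  obtain ⟨t, ht, hzero⟩ := exists_hasDerivAt_eq_zero zero_lt_one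
    (fun t ht => (hderiv t ht).continuousAt.continuousWithinAt)
    (by rw [AffineMap.lineMap_apply_zero, AffineMap.lineMap_apply_one, hxy])
    fun t ht => hderiv t (Ioo_subset_Icc_self ht)
  exact (hpos _ (hseg t (Ioo_subset_Icc_self ht)) _ (sub_ne_zero.2 (Ne.symm hne))).ne' hzero

lemma exists_mul_sq_norm_le_of_isCompact [ProperSpace V] {X : Type*} [TopologicalSpace X]
    {S : Set X} (hS : IsCompact S) {b : X → V →L[ℝ] V →L[ℝ] ℝ} (hb : ContinuousOn b S)
    (hpos : ∀ x ∈ S, ∀ v, v ≠ 0 → 0 < b x v v) :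
    ∃ c : ℝ, 0 < c ∧ ∀ x ∈ S, ∀ v, c * ‖v‖ ^ 2 ≤ b x v v := by
  have hcont : ContinuousOn (fun p : X × V => b p.1 p.2 p.2) (S ×ˢ Metric.sphere (0 : V) 1) :=
    ((hb.comp continuousOn_fst fun p hp => hp.1).clm_apply continuousOn_snd).clm_apply
      continuousOn_snd
  obtain ⟨c, hc, hmin⟩ := (hS.prod (isCompact_sphere 0 1)).exists_forall_le' hcont (a := 0)
    fun p hp => hpos p.1 hp.1 p.2 (ne_zero_of_mem_unit_sphere ⟨p.2, hp.2⟩)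
  refine ⟨c, hc, fun x hx v => ?_⟩
  rcases eq_or_ne v 0 with rfl | hv
  · simp
  have hunit := hmin (x, ‖v‖⁻¹ • v) ⟨hx, mem_sphere_zero_iff_norm.2 (norm_smul_inv_norm hv)⟩
  simp only [map_smul, smul_apply, smul_eq_mul] at hunit
  have hnorm : ‖v‖ ≠ 0 := norm_ne_zero_iff.2 hv
  calc c * ‖v‖ ^ 2 ≤ ‖v‖⁻¹ * (‖v‖⁻¹ * b x v v) * ‖v‖ ^ 2 := by gcongr
    _ = b x v v := by field_simp [hnorm]

lemma exists_le_abs_det_of_isCompact {X : Type*} [TopologicalSpace X] [FiniteDimensional ℝ V]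
    {S : Set X} (hS : IsCompact S) {A : X → V →L[ℝ] V} (hA : ContinuousOn A S) {c : ℝ} (hc : 0 < c)
    (hlow : ∀ x ∈ S, ∀ v, c * ‖v‖ ≤ ‖A x v‖) :
    ∃ e : ℝ, 0 < e ∧ ∀ x ∈ S, e ≤ |(A x).det| := by
  refine hS.exists_forall_le' (ContinuousLinearMap.continuous_det.comp_continuousOn hA).abs
    fun x hx => abs_pos.2 fun hdet => ?_
  obtain ⟨v, hv, hv₀⟩ := Submodule.exists_mem_ne_zero_of_ne_bot
    (LinearMap.bot_lt_ker_of_det_eq_zero (f := (A x : V →ₗ[ℝ] V)) hdet).ne'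
  have hker : ‖A x v‖ = 0 := norm_eq_zero.2 hv
  exact absurd (hlow x hx v) (by rw [hker, not_le]; positivity)

lemma ofReal_mul_measure_le_measure_image [MeasurableSpace V] [BorelSpace V]
    [FiniteDimensional ℝ V] (μ : Measure V) [μ.IsAddHaarMeasure] {f : V → V} {f' : V → V →L[ℝ] V}
    {s : Set V} {e : ℝ} (hs : MeasurableSet s) (hf : ∀ x ∈ s, HasFDerivAt f (f' x) x)
    (hinj : InjOn f s) (he : ∀ x ∈ s, e ≤ |(f' x).det|) :
    ENNReal.ofReal e * μ s ≤ μ (f '' s) := by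
  rw [← lintegral_abs_det_fderiv_eq_addHaar_image μ hs
    (fun x hx => (hf x hx).hasFDerivWithinAt) hinj, ← setLIntegral_const]
  exact setLIntegral_mono' hs fun x hx => ENNReal.ofReal_le_ofReal (he x hx)

end PositiveDefinite

/-- The open half space of points with positive last coordinate, in which the level function is
smooth. -/
def halfSpace : Set (Fin 3 → ℝ) := {y | 0 < y 2}

lemma isOpen_halfSpace : IsOpen halfSpace := isOpen_lt continuous_const (continuous_apply 2)

lemma outerBox_subset_halfSpace : outerBox ⊆ halfSpace := fun _ hy =>
  lt_of_lt_of_le (by norm_num) (mem_outerBox.1 hy).2.2.1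

lemma convex_outerBox : Convex ℝ outerBox := convex_Icc _ _

lemma exists_bound_and_lipschitz_on_outerBox {W : Type*} [NormedAddCommGroup W] [NormedSpace ℝ W]
    {F : (Fin 3 → ℝ) → W} (hF : ContDiffOn ℝ 1 F halfSpace) :
    ∃ M : ℝ, 0 ≤ M ∧ (∀ x ∈ outerBox, ‖F x‖ ≤ M) ∧
      ∀ x ∈ outerBox, ∀ y ∈ outerBox, ‖F x - F y‖ ≤ M * ‖x - y‖ := by
  obtain ⟨M₁, hM₁⟩ := isCompact_outerBox.exists_bound_of_continuousOn
    (hF.continuousOn.mono outerBox_subset_halfSpace)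
  obtain ⟨M₂, hM₂⟩ := isCompact_outerBox.exists_bound_of_continuousOn
    ((hF.continuousOn_fderiv_of_isOpen isOpen_halfSpace le_rfl).mono outerBox_subset_halfSpace)
  refine ⟨max 0 (max M₁ M₂), le_max_left _ _, fun x hx => (hM₁ x hx).trans ?_,
    fun x hx y hy => ?_⟩
  · exact (le_max_left _ _).trans (le_max_right _ _)
  · exact convex_outerBox.norm_image_sub_le_of_norm_fderiv_le (𝕜 := ℝ)
      (fun z hz => (hF.differentiableOn one_ne_zero).differentiableAt
        (isOpen_halfSpace.mem_nhds (outerBox_subset_halfSpace hz)))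
      (fun z hz => (hM₂ z hz).trans ((le_max_right _ _).trans (le_max_right _ _))) hy hx

section DotProductRepresentative

variable {ι : Type*} [Fintype ι] [DecidableEq ι]

/-- The vector representing a linear functional through the dot product. -/
def dotRepr : ((ι → ℝ) →L[ℝ] ℝ) →L[ℝ] (ι → ℝ) :=
  ContinuousLinearMap.pi fun i => ContinuousLinearMap.apply ℝ ℝ (Pi.single i 1)

lemma dotRepr_dotProduct (φ : (ι → ℝ) →L[ℝ] ℝ) (v : ι → ℝ) : dotRepr φ ⬝ᵥ v = φ v := by
  conv_rhs => rw [← (Pi.basisFun ℝ ι).sum_repr v, map_sum]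
  refine Finset.sum_congr rfl fun i _ => ?_
  rw [map_smul, smul_eq_mul, mul_comm, Pi.basisFun_repr, Pi.basisFun_apply]
  rfl

lemma norm_dotRepr_le (φ : (ι → ℝ) →L[ℝ] ℝ) : ‖dotRepr φ‖ ≤ ‖φ‖ :=
  (pi_norm_le_iff_of_nonneg (norm_nonneg φ)).2 fun i =>
    φ.unit_le_opNorm _ (by rw [Pi.norm_single, norm_one])

end DotProductRepresentative

/-- The gradient of `q`, with respect to the dot product. -/
def grad (q : (Fin 3 → ℝ) → ℝ) (y : Fin 3 → ℝ) : Fin 3 → ℝ := dotRepr (fderiv ℝ q y)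

/-- The Hessian of `q` as an operator, with respect to the dot product. -/
def hess (q : (Fin 3 → ℝ) → ℝ) (y : Fin 3 → ℝ) : (Fin 3 → ℝ) →L[ℝ] (Fin 3 → ℝ) :=
  dotRepr ∘L fderiv ℝ (fderiv ℝ q) y

section

variable {q : (Fin 3 → ℝ) → ℝ} {y h v : Fin 3 → ℝ}

lemma grad_dotProduct : grad q y ⬝ᵥ v = fderiv ℝ q y v := dotRepr_dotProduct _ v

lemma hess_apply_dotProduct : hess q y h ⬝ᵥ v = fderiv ℝ (fderiv ℝ q) y h v :=
  dotRepr_dotProduct _ v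

lemma hasFDerivAt_grad (hq : DifferentiableAt ℝ (fderiv ℝ q) y) :
    HasFDerivAt (grad q) (hess q y) y :=
  dotRepr.hasFDerivAt.comp y hq.hasFDerivAt

lemma injOn_grad {S : Set (Fin 3 → ℝ)} (h : InjOn (fderiv ℝ q) S) : InjOn (grad q) S :=
  fun x hx y hy hxy => h hx hy <| ContinuousLinearMap.ext fun v => by
    rw [← grad_dotProduct, hxy, grad_dotProduct]

lemma hess_dotProduct_self (hhom : ∀ t : ℝ, 0 < t → ∀ x, q (t • x) = t ^ 2 * q x)
    (hq : ContDiffAt ℝ 2 q y) : hess q y h ⬝ᵥ y = grad q y ⬝ᵥ h := by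
  have hsymm : IsSymmSndFDerivAt ℝ q y := hq.isSymmSndFDerivAt (by simp)
  rw [hess_apply_dotProduct, hsymm.eq, grad_dotProduct, fderiv_fderiv_apply_self_of_homogeneous hhom
    ((hq.fderiv_right le_rfl).differentiableAt one_ne_zero)]

end

lemma closedBall_subset_outerBox {p x : Fin 3 → ℝ} {r : ℝ} (hp : p ∈ innerBox)
    (hr : ‖x - p‖ + r ≤ 1 / 4) : Metric.closedBall x r ⊆ outerBox := fun y hy => by
  refine mem_outerBox_of_norm_sub_le hp ?_
  calc ‖y - p‖ ≤ ‖y - x‖ + ‖x - p‖ := norm_sub_le_norm_sub_add_norm_sub y x p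
    _ ≤ 1 / 4 := by linarith [mem_closedBall_iff_norm.1 hy]

lemma norm_midpoint_sub (p η : Fin 3 → ℝ) : ‖p + (1 / 2 : ℝ) • η - p‖ = ‖η‖ / 2 := by
  rw [add_sub_cancel_left, norm_smul, Real.norm_of_nonneg (by norm_num)]
  ring

lemma hasFDerivAt_of_mem_outerBox {W : Type*} [NormedAddCommGroup W] [NormedSpace ℝ W]
    {F : (Fin 3 → ℝ) → W} {x : Fin 3 → ℝ} (hF : ContDiffOn ℝ 1 F halfSpace) (hx : x ∈ outerBox) :
    HasFDerivAt F (fderiv ℝ F x) x :=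
  ((hF.differentiableOn one_ne_zero).differentiableAt
    (isOpen_halfSpace.mem_nhds (outerBox_subset_halfSpace hx))).hasFDerivAt

section

variable {q : (Fin 3 → ℝ) → ℝ}

lemma exists_hess_bounds (hq : ContDiffOn ℝ 2 q halfSpace)
    (hpos : ∀ x ∈ halfSpace, ∀ v, v ≠ 0 → 0 < fderiv ℝ (fderiv ℝ q) x v v) :
    ∃ c : ℝ, 0 < c ∧ (∀ y ∈ outerBox, ∀ h, c * ‖h‖ ≤ ‖hess q y h‖) ∧
      ∀ y ∈ outerBox, c ≤ |(hess q y).det| := by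
  have hcont : ContinuousOn (fderiv ℝ (fderiv ℝ q)) outerBox :=
    ((hq.fderiv_of_isOpen isOpen_halfSpace (m := 1) le_rfl).continuousOn_fderiv_of_isOpen
      isOpen_halfSpace le_rfl).mono outerBox_subset_halfSpace
  obtain ⟨c, hc, hlow⟩ := exists_mul_sq_norm_le_of_isCompact isCompact_outerBox hcont
    fun y hy => hpos y (outerBox_subset_halfSpace hy)
  have hhess : ∀ y ∈ outerBox, ∀ h, c / 3 * ‖h‖ ≤ ‖hess q y h‖ := by
    intro y hy h
    rcases eq_or_ne h 0 with rfl | hne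
    · simp
    have hnorm := norm_pos_iff.2 hne
    have hdot : c * ‖h‖ ^ 2 ≤ 3 * (‖hess q y h‖ * ‖h‖) :=
      calc c * ‖h‖ ^ 2 ≤ hess q y h ⬝ᵥ h := (hlow y hy h).trans_eq hess_apply_dotProduct.symm
        _ ≤ 3 * (‖hess q y h‖ * ‖h‖) := by
            simpa using (le_abs_self _).trans (abs_dotProduct_le (hess q y h) h)
    nlinarith
  obtain ⟨e, he, hdet⟩ := exists_le_abs_det_of_isCompact isCompact_outerBox
    (continuousOn_const.clm_comp hcont : ContinuousOn (hess q) outerBox) (by positivity) hhess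
  refine ⟨min (c / 3) e, by positivity, fun y hy h => (hhess y hy h).trans' ?_,
    fun y hy => (min_le_right _ _).trans (hdet y hy)⟩
  gcongr
  exact min_le_left _ _

lemma ofReal_mul_volume_le_volume_image_grad (hq : ContDiffOn ℝ 2 q halfSpace)
    (hpos : ∀ x ∈ halfSpace, ∀ v, v ≠ 0 → 0 < fderiv ℝ (fderiv ℝ q) x v v)
    {c : ℝ} (hdet : ∀ y ∈ outerBox, c ≤ |(hess q y).det|) {s : Set (Fin 3 → ℝ)}
    (hs : s ⊆ outerBox) (hs' : MeasurableSet s) :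
    ENNReal.ofReal c * volume s ≤ volume (grad q '' s) := by
  have hderiv := fun y => hasFDerivAt_of_mem_outerBox (x := y)
    (hq.fderiv_of_isOpen isOpen_halfSpace (m := 1) le_rfl)
  refine ofReal_mul_measure_le_measure_image volume hs'
    (fun y hy => hasFDerivAt_grad (hderiv y (hs hy)).differentiableAt)
    ((injOn_grad ?_).mono hs) fun y hy => hdet y (hs hy)
  exact injOn_of_hasFDerivAt_pos convex_outerBox hderiv
    fun y hy => hpos y (outerBox_subset_halfSpace hy)

lemma abs_grad_dotProduct_le {L₁ L₂ δ : ℝ} {p y η : Fin 3 → ℝ} (hq : ContDiffOn ℝ 2 q halfSpace)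
    (hL₁₀ : 0 ≤ L₁) (hL₂₀ : 0 ≤ L₂)
    (hL₁ : ∀ x ∈ outerBox, ∀ z ∈ outerBox, ‖fderiv ℝ q x - fderiv ℝ q z‖ ≤ L₁ * ‖x - z‖)
    (hL₂ : ∀ x ∈ outerBox, ∀ z ∈ outerBox,
      ‖fderiv ℝ (fderiv ℝ q) x - fderiv ℝ (fderiv ℝ q) z‖ ≤ L₂ * ‖x - z‖)
    (hp : p ∈ innerBox) (hδ : δ ≤ 1 / 16) (hη : ‖η‖ ≤ 1 / 16) (hηδ : ‖η‖ ^ 2 ≤ δ)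
    (hy : ‖y - (p + (1 / 2 : ℝ) • η)‖ ≤ δ) (hlevel : q (p + η) = q p) :
    |grad q y ⬝ᵥ η| ≤ (L₁ + L₂) * δ * ‖η‖ := by
  have hmid := norm_midpoint_sub p η
  have hbound := abs_fderiv_apply_le_of_apply_add_eq hL₂₀
    (fun x => hasFDerivAt_of_mem_outerBox (hq.of_le one_le_two))
    (fun x => hasFDerivAt_of_mem_outerBox (hq.fderiv_of_isOpen isOpen_halfSpace le_rfl))
    hL₁ hL₂ (closedBall_subset_outerBox hp (by linarith))
    (closedBall_subset_outerBox hp (by linarith) (mem_closedBall_iff_norm.2 hy)) hlevel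
  calc |grad q y ⬝ᵥ η| = |fderiv ℝ q y η| := by rw [grad_dotProduct]
    _ ≤ (L₁ * δ + L₂ * δ) * ‖η‖ := hbound.trans (by gcongr)
    _ = (L₁ + L₂) * δ * ‖η‖ := by ring

set_option maxSynthPendingDepth 6 in
lemma abs_hess_dotProduct_sub_le {L₂ L₃ δ : ℝ} {p p' y η : Fin 3 → ℝ}
    (hq : ContDiffOn ℝ 3 q halfSpace) (hL₂₀ : 0 ≤ L₂) (hL₃₀ : 0 ≤ L₃)
    (hL₂ : ∀ x ∈ outerBox, ∀ z ∈ outerBox,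
      ‖fderiv ℝ (fderiv ℝ q) x - fderiv ℝ (fderiv ℝ q) z‖ ≤ L₂ * ‖x - z‖)
    (hL₃ : ∀ x ∈ outerBox, ∀ z ∈ outerBox,
      ‖fderiv ℝ (fderiv ℝ (fderiv ℝ q)) x - fderiv ℝ (fderiv ℝ (fderiv ℝ q)) z‖ ≤ L₃ * ‖x - z‖)
    (hp : p ∈ innerBox) (hδ : δ ≤ 1 / 16) (hη : ‖η‖ ≤ 1 / 16) (hηδ : ‖η‖ ^ 2 ≤ δ)
    (hy : ‖y - (p + (1 / 2 : ℝ) • η)‖ ≤ δ) (hy' : ‖y - (p' + (1 / 2 : ℝ) • η)‖ ≤ δ)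
    (hlevel : q (p + η) = q p) (hlevel' : q (p' + η) = q p') :
    |hess q y η ⬝ᵥ (p' - p)| ≤ (2 * L₂ + 2 * L₃) * δ ^ 2 * ‖η‖ := by
  have hδ₀ : 0 ≤ δ := (norm_nonneg _).trans hy
  have hmid := norm_midpoint_sub p η
  have hyp : ‖y - p‖ ≤ δ + ‖η‖ / 2 :=
    (norm_sub_le_norm_sub_add_norm_sub _ (p + (1 / 2 : ℝ) • η) _).trans (add_le_add hy hmid.le)
  have hpp : ‖p' - p‖ ≤ 2 * δ := by
    rw [← add_sub_add_right_eq_sub p' p ((1 / 2 : ℝ) • η)]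
    refine (norm_sub_le_norm_sub_add_norm_sub _ y _).trans ?_
    rw [norm_sub_rev _ y]
    linarith
  have hq₁ : ContDiffOn ℝ 2 (fderiv ℝ q) halfSpace :=
    hq.fderiv_of_isOpen isOpen_halfSpace (by norm_num)
  have hbound := abs_hess_apply_sub_le_of_apply_add_eq hL₂₀ hL₃₀
    (fun x => hasFDerivAt_of_mem_outerBox (hq.of_le (by norm_num)))
    (fun x => hasFDerivAt_of_mem_outerBox (hq₁.of_le one_le_two))
    (fun x => hasFDerivAt_of_mem_outerBox (hq₁.fderiv_of_isOpen isOpen_halfSpace le_rfl))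
    hL₂ hL₃ (closedBall_subset_outerBox hp (by linarith)) hy hy' hlevel hlevel'
  calc |hess q y η ⬝ᵥ (p' - p)| = |fderiv ℝ (fderiv ℝ q) y η (p' - p)| := by
        rw [hess_apply_dotProduct]
    _ ≤ (L₂ * δ + L₃ * δ) * ‖η‖ * (2 * δ) := hbound.trans (by gcongr)
    _ = (2 * L₂ + 2 * L₃) * δ ^ 2 * ‖η‖ := by ring

set_option maxSynthPendingDepth 6 in
theorem exists_midpointEstimates (hq : ContDiffOn ℝ 4 q halfSpace)
    (hhom : ∀ t : ℝ, 0 < t → ∀ x, q (t • x) = t ^ 2 * q x)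
    (hpos : ∀ x ∈ halfSpace, ∀ v, v ≠ 0 → 0 < fderiv ℝ (fderiv ℝ q) x v v) :
    ∃ lam M, MidpointEstimates q (grad q) (hess q) lam M := by
  have hU := isOpen_halfSpace
  have hq₁ : ContDiffOn ℝ 3 (fderiv ℝ q) halfSpace := hq.fderiv_of_isOpen hU (by norm_num)
  have hq₂ : ContDiffOn ℝ 2 (fderiv ℝ (fderiv ℝ q)) halfSpace :=
    hq₁.fderiv_of_isOpen hU (by norm_num)
  have hq₃ : ContDiffOn ℝ 1 (fderiv ℝ (fderiv ℝ (fderiv ℝ q))) halfSpace :=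
    hq₂.fderiv_of_isOpen hU (by norm_num)
  obtain ⟨M₁, hM₁, hb₁, hL₁⟩ := exists_bound_and_lipschitz_on_outerBox (hq₁.of_le (by norm_num))
  obtain ⟨M₂, hM₂, hb₂, hL₂⟩ := exists_bound_and_lipschitz_on_outerBox (hq₂.of_le (by norm_num))
  obtain ⟨M₃, hM₃, -, hL₃⟩ := exists_bound_and_lipschitz_on_outerBox hq₃
  have hq' : ContDiffOn ℝ 2 q halfSpace := hq.of_le (by norm_num)
  have hgrad := fun y hy => hasFDerivAt_grad
    (hasFDerivAt_of_mem_outerBox (x := y) (hq₁.of_le (by norm_num)) hy).differentiableAt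
  obtain ⟨c, hc, hlow, hdet⟩ := exists_hess_bounds hq' hpos
  refine ⟨min 1 c, 1 + M₁ + 2 * M₂ + 2 * M₃, by positivity, min_le_left _ _, by linarith,
    continuousOn_const.clm_comp (hq₂.continuousOn.mono outerBox_subset_halfSpace),
    fun y hy => (hgrad y hy).continuousAt.continuousWithinAt,
    fun y hy => (norm_dotRepr_le _).trans ((hb₁ y hy).trans (by linarith)),
    fun y hy h => (norm_dotRepr_le _).trans
      (ContinuousLinearMap.le_of_opNorm_le _ ((hb₂ y hy).trans (by linarith)) h),
    fun y hy h => (hlow y hy h).trans' (by gcongr; exact min_le_right _ _),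
    fun y hy h => hess_dotProduct_self hhom
      (hq'.contDiffAt (hU.mem_nhds (outerBox_subset_halfSpace hy))),
    fun s hs hs' => (ofReal_mul_volume_le_volume_image_grad hq' hpos hdet hs hs').trans'
      (by gcongr; exact min_le_right _ _), ?_, ?_⟩
  · intro p hp y η δ hδ hη hηδ hy hlevel
    have hδ₀ : 0 ≤ δ := (norm_nonneg _).trans hy
    refine (abs_grad_dotProduct_le hq' hM₁ hM₂ hL₁ hL₂ hp hδ hη hηδ hy hlevel).trans ?_
    exact mul_le_mul_of_nonneg_right (mul_le_mul_of_nonneg_right (by linarith) hδ₀) (norm_nonneg η)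
  · intro p hp p' _ y η δ hδ hη hηδ hy hy' hlevel hlevel'
    refine (abs_hess_dotProduct_sub_le (hq.of_le (by norm_num)) hM₂ hM₃ hL₂ hL₃ hp hδ hη hηδ hy hy'
      hlevel hlevel').trans ?_
    gcongr
    linarith

end

/-! ### The Hessian of the squared gauge -/

section CurvesInLevelSets

variable {E : Type*} [NormedAddCommGroup E] [NormedSpace ℝ E] {F : E → ℝ} {w : ℝ → E} {t c : ℝ}

lemma fderiv_apply_deriv_eq_zero (hF : DifferentiableAt ℝ F (w t)) (hw : DifferentiableAt ℝ w t)
    (hlevel : ∀ᶠ s in 𝓝 t, F (w s) = c) : fderiv ℝ F (w t) (deriv w t) = 0 :=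
  (hF.hasFDerivAt.comp_hasDerivAt t hw.hasDerivAt).unique
    ((hasDerivAt_const t c).congr_of_eventuallyEq hlevel)

lemma fderiv_fderiv_apply_deriv_add_eq_zero (hF : ContDiffAt ℝ 2 F (w t))
    (hw : ContDiffAt ℝ 2 w t) (hlevel : ∀ᶠ s in 𝓝 t, F (w s) = c) :
    fderiv ℝ (fderiv ℝ F) (w t) (deriv w t) (deriv w t) + fderiv ℝ F (w t) (deriv (deriv w) t)
      = 0 := by
  have hF' : ∀ᶠ s in 𝓝 t, DifferentiableAt ℝ F (w s) := hw.continuousAt.eventually <|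
    (hF.eventually (by simp)).mono fun y hy => hy.differentiableAt two_ne_zero
  have hw' : ∀ᶠ s in 𝓝 t, DifferentiableAt ℝ w s :=
    (hw.eventually (by simp)).mono fun s hs => hs.differentiableAt two_ne_zero
  have hfirst : ∀ᶠ s in 𝓝 t, fderiv ℝ F (w s) (deriv w s) = 0 := by
    filter_upwards [hF', hw', hlevel.eventually_nhds] with s hFs hws hs using
      fderiv_apply_deriv_eq_zero hFs hws hs
  have hF'' : HasFDerivAt (fderiv ℝ F) (fderiv ℝ (fderiv ℝ F) (w t)) (w t) :=
    ((hF.fderiv_right (m := 1) le_rfl).differentiableAt one_ne_zero).hasFDerivAt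
  have hw'' : HasDerivAt (deriv w) (deriv (deriv w) t) t :=
    ((hw.derivWithin (m := 1) le_rfl).differentiableAt one_ne_zero).hasDerivAt
  exact ((hF''.comp_hasDerivAt t (hw.differentiableAt two_ne_zero).hasDerivAt).clm_apply
    hw'').unique ((hasDerivAt_const t (0 : ℝ)).congr_of_eventuallyEq hfirst)

end CurvesInLevelSets

lemma apply_self_pos_of_pos_on_ker {E : Type*} [NormedAddCommGroup E] [NormedSpace ℝ E]
    {B : E →L[ℝ] E →L[ℝ] ℝ} {z v : E} (hsymm : ∀ x y, B x y = B y x) (hz : 0 < B z z)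
    (hker : ∀ p, B z p = 0 → p ≠ 0 → 0 < B p p) (hv : v ≠ 0) : 0 < B v v := by
  set s := B z v / B z z
  set p := v - s • z with hp
  have hzp : B z p = 0 := by
    rw [hp, map_sub, map_smul, smul_eq_mul, div_mul_cancel₀ _ hz.ne', sub_self]
  have hsplit : B v v = s ^ 2 * B z z + B p p := by
    have hvp : v = s • z + p := (add_sub_cancel (s • z) v).symm
    rw [hvp]
    simp only [map_add, map_smul, add_apply, smul_apply, smul_eq_mul, hsymm p z, hzp]
    ring
  rw [hsplit]
  rcases eq_or_ne p 0 with hp0 | hp0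
  · have hs : s ≠ 0 := by
      rintro hs
      rw [hp, hs, zero_smul, sub_zero] at hp0
      exact hv hp0
    rw [hp0, map_zero, add_zero]
    positivity
  · have := hker p hzp hp0
    positivity

/-- A bounded open convex neighbourhood `Ω` of the origin with a defining function `f` of class
`C⁴`, regular on the boundary. Nonvanishing Gaussian curvature of the convex hypersurface `∂Ω` is
expressed by positivity of the Hessian of `f` on tangent vectors. -/
structure SmoothBody {E : Type*} [NormedAddCommGroup E] [NormedSpace ℝ E] (Ω : Set E)
    (f : E → ℝ) : Prop where
  convex : Convex ℝ Ω
  isOpen : IsOpen Ω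
  isBounded : Bornology.IsBounded Ω
  zero_mem : (0 : E) ∈ Ω
  contDiff : ContDiff ℝ 4 f
  eq_sublevel : Ω = {x | f x < 0}
  fderiv_ne_zero : ∀ x ∈ frontier Ω, fderiv ℝ f x ≠ 0
  fderiv_fderiv_pos : ∀ x ∈ frontier Ω, ∀ v : E, v ≠ 0 →
    fderiv ℝ f x v = 0 → 0 < fderiv ℝ (fun y => fderiv ℝ f y v) x v

namespace SmoothBody

variable {E : Type*} [NormedAddCommGroup E] [NormedSpace ℝ E] {Ω : Set E} {f : E → ℝ} {x z : E}

lemma mem_nhds (h : SmoothBody Ω f) : Ω ∈ 𝓝 (0 : E) := h.isOpen.mem_nhds h.zero_mem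

lemma gauge_pos (h : SmoothBody Ω f) (hx : x ≠ 0) : 0 < gauge Ω x :=
  (_root_.gauge_pos (absorbent_nhds_zero h.mem_nhds)
    (NormedSpace.isVonNBounded_of_isBounded ℝ h.isBounded)).2 hx

lemma gauge_eq_one_iff (h : SmoothBody Ω f) : gauge Ω z = 1 ↔ z ∈ frontier Ω :=
  gauge_eq_one_iff_mem_frontier h.convex h.mem_nhds

lemma ne_zero_of_mem_frontier (h : SmoothBody Ω f) (hz : z ∈ frontier Ω) : z ≠ 0 := by
  rintro rfl
  exact hz.2 (h.isOpen.interior_eq.symm ▸ h.zero_mem)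

lemma inv_gauge_smul_mem_frontier (h : SmoothBody Ω f) (hx : x ≠ 0) :
    (gauge Ω x)⁻¹ • x ∈ frontier Ω := by
  have hpos := h.gauge_pos hx
  rw [← h.gauge_eq_one_iff, gauge_smul_of_nonneg (inv_nonneg.2 hpos.le), smul_eq_mul,
    inv_mul_cancel₀ hpos.ne']

lemma differentiableAt (h : SmoothBody Ω f) : DifferentiableAt ℝ f x :=
  h.contDiff.differentiable (by norm_num) x

lemma apply_nonpos (h : SmoothBody Ω f) (hz : z ∈ closure Ω) : f z ≤ 0 := by
  refine closure_minimal (fun y hy => ?_) (isClosed_le h.contDiff.continuous continuous_const) hz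
  rw [h.eq_sublevel] at hy
  exact (show f y < 0 from hy).le

lemma apply_eq_zero (h : SmoothBody Ω f) (hz : z ∈ frontier Ω) : f z = 0 := by
  refine le_antisymm (h.apply_nonpos hz.1) (not_lt.1 fun hneg => hz.2 ?_)
  rw [h.isOpen.interior_eq, h.eq_sublevel]
  exact hneg

-- Over `closure Ω`, the function `f` attains its maximum at `z`.
lemma fderiv_apply_le (h : SmoothBody Ω f) (hz : z ∈ frontier Ω) {v : E} (hv : v ∈ Ω) :
    fderiv ℝ f z v ≤ fderiv ℝ f z z := by
  have hmax : IsLocalMaxOn f (closure Ω) z := by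
    filter_upwards [self_mem_nhdsWithin] with y hy
    rw [h.apply_eq_zero hz]
    exact h.apply_nonpos hy
  have hdir := hmax.hasFDerivWithinAt_nonpos h.differentiableAt.hasFDerivAt.hasFDerivWithinAt
    (sub_mem_posTangentConeAt_of_segment_subset
      (h.convex.closure.segment_subset hz.1 (subset_closure hv)))
  rwa [map_sub, sub_nonpos] at hdir

lemma fderiv_apply_self_pos (h : SmoothBody Ω f) (hz : z ∈ frontier Ω) :
    0 < fderiv ℝ f z z := by
  obtain ⟨w, hw⟩ : ∃ w, 0 < fderiv ℝ f z w := by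
    by_contra! hnonpos
    refine h.fderiv_ne_zero z hz (ContinuousLinearMap.ext fun v => le_antisymm (hnonpos v) ?_)
    simpa using hnonpos (-v)
  have hlim : Filter.Tendsto (fun s : ℝ => s • w) (𝓝[>] 0) (𝓝 0) := by
    have hcont : Continuous fun s : ℝ => s • w := by fun_prop
    simpa using (hcont.tendsto 0).mono_left nhdsWithin_le_nhds
  obtain ⟨s, hs, hs₀⟩ := ((hlim.eventually h.mem_nhds).and self_mem_nhdsWithin).exists
  calc 0 < s * fderiv ℝ f z w := mul_pos hs₀ hw
    _ = fderiv ℝ f z (s • w) := by rw [map_smul, smul_eq_mul]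
    _ ≤ fderiv ℝ f z z := h.fderiv_apply_le hz hs

lemma fderiv_inv_gauge_smul_apply_pos (h : SmoothBody Ω f) (hx : x ≠ 0) :
    0 < fderiv ℝ f ((gauge Ω x)⁻¹ • x) x := by
  have hself := h.fderiv_apply_self_pos (h.inv_gauge_smul_mem_frontier hx)
  rw [map_smul, smul_eq_mul] at hself
  exact (pos_iff_pos_of_mul_pos hself).1 (inv_pos.2 (h.gauge_pos hx))

lemma isInvertible_fderiv_smul_comp_inr (h : SmoothBody Ω f) (hx : x ≠ 0) :
    (fderiv ℝ (fun p : E × ℝ => f (p.2 • p.1)) (x, (gauge Ω x)⁻¹) ∘L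
      .inr ℝ E ℝ).IsInvertible := by
  set a : E × ℝ := (x, (gauge Ω x)⁻¹)
  have hderiv : HasFDerivAt (fun p : E × ℝ => f (p.2 • p.1)) ((fderiv ℝ f ((gauge Ω x)⁻¹ • x)).comp
      ((gauge Ω x)⁻¹ • ContinuousLinearMap.fst ℝ E ℝ +
        (ContinuousLinearMap.snd ℝ E ℝ).smulRight x)) a :=
    HasFDerivAt.comp a h.differentiableAt.hasFDerivAt
      (HasFDerivAt.fun_smul (hasFDerivAt_snd (𝕜 := ℝ) (p := a)) hasFDerivAt_fst)
  have hne : (fderiv ℝ (fun p : E × ℝ => f (p.2 • p.1)) a ∘L .inr ℝ E ℝ) 1 ≠ 0 := by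
    rw [hderiv.fderiv]
    simpa using (h.fderiv_inv_gauge_smul_apply_pos hx).ne'
  refine ⟨ContinuousLinearEquiv.unitsEquivAut ℝ (Units.mk0 _ hne), ?_⟩
  ext
  simp

-- The implicit function theorem for `f (u • x) = 0`, whose solution is `u = 1 / ρ(x)`.
lemma contDiffAt_inv_gauge [CompleteSpace E] (h : SmoothBody Ω f) (hx : x ≠ 0) :
    ContDiffAt ℝ 4 (fun y => (gauge Ω y)⁻¹) x := by
  have hF : ContDiffAt ℝ 4 (fun p : E × ℝ => f (p.2 • p.1)) (x, (gauge Ω x)⁻¹) :=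
    (h.contDiff.comp (contDiff_snd.smul contDiff_fst)).contDiffAt
  have hinv := h.isInvertible_fderiv_smul_comp_inr hx
  have hzero : ∀ y : E, y ≠ 0 → f ((gauge Ω y)⁻¹ • y) = 0 := fun y hy =>
    h.apply_eq_zero (h.inv_gauge_smul_mem_frontier hy)
  have hcont : ContinuousAt (fun y : E => (y, (gauge Ω y)⁻¹)) x :=
    continuousAt_id.prodMk
      ((continuous_gauge h.convex h.mem_nhds).continuousAt.inv₀ (h.gauge_pos hx).ne')
  refine (hF.contDiffAt_implicitFunction (by simp) hinv).congr_of_eventuallyEq ?_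
  filter_upwards [hcont.eventually (hF.eventually_apply_eq_iff_implicitFunction (by simp) hinv),
    isOpen_ne.mem_nhds hx] with y hy hy₀
  exact (hy.1 ((hzero y hy₀).trans (hzero x hx).symm)).symm

lemma contDiffAt_gauge_sq [CompleteSpace E] (h : SmoothBody Ω f) (hx : x ≠ 0) :
    ContDiffAt ℝ 4 (fun y => gauge Ω y ^ 2) x := by
  simpa using ((h.contDiffAt_inv_gauge hx).inv (inv_ne_zero (h.gauge_pos hx).ne')).pow 2

-- Project the line through `z` in the direction `p` radially to the boundary.
lemma exists_curve_in_frontier [CompleteSpace E] (h : SmoothBody Ω f) (hz : z ∈ frontier Ω) {p : E}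
    (hp : fderiv ℝ f z p = 0) :
    ∃ w : ℝ → E, ContDiffAt ℝ 2 w 0 ∧ w 0 = z ∧ deriv w 0 = p ∧ ∀ᶠ s in 𝓝 0, w s ∈ frontier Ω := by
  set l : ℝ → E := fun s => z + s • p
  set u : ℝ → ℝ := fun s => (gauge Ω (l s))⁻¹
  have hz₀ := h.ne_zero_of_mem_frontier hz
  have hl₀ : l 0 = z := by simp [l]
  have hu₀ : u 0 = 1 := by simp [u, hl₀, h.gauge_eq_one_iff.2 hz]
  have hl : ContDiff ℝ 2 l := by fun_prop
  have hl' : HasDerivAt l p 0 := by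
    simpa only [one_smul, id] using ((hasDerivAt_id (0 : ℝ)).smul_const p).const_add z
  have hu : ContDiffAt ℝ 2 u 0 :=
    ((h.contDiffAt_inv_gauge (hl₀.symm ▸ hz₀)).of_le (by norm_num)).comp 0 hl.contDiffAt
  have hw : HasDerivAt (fun s => u s • l s) (p + deriv u 0 • z) 0 := by
    simpa [hl₀, hu₀] using (hu.differentiableAt two_ne_zero).hasDerivAt.fun_smul hl'
  have hmem : ∀ᶠ s in 𝓝 (0 : ℝ), u s • l s ∈ frontier Ω := by
    filter_upwards [hl.continuous.continuousAt.eventually_ne (hl₀.symm ▸ hz₀)] with s hs using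
      h.inv_gauge_smul_mem_frontier hs
  have htangent : fderiv ℝ f z (p + deriv u 0 • z) = 0 := by
    have hlevel := fderiv_apply_deriv_eq_zero (F := f) h.differentiableAt hw.differentiableAt
      (hmem.mono fun s hs => h.apply_eq_zero hs)
    rwa [hw.deriv, hl₀, hu₀, one_smul] at hlevel
  rw [map_add, hp, zero_add, map_smul, smul_eq_mul] at htangent
  have hu' : deriv u 0 = 0 :=
    (mul_eq_zero.1 htangent).resolve_right (h.fderiv_apply_self_pos hz).ne'
  refine ⟨fun s => u s • l s, hu.smul hl.contDiffAt, by simp [hl₀, hu₀], ?_, hmem⟩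
  rw [hw.deriv, hu', zero_smul, add_zero]

lemma gauge_smul_sq {t : ℝ} (ht : 0 < t) (y : E) :
    gauge Ω (t • y) ^ 2 = t ^ 2 * gauge Ω y ^ 2 := by
  rw [gauge_smul_of_nonneg ht.le, smul_eq_mul, mul_pow]

lemma fderiv_gauge_sq_apply_self [CompleteSpace E] (h : SmoothBody Ω f) (hz : z ∈ frontier Ω) :
    fderiv ℝ (fun y => gauge Ω y ^ 2) z z = 2 := by
  rw [fderiv_apply_self_of_homogeneous (fun t => gauge_smul_sq)
    ((h.contDiffAt_gauge_sq (h.ne_zero_of_mem_frontier hz)).differentiableAt (by norm_num)),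
    h.gauge_eq_one_iff.2 hz]
  norm_num

lemma fderiv_gauge_sq [CompleteSpace E] (h : SmoothBody Ω f) (hz : z ∈ frontier Ω) :
    fderiv ℝ (fun y => gauge Ω y ^ 2) z = (2 / fderiv ℝ f z z) • fderiv ℝ f z := by
  have hself := (h.fderiv_apply_self_pos hz).ne'
  have hsmooth := h.contDiffAt_gauge_sq (h.ne_zero_of_mem_frontier hz)
  ext v
  set s := fderiv ℝ f z v / fderiv ℝ f z z
  obtain ⟨w, hw, hw₀, hw', hmem⟩ := h.exists_curve_in_frontier hz (p := v - s • z) (by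
    rw [map_sub, map_smul, smul_eq_mul, div_mul_cancel₀ _ hself, sub_self])
  have htangent : fderiv ℝ (fun y => gauge Ω y ^ 2) z (v - s • z) = 0 := by
    rw [← hw', ← hw₀]
    refine fderiv_apply_deriv_eq_zero (c := 1) ?_ (hw.differentiableAt two_ne_zero)
      (hmem.mono fun t ht => ?_)
    · rw [hw₀]
      exact hsmooth.differentiableAt (by norm_num)
    · rw [h.gauge_eq_one_iff.2 ht, one_pow]
  rw [map_sub, sub_eq_zero, map_smul, h.fderiv_gauge_sq_apply_self hz] at htangent
  rw [htangent, smul_apply, smul_eq_mul, smul_eq_mul]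
  ring

lemma fderiv_fderiv_apply_self_pos (h : SmoothBody Ω f) (hz : z ∈ frontier Ω) {p : E}
    (hp : p ≠ 0) (hp' : fderiv ℝ f z p = 0) : 0 < fderiv ℝ (fderiv ℝ f) z p p := by
  have hderiv : DifferentiableAt ℝ (fderiv ℝ f) z :=
    (h.contDiff.fderiv_right (m := 1) (by norm_num)).differentiable one_ne_zero z
  have hpos := h.fderiv_fderiv_pos z hz p hp hp'
  rw [fderiv_clm_apply hderiv (differentiableAt_const p)] at hpos
  simpa using hpos

-- Along a curve in `∂Ω`, both `ρ² - 1` and `f` vanish, and their gradients are proportional; hence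
-- so are their Hessians on tangent vectors.
lemma fderiv_fderiv_gauge_sq_apply_self [CompleteSpace E] (h : SmoothBody Ω f)
    (hz : z ∈ frontier Ω) {p : E} (hp : fderiv ℝ f z p = 0) :
    fderiv ℝ (fderiv ℝ fun y => gauge Ω y ^ 2) z p p =
      2 / fderiv ℝ f z z * fderiv ℝ (fderiv ℝ f) z p p := by
  obtain ⟨w, hw, hw₀, hw', hmem⟩ := h.exists_curve_in_frontier hz hp
  have hq := (h.contDiffAt_gauge_sq (h.ne_zero_of_mem_frontier hz)).of_le
    (show (2 : WithTop ℕ∞) ≤ 4 by norm_num)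
  have hsecond_gauge := fderiv_fderiv_apply_deriv_add_eq_zero (c := 1) (hw₀.symm ▸ hq) hw
    (hmem.mono fun t ht => by rw [h.gauge_eq_one_iff.2 ht, one_pow])
  have hsecond := fderiv_fderiv_apply_deriv_add_eq_zero
    (h.contDiff.of_le (by norm_num)).contDiffAt hw (hmem.mono fun t ht => h.apply_eq_zero ht)
  rw [hw₀, hw', h.fderiv_gauge_sq hz, smul_apply, smul_eq_mul] at hsecond_gauge
  rw [hw₀, hw'] at hsecond
  linear_combination hsecond_gauge - 2 / fderiv ℝ f z z * hsecond

theorem fderiv_fderiv_gauge_sq_pos [CompleteSpace E] (h : SmoothBody Ω f) (hx : x ≠ 0) {v : E}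
    (hv : v ≠ 0) : 0 < fderiv ℝ (fderiv ℝ fun y => gauge Ω y ^ 2) x v v := by
  have hz := h.inv_gauge_smul_mem_frontier hx
  rw [← fderiv_fderiv_smul_of_homogeneous (fun t => gauge_smul_sq) (inv_pos.2 (h.gauge_pos hx))]
  set z := (gauge Ω x)⁻¹ • x
  have hq := h.contDiffAt_gauge_sq (h.ne_zero_of_mem_frontier hz)
  have hsymm : IsSymmSndFDerivAt ℝ (fun y => gauge Ω y ^ 2) z :=
    hq.isSymmSndFDerivAt (by rw [minSmoothness_of_isRCLikeNormedField]; norm_num)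
  have hself : fderiv ℝ (fderiv ℝ fun y => gauge Ω y ^ 2) z z =
      fderiv ℝ (fun y => gauge Ω y ^ 2) z :=
    fderiv_fderiv_apply_self_of_homogeneous (fun t => gauge_smul_sq)
      ((hq.fderiv_right (m := 1) (by norm_num)).differentiableAt one_ne_zero)
  have hscale : 0 < 2 / fderiv ℝ f z z := div_pos two_pos (h.fderiv_apply_self_pos hz)
  refine apply_self_pos_of_pos_on_ker (z := z) hsymm.eq ?_ (fun p hp hp₀ => ?_) hv
  · rw [hself, h.fderiv_gauge_sq_apply_self hz]
    exact two_pos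
  · rw [hself, h.fderiv_gauge_sq hz, smul_apply, smul_eq_mul] at hp
    have htangent := (mul_eq_zero.1 hp).resolve_left hscale.ne'
    rw [h.fderiv_fderiv_gauge_sq_apply_self hz htangent]
    exact mul_pos hscale (h.fderiv_fderiv_apply_self_pos hz hp₀ htangent)

end SmoothBody

/-! ### Lattice points of a three-dimensional coordinate subspace -/

/-- The inclusion of `ℝ³` into `ℝ^d` as the span of the first three coordinate vectors. -/
def coordinateEmbedding (d : ℕ) : (Fin 3 → ℝ) →L[ℝ] EuclideanSpace ℝ (Fin d) :=
  LinearMap.toContinuousLinearMap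
    { toFun := fun x => WithLp.toLp 2 fun i => if h : i.1 < 3 then x ⟨i.1, h⟩ else 0
      map_add' := fun x y => by
        ext i
        by_cases h : i.1 < 3 <;> simp [h]
      map_smul' := fun t x => by
        ext i
        by_cases h : i.1 < 3 <;> simp [h] }

/-- The set `𝔼_R` of integer vectors of Euclidean norm between `R / 2` and `R`. -/
def latticeShell (d : ℕ) (R : ℝ) : Set (EuclideanSpace ℝ (Fin d)) :=
  {x | (∃ k : Fin d → ℤ, ∀ i, x i = (k i : ℝ)) ∧ R / 2 ≤ ‖x‖ ∧ ‖x‖ ≤ R}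

lemma finite_latticeShell (d : ℕ) (R : ℝ) : (latticeShell d R).Finite := by
  refine ((Fintype.piFinset fun _ : Fin d => Finset.Icc (-⌈R⌉) ⌈R⌉).finite_toSet.image
    fun k => WithLp.toLp 2 fun i => (k i : ℝ)).subset ?_
  rintro x ⟨⟨k, hk⟩, -, hx⟩
  refine ⟨k, Finset.mem_coe.2 (Fintype.mem_piFinset.2 fun i => ?_), by ext i; exact (hk i).symm⟩
  have hcoord : |(k i : ℝ)| ≤ ⌈R⌉ := by
    rw [← hk i]
    exact (PiLp.norm_apply_le x i).trans (hx.trans (Int.le_ceil R))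
  rw [abs_le] at hcoord
  rw [Finset.mem_Icc]
  exact_mod_cast hcoord

section CoordinateEmbedding

variable {d : ℕ}

lemma coordinateEmbedding_apply (x : Fin 3 → ℝ) (i : Fin d) :
    coordinateEmbedding d x i = if h : i.1 < 3 then x ⟨i.1, h⟩ else 0 := rfl

lemma norm_coordinateEmbedding_sq (hd : 3 ≤ d) (x : Fin 3 → ℝ) :
    ‖coordinateEmbedding d x‖ ^ 2 = x 0 ^ 2 + x 1 ^ 2 + x 2 ^ 2 := by
  obtain ⟨m, rfl⟩ := Nat.exists_eq_add_of_le hd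
  rw [EuclideanSpace.norm_sq_eq, Fin.sum_univ_add, Fin.sum_univ_three]
  simp [coordinateEmbedding_apply]

lemma norm_le_norm_coordinateEmbedding (hd : 3 ≤ d) (x : Fin 3 → ℝ) :
    ‖x‖ ≤ ‖coordinateEmbedding d x‖ := by
  refine (pi_norm_le_iff_of_nonneg (norm_nonneg _)).2 fun i => abs_le_of_sq_le_sq ?_ (norm_nonneg _)
  rw [norm_coordinateEmbedding_sq hd, ← Fin.sum_univ_three fun j => x j ^ 2]
  exact Finset.single_le_sum (fun j _ => sq_nonneg (x j)) (Finset.mem_univ i)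

lemma coordinateEmbedding_ne_zero (hd : 3 ≤ d) {x : Fin 3 → ℝ} (hx : x ≠ 0) :
    coordinateEmbedding d x ≠ 0 :=
  norm_pos_iff.1 ((norm_pos_iff.2 hx).trans_le (norm_le_norm_coordinateEmbedding hd x))

lemma coordinateEmbedding_mem_latticeShell (hd : 3 ≤ d) {R : ℝ} (hR : 0 < R) {k : Fin 3 → ℤ}
    (hk : k ∈ latticeBox R) : coordinateEmbedding d (realVec k) ∈ latticeShell d R := by
  refine ⟨⟨fun i => if h : i.1 < 3 then k ⟨i.1, h⟩ else 0, fun i => ?_⟩, ?_⟩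
  · rw [coordinateEmbedding_apply]
    by_cases h : i.1 < 3 <;> simp [h, realVec]
  obtain ⟨⟨h₀, h₀'⟩, ⟨h₁, h₁'⟩, h₂, h₂'⟩ := mem_innerBox.1 ((mem_latticeBox hR).1 hk)
  set y := R⁻¹ • realVec k with hy
  have hnorm : ‖coordinateEmbedding d (realVec k)‖ = R * ‖coordinateEmbedding d y‖ := by
    rw [hy, map_smul, norm_smul, Real.norm_of_nonneg (inv_nonneg.2 hR.le),
      mul_inv_cancel_left₀ hR.ne']
  have hsq := norm_coordinateEmbedding_sq hd y
  have hnonneg := norm_nonneg (coordinateEmbedding d y)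
  have hlower : 1 / 2 ≤ ‖coordinateEmbedding d y‖ := by nlinarith
  have hupper : ‖coordinateEmbedding d y‖ ≤ 1 := by nlinarith
  rw [hnorm]
  constructor <;> nlinarith

end CoordinateEmbedding

namespace SmoothBody

variable {d : ℕ} {Ω : Set (EuclideanSpace ℝ (Fin d))} {f : EuclideanSpace ℝ (Fin d) → ℝ}

lemma fderiv_fderiv_gauge_sq_comp_pos (h : SmoothBody Ω f) (hd : 3 ≤ d) {x v : Fin 3 → ℝ}
    (hx : x ≠ 0) (hv : v ≠ 0) :
    0 < fderiv ℝ (fderiv ℝ fun y => gauge Ω (coordinateEmbedding d y) ^ 2) x v v := by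
  set L := coordinateEmbedding d
  have hsmooth : ∀ y, y ≠ 0 → ContDiffAt ℝ 4 (fun z => gauge Ω z ^ 2) (L y) := fun y hy =>
    h.contDiffAt_gauge_sq (coordinateEmbedding_ne_zero hd hy)
  have hfirst : fderiv ℝ (fun y => gauge Ω (L y) ^ 2) =ᶠ[𝓝 x]
      fun y => (fderiv ℝ (fun z => gauge Ω z ^ 2) (L y)).comp L := by
    filter_upwards [isOpen_ne.mem_nhds hx] with y hy
    exact (((hsmooth y hy).differentiableAt (by norm_num)).hasFDerivAt.comp y L.hasFDerivAt).fderiv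
  have hsecond : HasFDerivAt (fun y => (fderiv ℝ (fun z => gauge Ω z ^ 2) (L y)).comp L)
      _ x :=
    (((((hsmooth x hx).fderiv_right (m := 1) (by norm_num)).differentiableAt
      one_ne_zero).hasFDerivAt.comp x L.hasFDerivAt).clm_comp (hasFDerivAt_const L x))
  rw [hfirst.fderiv_eq, hsecond.fderiv]
  simpa using h.fderiv_fderiv_gauge_sq_pos (coordinateEmbedding_ne_zero hd hx)
    (coordinateEmbedding_ne_zero hd hv)

lemma exists_midpointEstimates (h : SmoothBody Ω f) (hd : 3 ≤ d) :
    ∃ g A lam M, MidpointEstimates (fun x => gauge Ω (coordinateEmbedding d x) ^ 2) g A lam M := by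
  have hne : ∀ x ∈ halfSpace, x ≠ 0 := by
    rintro x hx rfl
    exact lt_irrefl (0 : ℝ) hx
  have hsmooth : ContDiffOn ℝ 4 (fun x => gauge Ω (coordinateEmbedding d x) ^ 2) halfSpace :=
    fun x hx => ((h.contDiffAt_gauge_sq (coordinateEmbedding_ne_zero hd (hne x hx))).comp x
      (coordinateEmbedding d).contDiff.contDiffAt).contDiffWithinAt
  exact ⟨_, _, LatticeGauge.exists_midpointEstimates hsmooth
    (fun t ht x => by rw [map_smul, gauge_smul_sq ht])
    fun x hx v hv => h.fderiv_fderiv_gauge_sq_comp_pos hd (hne x hx) hv⟩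

end SmoothBody

end LatticeGauge

open LatticeGauge in
theorem statement16_general {d : ℕ} (hd : 3 ≤ d) {Ω : Set (EuclideanSpace ℝ (Fin d))}
    {f : EuclideanSpace ℝ (Fin d) → ℝ} (h : SmoothBody Ω f) :
    ∃ c C₀ : ℝ, 0 < c ∧ ∀ R : ℝ, C₀ ≤ R →
      c * R ^ 2 ≤ (Nat.card (gauge Ω '' latticeShell d R) : ℝ) := by
  obtain ⟨g, A, lam, M, D⟩ := h.exists_midpointEstimates hd
  obtain ⟨K, hK⟩ := h.convex.lipschitz_gauge h.mem_nhds
  obtain ⟨r, hr, hΩr⟩ := h.isBounded.subset_closedBall_lt 0 0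
  have hlower : ∀ x, r⁻¹ * ‖x‖ ≤ gauge Ω (coordinateEmbedding d x) := fun x =>
    calc r⁻¹ * ‖x‖ ≤ r⁻¹ * ‖coordinateEmbedding d x‖ := by
          gcongr
          exact norm_le_norm_coordinateEmbedding hd x
      _ ≤ gauge Ω (coordinateEmbedding d x) := by
          rw [← div_eq_inv_mul]
          exact le_gauge_of_subset_closedBall (absorbent_nhds_zero h.mem_nhds) hr.le hΩr
  obtain ⟨c, R₀, hc, hcard⟩ := exists_le_card_image_latticeBox
    (N := fun x => gauge Ω (coordinateEmbedding d x))
    (fun t ht x => by rw [map_smul, gauge_smul_of_nonneg ht, smul_eq_mul])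
    (hK.comp (coordinateEmbedding d).lipschitz) (inv_pos.2 hr) hlower D
  refine ⟨c, max R₀ 1, hc, fun R hR => (hcard R (le_of_max_le_left hR)).trans ?_⟩
  have hR₀ : 0 < R := one_pos.trans_le (le_of_max_le_right hR)
  rw [Nat.card_coe_set_eq, Nat.cast_le, ← Set.ncard_coe_finset]
  refine Set.ncard_le_ncard ?_ ((finite_latticeShell d R).image _)
  rw [Finset.coe_image]
  rintro _ ⟨k, hk, rfl⟩
  exact mem_image_of_mem _ (coordinateEmbedding_mem_latticeShell hd hR₀ hk)

/-- Proposition A.1: let `d ≥ 3` and let `Ω ⊂ ℝ^d` be a bounded open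
convex set containing the origin whose boundary is `C^∞` with nowhere vanishing Gaussian
curvature (formalized via a smooth defining function `f` with nonvanishing gradient on
`∂Ω` and positive definite second fundamental form, i.e. positive Hessian on tangent
directions).  With `ρ` the Minkowski functional of `Ω` and
`𝔼_R = {k ∈ ℤ^d : R/2 ≤ |k| ≤ R}`, there are `c > 0` and `C₀` such that for all `R ≥ C₀`
the image `ρ(𝔼_R)` has at least `c R²` elements if `d ≥ 4`, and at least `c R²/log R`
elements if `d = 3`. -/
theorem statement16 (d : ℕ) (hd : 3 ≤ d) (Ω : Set (EuclideanSpace ℝ (Fin d)))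
    (hconv : Convex ℝ Ω) (hopen : IsOpen Ω) (hbdd : Bornology.IsBounded Ω)
    (h0 : (0 : EuclideanSpace ℝ (Fin d)) ∈ Ω)
    (f : EuclideanSpace ℝ (Fin d) → ℝ) (hf : ContDiff ℝ (⊤ : ℕ∞) f)
    (hlevel : Ω = {x | f x < 0})
    (hgrad : ∀ x ∈ frontier Ω, fderiv ℝ f x ≠ 0)
    (hcurv : ∀ x ∈ frontier Ω, ∀ v : EuclideanSpace ℝ (Fin d), v ≠ 0 →
      fderiv ℝ f x v = 0 → 0 < fderiv ℝ (fun y => fderiv ℝ f y v) x v) :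
    ∃ c C₀ : ℝ, 0 < c ∧ ∀ R : ℝ, C₀ ≤ R →
      ∀ S : Set ℝ, S = gauge Ω '' {x : EuclideanSpace ℝ (Fin d) |
          (∃ k : Fin d → ℤ, ∀ i, x i = (k i : ℝ)) ∧ R / 2 ≤ ‖x‖ ∧ ‖x‖ ≤ R} →
        (4 ≤ d → c * R ^ 2 ≤ (Nat.card S : ℝ)) ∧
        (d = 3 → c * R ^ 2 / Real.log R ≤ (Nat.card S : ℝ)) := by
  obtain ⟨c, C₀, hc, hcard⟩ := statement16_general hd
    ⟨hconv, hopen, hbdd, h0, contDiff_infty.1 hf 4, hlevel, hgrad, hcurv⟩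
  refine ⟨c, max C₀ (Real.exp 1), hc, ?_⟩
  rintro R hR _ rfl
  have hexp : Real.exp 1 ≤ R := le_of_max_le_right hR
  have hlog : 1 ≤ Real.log R := (Real.le_log_iff_exp_le ((Real.exp_pos 1).trans_le hexp)).2 hexp
  have hR := hcard R (le_of_max_le_left hR)
  exact ⟨fun _ => hR, fun _ => (div_le_self (by positivity) hlog).trans hR⟩

end
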